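/- arXiv:1403.5673 — 3 statements merged into one kernel-verified Lean document; each statement's English description precedes it below -/
import Mathlib

section
/- Let F be a field of characteristic 0 and let R be a finitely generated F-algebra that satisfies the Capelli identity C_m for some m. Then the nil radical of R is nilpotent: the sum N of all nil two-sided ideals of R is itself a nil ideal and there exists an integer s with N^s = 0. (Razmyslov's theorem.) -/
set_option linter.unusedSectionVars false

namespace Raz

section Lists
variable {A : Type} {M : Type}

/-- Sum over the ways of removing one entry from a list. -/
def psum [AddCommGroup M] : (A → List A → M) → List A → M
  | _, [] => 0
  | f, a :: l => f a l + psum (fun s l' => f s (a :: l')) l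

/-- Sum over the ways of splitting a list in two complementary sublists. -/
def ssum [AddCommGroup M] : (List A → List A → M) → List A → M
  | f, [] => f [] []
  | f, a :: l => ssum (fun X Y => f (a :: X) Y) l + ssum (fun X Y => f X (a :: Y)) l

/-- Sum over the ways of multiplying one entry of a list by `a` on the right. -/
def bsum [AddCommGroup M] [Mul A] (a : A) : (List A → M) → List A → M
  | _, [] => 0
  | f, b :: l => f ((b * a) :: l) + bsum a (fun l' => f (b :: l')) l

variable [AddCommGroup M]

theorem psum_congr {f g : A → List A → M} {l : List A}
    (h : ∀ s l', List.Perm (s :: l') l → f s l' = g s l') : psum f l = psum g l := by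
  induction l generalizing f g with
  | nil => rfl
  | cons a l ih =>
    simp only [psum]
    rw [h a l (List.Perm.refl _)]
    congr 1
    exact ih fun s l' hp => h _ _ ((List.Perm.swap _ _ _).trans (hp.cons a))

theorem ssum_congr {f g : List A → List A → M} {l : List A}
    (h : ∀ X Y, List.Perm (X ++ Y) l → f X Y = g X Y) : ssum f l = ssum g l := by
  induction l generalizing f g with
  | nil => exact h _ _ (List.Perm.refl _)
  | cons a l ih =>
    simp only [ssum]
    congr 1
    · exact ih fun X Y hp => h _ _ (hp.cons a)
    · exact ih fun X Y hp => h _ _ (List.perm_middle.trans (hp.cons a))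

theorem psum_add (f g : A → List A → M) (l : List A) :
    psum (fun s l' => f s l' + g s l') l = psum f l + psum g l := by
  induction l generalizing f g with
  | nil => simp [psum]
  | cons a l ih => simp only [psum, ih]; abel

theorem ssum_add (f g : List A → List A → M) (l : List A) :
    ssum (fun s l' => f s l' + g s l') l = ssum f l + ssum g l := by
  induction l generalizing f g with
  | nil => simp [ssum]
  | cons a l ih => simp only [ssum, ih]; abel

theorem psum_map {M' : Type} [AddCommGroup M'] (φ : M →+ M') (f : A → List A → M) (l : List A) :
    φ (psum f l) = psum (fun s l' => φ (f s l')) l := by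
  induction l generalizing f with
  | nil => simp [psum]
  | cons a l ih => simp [psum, ih]

theorem ssum_map {M' : Type} [AddCommGroup M'] (φ : M →+ M') (f : List A → List A → M)
    (l : List A) :
    φ (ssum f l) = ssum (fun s l' => φ (f s l')) l := by
  induction l generalizing f with
  | nil => simp [ssum]
  | cons a l ih => simp [ssum, ih]

theorem bsum_map {M' : Type} [AddCommGroup M'] [Mul A] (a : A) (φ : M →+ M') (f : List A → M)
    (l : List A) : φ (bsum a f l) = bsum a (fun l' => φ (f l')) l := by
  induction l generalizing f with
  | nil => simp [bsum]
  | cons b l ih => simp [bsum, ih]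

theorem psum_mem (G : AddSubgroup M) {f : A → List A → M} {l : List A}
    (h : ∀ s l', List.Perm (s :: l') l → f s l' ∈ G) : psum f l ∈ G := by
  induction l generalizing f with
  | nil => exact G.zero_mem
  | cons a l ih =>
    simp only [psum]
    refine G.add_mem (h a l (List.Perm.refl _)) ?_
    exact ih fun s l' hp => h _ _ ((List.Perm.swap _ _ _).trans (hp.cons a))

theorem ssum_mem (G : AddSubgroup M) {f : List A → List A → M} {l : List A}
    (h : ∀ X Y, List.Perm (X ++ Y) l → f X Y ∈ G) : ssum f l ∈ G := by
  induction l generalizing f with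
  | nil => exact h _ _ (List.Perm.refl _)
  | cons a l ih =>
    simp only [ssum]
    refine G.add_mem ?_ ?_
    · exact ih fun X Y hp => h _ _ (hp.cons a)
    · exact ih fun X Y hp => h _ _ (List.perm_middle.trans (hp.cons a))

theorem ssum_psum (H : A → List A → List A → M) (l : List A) :
    ssum (fun X Y => psum (fun s X' => H s X' Y) X) l
      = psum (fun s l' => ssum (fun X' Y => H s X' Y) l') l := by
  induction l generalizing H with
  | nil => rfl
  | cons a l ih =>
    simp only [ssum, psum, ssum_add, psum_add, ih]
    abel

theorem ssum_comm (f : List A → List A → List A → List A → M) (l l' : List A) :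
    ssum (fun X Y => ssum (fun X' Y' => f X Y X' Y') l') l
      = ssum (fun X' Y' => ssum (fun X Y => f X Y X' Y') l) l' := by
  induction l generalizing f with
  | nil => rfl
  | cons a l ih => simp only [ssum, ssum_add, ih]

theorem ssum_nil_left (g : List A → M) (l : List A) :
    ssum (fun X Y => match X with | [] => g Y | _ :: _ => 0) l = g l := by
  have h0 : ∀ l : List A, ssum (fun _ _ => (0 : M)) l = 0 := by
    intro l
    induction l with
    | nil => rfl
    | cons a l ih => simp [ssum, ih]
  induction l generalizing g with
  | nil => rfl
  | cons a l ih =>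
    simp only [ssum]
    rw [h0, zero_add]
    exact ih (fun Y => g (a :: Y))

theorem mem_of_ssum_mem (G : AddSubgroup M) {f : List A → List A → M} {l : List A}
    (hs : ssum f l ∈ G)
    (h : ∀ X Y, Y ≠ [] → List.Perm (X ++ Y) l → f X Y ∈ G) : f l [] ∈ G := by
  induction l generalizing f with
  | nil => exact hs
  | cons a l ih =>
    simp only [ssum] at hs
    refine ih (f := fun X Y => f (a :: X) Y) ?_ fun X Y hY hp => h _ _ hY (hp.cons a)
    refine (G.add_mem_cancel_right ?_).1 hs
    refine ssum_mem G fun X Y hp => h _ _ (by simp) (List.perm_middle.trans (hp.cons a))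

end Lists

section Sym
variable {A : Type} [Ring A]

/-- Symmetrized product, with fuel. -/
def symF : ℕ → List A → A
  | 0, _ => 1
  | k + 1, l => psum (fun s l' => s * symF k l') l

/-- The symmetrized product `Σ_σ l_σ(1) ⋯ l_σ(k)`. -/
def sy (l : List A) : A := symF l.length l

theorem sy_nil : sy ([] : List A) = 1 := rfl

theorem sy_cons (a : A) (l : List A) :
    sy (a :: l) = psum (fun s l' => s * sy l') (a :: l) := by
  rw [sy, List.length_cons, symF]
  refine psum_congr fun s l' hp => ?_
  have := hp.length_eq
  simp only [List.length_cons, Nat.add_right_cancel_iff] at this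
  rw [sy, this]

theorem sy_insert (y : A) : ∀ (k : ℕ) (l : List A), l.length = k →
    sy (y :: l) = ssum (fun X Y => sy X * y * sy Y) l := by
  intro k
  induction k with
  | zero =>
    intro l hl
    obtain rfl := List.length_eq_zero_iff.1 hl
    simp [sy_cons, psum, ssum, sy_nil]
  | succ k ih =>
    intro l hl
    rw [sy_cons, psum]
    have h1 : psum (fun s l' => s * sy (y :: l')) l
        = psum (fun s l' => ssum (fun X' Y => s * sy X' * y * sy Y) l') l := by
      refine psum_congr fun s l' hp => ?_
      have := hp.length_eq
      simp only [List.length_cons] at this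
      rw [ih l' (by omega)]
      have := ssum_map (AddMonoidHom.mulLeft s) (fun X Y => sy X * y * sy Y) l'
      simp only [AddMonoidHom.coe_mulLeft] at this
      rw [this]
      simp only [mul_assoc]
    rw [h1, ← ssum_psum (fun s X' Y => s * sy X' * y * sy Y)]
    conv_lhs => enter [1]; rw [← ssum_nil_left (fun Y => y * sy Y) l]
    rw [← ssum_add]
    refine ssum_congr fun X Y _ => ?_
    cases X with
    | nil => simp [psum, sy_nil]
    | cons a X =>
      simp only [zero_add]
      have := psum_map (AddMonoidHom.mulRight (y * sy Y)) (fun s X' => s * sy X') (a :: X)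
      rw [← sy_cons] at this
      simp only [AddMonoidHom.coe_mulRight] at this
      simp only [mul_assoc] at this ⊢
      exact this.symm

theorem sy_one_cons : ∀ (k : ℕ) (l : List A), l.length = k →
    sy ((1 : A) :: l) = (k + 1) • sy l := by
  intro k
  induction k with
  | zero =>
    intro l hl
    obtain rfl := List.length_eq_zero_iff.1 hl
    simp [sy_cons, psum, sy_nil]
  | succ k ih =>
    intro l hl
    rw [sy_cons, psum]
    have h1 : psum (fun s l' => s * sy ((1 : A) :: l')) l
        = psum (fun s l' => (k + 1) • (s * sy l')) l := by
      refine psum_congr fun s l' hp => ?_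
      have := hp.length_eq
      simp only [List.length_cons] at this
      rw [ih l' (by omega), mul_smul_comm]
    rw [h1]
    have h2 := psum_map (nsmulAddMonoidHom (α := A) (k + 1)) (fun s l' => s * sy l') l
    simp only [nsmulAddMonoidHom_apply] at h2
    rw [← h2]
    cases l with
    | nil => simp at hl
    | cons a l => rw [← sy_cons, one_mul, succ_nsmul (sy (a :: l)) (k + 1), add_comm]

end Sym

section NH
variable {F A : Type} [Field F] [CharZero F] [Ring A] [Algebra F A]

theorem sy_mem_span {S : Set A} (hS : ∀ a ∈ S, ∀ b ∈ S, a * b ∈ S) :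
    ∀ (k : ℕ) (l : List A), l.length = k → l ≠ [] → (∀ x ∈ l, x ∈ S) →
      sy l ∈ Submodule.span F S := by
  have hmul : ∀ a ∈ S, ∀ b ∈ Submodule.span F S, a * b ∈ Submodule.span F S := by
    intro a ha b hb
    induction hb using Submodule.span_induction with
    | mem x hx => exact Submodule.subset_span (hS a ha x hx)
    | zero => simp
    | add x y _ _ hx hy => rw [mul_add]; exact add_mem hx hy
    | smul c x _ hx => rw [mul_smul_comm]; exact Submodule.smul_mem _ _ hx
  intro k
  induction k with
  | zero => intro l hl hne; exact absurd (List.length_eq_zero_iff.1 hl) hne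
  | succ k ih =>
    intro l hl hne hmem
    cases l with
    | nil => exact absurd rfl hne
    | cons a l =>
      rw [sy_cons]
      refine psum_mem (Submodule.span F S).toAddSubgroup fun s l' hp => ?_
      have hlen := hp.length_eq
      have hs : s ∈ S := hmem s (hp.subset (by simp))
      have hl' : ∀ x ∈ l', x ∈ S := fun x hx => hmem x (hp.subset (by simp [hx]))
      simp only [List.length_cons] at hlen hl
      by_cases h0 : l' = []
      · subst h0; rw [sy_nil, mul_one]; exact Submodule.subset_span hs
      · exact hmul s hs _ (ih l' (by omega) h0 hl')

theorem higman {S : Set A} (hS : ∀ a ∈ S, ∀ b ∈ S, a * b ∈ S) (G : Submodule F A)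
    (hL : ∀ s ∈ S, ∀ g ∈ G, s * g ∈ G) (hR : ∀ s ∈ S, ∀ g ∈ G, g * s ∈ G) (k : ℕ)
    (hG : ∀ l : List A, l.length = k + 1 → (∀ x ∈ l, x ∈ S) → sy l ∈ G)
    (a b : List A) (ha : a.length = k) (hb : b.length = k) (haS : ∀ x ∈ a, x ∈ S)
    (hbS : ∀ x ∈ b, x ∈ S) (c : A) (hc : c ∈ S) : sy a * c * sy b ∈ G := by
  have hhead : ∀ l : List A, l.length = k → (∀ x ∈ l, x ∈ S) → ∀ y ∈ Submodule.span F S,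
      sy (y :: l) ∈ G := by
    intro l hl hlS y hy
    have key : ∀ y, sy (y :: l) = ssum (fun X Y => sy X * y * sy Y) l := fun y =>
      sy_insert y k l hl
    induction hy using Submodule.span_induction with
    | mem x hx => exact hG _ (by simp [hl]) (by simpa [hx] using hlS)
    | zero =>
      rw [key]
      refine ssum_mem G.toAddSubgroup fun X Y _ => ?_
      simp
    | add x y _ _ hx hy =>
      have : sy ((x + y) :: l) = sy (x :: l) + sy (y :: l) := by
        rw [key, key, key, ← ssum_add]
        exact ssum_congr fun X Y _ => by rw [mul_add, add_mul]
      rw [this]; exact add_mem hx hy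
    | smul r x _ hx =>
      have : sy ((r • x) :: l) = r • sy (x :: l) := by
        rw [key, key]
        have := ssum_map (DistribSMul.toAddMonoidHom A r) (fun X Y => sy X * x * sy Y) l
        simp only [DistribSMul.toAddMonoidHom_apply] at this
        rw [this]
        exact ssum_congr fun X Y _ => by rw [mul_smul_comm, smul_mul_assoc]
      rw [this]; exact Submodule.smul_mem _ _ hx
  have hLs : ∀ s ∈ Submodule.span F S, ∀ g ∈ G, s * g ∈ G := by
    intro s hs g hg
    induction hs using Submodule.span_induction with
    | mem x hx => exact hL x hx g hg
    | zero => simp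
    | add x y _ _ hx hy => rw [add_mul]; exact add_mem hx hy
    | smul r x _ hx => rw [smul_mul_assoc]; exact Submodule.smul_mem _ _ hx
  have hRs : ∀ s ∈ Submodule.span F S, ∀ g ∈ G, g * s ∈ G := by
    intro s hs g hg
    induction hs using Submodule.span_induction with
    | mem x hx => exact hR x hx g hg
    | zero => simp
    | add x y _ _ hx hy => rw [mul_add]; exact add_mem hx hy
    | smul r x _ hx => rw [mul_smul_comm]; exact Submodule.smul_mem _ _ hx
  have hLl : ∀ l : List A, (∀ x ∈ l, x ∈ S) → ∀ g ∈ G, sy l * g ∈ G := by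
    intro l hl g hg
    by_cases h0 : l = []
    · subst h0; simpa [sy_nil] using hg
    · exact hLs _ (sy_mem_span hS _ l rfl h0 hl) g hg
  have hRl : ∀ l : List A, (∀ x ∈ l, x ∈ S) → ∀ g ∈ G, g * sy l ∈ G := by
    intro l hl g hg
    by_cases h0 : l = []
    · subst h0; simpa [sy_nil] using hg
    · exact hRs _ (sy_mem_span hS _ l rfl h0 hl) g hg
  have hcl : ∀ l : List A, (∀ x ∈ l, x ∈ S) → c * sy l ∈ Submodule.span F S := by
    intro l hl
    by_cases h0 : l = []
    · subst h0; simpa [sy_nil] using Submodule.subset_span hc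
    · have := sy_mem_span (F := F) hS _ l rfl h0 hl
      generalize sy l = z at this
      induction this using Submodule.span_induction with
      | mem x hx => exact Submodule.subset_span (hS c hc x hx)
      | zero => simp
      | add x y _ _ hx hy => rw [mul_add]; exact add_mem hx hy
      | smul r x _ hx => rw [mul_smul_comm]; exact Submodule.smul_mem _ _ hx
  have hsum : ssum (fun X Y => sy ((c * sy X) :: a) * sy Y) b ∈ G := by
    refine ssum_mem G.toAddSubgroup fun X Y hp => ?_
    refine hRl Y (fun x hx => hbS x (hp.subset (by simp [hx]))) _ ?_
    exact hhead a ha haS _ (hcl X fun x hx => hbS x (hp.subset (by simp [hx])))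
  have heq : ssum (fun X Y => sy ((c * sy X) :: a) * sy Y) b
      = ssum (fun X' Y' => sy X' * c * sy (sy Y' :: b)) a := by
    have e1 : ssum (fun X Y => sy ((c * sy X) :: a) * sy Y) b
        = ssum (fun X Y => ssum (fun X' Y' => sy X' * c * (sy X * sy Y' * sy Y)) a) b := by
      refine ssum_congr fun X Y _ => ?_
      rw [sy_insert _ k a ha]
      have := ssum_map (AddMonoidHom.mulRight (sy Y))
        (fun X' Y' => sy X' * (c * sy X) * sy Y') a
      simp only [AddMonoidHom.coe_mulRight] at this
      rw [this]
      simp only [mul_assoc]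
    rw [e1, ssum_comm]
    refine ssum_congr fun X' Y' _ => ?_
    rw [sy_insert _ k b hb]
    have := ssum_map (AddMonoidHom.mulLeft (sy X' * c)) (fun X Y => sy X * sy Y' * sy Y) b
    simp only [AddMonoidHom.coe_mulLeft] at this
    exact this.symm
  rw [heq] at hsum
  have h1 := mem_of_ssum_mem G.toAddSubgroup hsum fun X Y hY hp => by
    have hX : ∀ x ∈ X, x ∈ S := fun x hx => haS x (hp.subset (by simp [hx]))
    have hY' : ∀ x ∈ Y, x ∈ S := fun x hx => haS x (hp.subset (by simp [hx]))
    rw [mul_assoc]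
    exact hLl X hX _ (hL c hc _ (hhead b hb hbS _ (sy_mem_span hS _ Y rfl hY hY')))
  rw [sy_nil, sy_one_cons k b hb, mul_smul_comm] at h1
  have h2 : ((k + 1 : ℕ) : F) • (sy a * c * sy b) ∈ G := by
    rw [Nat.cast_smul_eq_nsmul]; exact h1
  exact (Submodule.smul_mem_iff G (by exact_mod_cast Nat.succ_ne_zero k)).1 h2

/-- Multilinear Nagata–Higman. -/
theorem nagata_higman {S : Set A} (hS : ∀ a ∈ S, ∀ b ∈ S, a * b ∈ S) (k : ℕ) :
    ∃ D : ℕ, ∀ G : Submodule F A,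
      (∀ s ∈ S, ∀ g ∈ G, s * g ∈ G) → (∀ s ∈ S, ∀ g ∈ G, g * s ∈ G) →
      (∀ l : List A, l.length = k → (∀ x ∈ l, x ∈ S) → sy l ∈ G) →
      ∀ l : List A, l.length = D → (∀ x ∈ l, x ∈ S) → l.prod ∈ G := by
  induction k with
  | zero =>
    refine ⟨0, fun G _ _ h l hl hlS => ?_⟩
    obtain rfl := List.length_eq_zero_iff.1 hl
    simpa [sy_nil] using h [] rfl (by simp)
  | succ k ih =>
    obtain ⟨D, hD⟩ := ih
    refine ⟨D + (1 + D), fun G hL hR hG => ?_⟩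
    have step1 : ∀ P : List A, P.length = D → (∀ x ∈ P, x ∈ S) → ∀ c ∈ S, ∀ b : List A,
        b.length = k → (∀ x ∈ b, x ∈ S) → P.prod * c * sy b ∈ G := by
      let G1 : Submodule F A :=
        { carrier := {x | ∀ c ∈ S, ∀ b : List A, b.length = k → (∀ x ∈ b, x ∈ S) →
            x * c * sy b ∈ G}
          add_mem' := fun {x y} hx hy c hc b hb hbS => by
            rw [add_mul, add_mul]; exact add_mem (hx c hc b hb hbS) (hy c hc b hb hbS)
          zero_mem' := fun c hc b hb hbS => by simp
          smul_mem' := fun r x hx c hc b hb hbS => by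
            rw [smul_mul_assoc, smul_mul_assoc]
            exact Submodule.smul_mem _ _ (hx c hc b hb hbS) }
      refine hD G1 ?_ ?_ ?_
      · intro s hs g hg c hc b hb hbS
        rw [mul_assoc, mul_assoc, ← mul_assoc g]
        exact hL s hs _ (hg c hc b hb hbS)
      · intro s hs g hg c hc b hb hbS
        rw [mul_assoc g]
        exact hg _ (hS s hs c hc) b hb hbS
      · intro l hl hlS c hc b hb hbS
        exact higman hS G hL hR k hG l b hl hb hlS hbS c hc
    have step2 : ∀ Q : List A, Q.length = D → (∀ x ∈ Q, x ∈ S) →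
        ∀ P : List A, P.length = D → (∀ x ∈ P, x ∈ S) → ∀ c ∈ S, P.prod * c * Q.prod ∈ G := by
      let G2 : Submodule F A :=
        { carrier := {x | ∀ P : List A, P.length = D → (∀ x ∈ P, x ∈ S) → ∀ c ∈ S,
            P.prod * c * x ∈ G}
          add_mem' := fun {x y} hx hy P hP hPS c hc => by
            rw [mul_add]; exact add_mem (hx P hP hPS c hc) (hy P hP hPS c hc)
          zero_mem' := fun P hP hPS c hc => by simp
          smul_mem' := fun r x hx P hP hPS c hc => by
            rw [mul_smul_comm]
            exact Submodule.smul_mem _ _ (hx P hP hPS c hc) }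
      refine hD G2 ?_ ?_ ?_
      · intro s hs g hg P hP hPS c hc
        rw [← mul_assoc, mul_assoc P.prod]
        exact hg P hP hPS _ (hS c hc s hs)
      · intro s hs g hg P hP hPS c hc
        rw [← mul_assoc]
        exact hR s hs _ (hg P hP hPS c hc)
      · intro l hl hlS P hP hPS c hc
        exact step1 P hP hPS c hc l hl hlS
    intro l hl hlS
    have e : l = l.take D ++ l.drop D := (List.take_append_drop D l).symm
    have hd : (l.drop D).length = 1 + D := by simp [hl]
    obtain ⟨c, Q, hcQ⟩ : ∃ c Q, l.drop D = c :: Q := by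
      cases h : l.drop D with
      | nil => rw [h] at hd; simp at hd; omega
      | cons c Q => exact ⟨c, Q, rfl⟩
    rw [hcQ] at e hd
    have ht : (l.take D).length = D := by simp [hl]
    simp only [List.length_cons] at hd
    rw [e, List.prod_append, List.prod_cons, ← mul_assoc]
    refine step2 Q (by omega) ?_ _ ht ?_ c ?_
    · intro x hx; exact hlS x (by rw [e]; simp [hx])
    · intro x hx; exact hlS x (by rw [e]; simp [hx])
    · exact hlS c (by rw [e]; simp)

end NH

section Ops
variable {R E : Type} [Ring R] [Ring E]

/-- Polarized elementary symmetric functions in terms of traces, with fuel. -/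
def EF (T : R → E) : ℕ → List R → E
  | 0, _ => 1
  | _ + 1, [] => 1
  | k + 1, a :: l => T a * EF T k l - bsum a (EF T k) l

/-- Polarized elementary symmetric functions in terms of traces. -/
def EE (T : R → E) (l : List R) : E := EF T l.length l

/-- Weighted lists. -/
def Wt (W : ℕ → Set R) : List R → ℕ → Prop
  | [], d => d = 0
  | a :: l, d => ∃ i e, 1 ≤ i ∧ a ∈ W i ∧ Wt W l e ∧ d = i + e

theorem bsum_congr {M : Type} [AddCommGroup M] {a : R} {f g : List R → M} {l : List R}
    (h : ∀ l', l'.length = l.length → f l' = g l') : bsum a f l = bsum a g l := by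
  induction l generalizing f g with
  | nil => rfl
  | cons b l ih =>
    simp only [bsum]
    rw [h _ (by simp)]
    congr 1
    exact ih fun l' hl' => h _ (by simp [hl'])

theorem EE_nil (T : R → E) : EE T [] = 1 := rfl

theorem EE_cons (T : R → E) (a : R) (l : List R) :
    EE T (a :: l) = T a * EE T l - bsum a (EE T) l := by
  rw [EE, List.length_cons, EF]
  congr 1
  exact bsum_congr fun l' hl' => by rw [EE, hl']

theorem bsum_mem_wt {M : Type} [AddCommGroup M] (G : AddSubgroup M) {W : ℕ → Set R}
    (hW : ∀ i j, ∀ a ∈ W i, ∀ b ∈ W j, a * b ∈ W (i + j)) {a : R} {i : ℕ} (ha : a ∈ W i)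
    {f : List R → M} {l : List R} {d : ℕ} (hl : Wt W l d)
    (h : ∀ l', l'.length = l.length → Wt W l' (d + i) → f l' ∈ G) : bsum a f l ∈ G := by
  induction l generalizing f d with
  | nil => exact G.zero_mem
  | cons b l ih =>
    obtain ⟨j, e, hj, hb, hle, rfl⟩ := hl
    simp only [bsum]
    refine G.add_mem (h _ (by simp) ⟨j + i, e, by omega, hW _ _ _ hb _ ha, hle, by omega⟩) ?_
    exact ih hle fun l' hl' hw => h _ (by simp [hl']) ⟨j, e + i, hj, hb, hw, by omega⟩

theorem EE_mem (T : R → E) (C : Subring E) (I : AddSubgroup E) (hIC : ∀ x ∈ I, x ∈ C)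
    (hI : ∀ x ∈ I, ∀ y ∈ C, x * y ∈ I) {W : ℕ → Set R}
    (hW : ∀ i j, ∀ a ∈ W i, ∀ b ∈ W j, a * b ∈ W (i + j)) (L : ℕ)
    (hT : ∀ i < L, ∀ a ∈ W i, T a ∈ I) : ∀ (k : ℕ) (l : List R), l.length = k →
    ∀ d, Wt W l d → d < L → EE T l ∈ C ∧ (l ≠ [] → EE T l ∈ I) := by
  intro k
  induction k with
  | zero =>
    intro l hl d _ _
    obtain rfl := List.length_eq_zero_iff.1 hl
    exact ⟨C.one_mem, fun h => absurd rfl h⟩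
  | succ k ih =>
    intro l hl d hd hdL
    cases l with
    | nil => simp at hl
    | cons a l =>
      simp only [List.length_cons, Nat.add_right_cancel_iff] at hl
      obtain ⟨i, e, hi, ha, hle, rfl⟩ := hd
      have : EE T (a :: l) ∈ I := by
        rw [EE_cons]
        refine I.sub_mem (hI _ (hT i (by omega) a ha) _ (ih l hl e hle (by omega)).1) ?_
        by_cases h0 : l = []
        · subst h0; exact I.zero_mem
        · refine bsum_mem_wt I hW ha hle fun l' hl' hw => ?_
          refine (ih l' (hl'.trans hl) _ hw (by omega)).2 ?_
          rintro rfl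
          simp only [List.length_nil] at hl'
          exact h0 (List.length_eq_zero_iff.1 hl'.symm)
      exact ⟨hIC _ this, fun _ => this⟩

theorem Wt_perm {W : ℕ → Set R} {l l' : List R} (h : List.Perm l l') :
    ∀ d, Wt W l d → Wt W l' d := by
  induction h with
  | nil => exact fun _ h => h
  | cons x _ ih =>
    rintro d ⟨i, e, hi, ha, hle, rfl⟩
    exact ⟨i, e, hi, ha, ih e hle, rfl⟩
  | swap x y l =>
    rintro d ⟨i, e, hi, ha, ⟨i', e', hi', ha', hle', rfl⟩, rfl⟩
    exact ⟨i', i + e', hi', ha', ⟨i, e', hi, ha, hle', rfl⟩, by omega⟩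
  | trans _ _ ih1 ih2 => exact fun d h => ih2 d (ih1 d h)

/-- Cayley–Hamilton expressions, with fuel. -/
def BF (T Φ : R → E) : ℕ → List R → R → E
  | 0, l, w => Φ w * EE T l
  | k + 1, l, w => Φ w * EE T l - psum (fun s l' => BF T Φ k l' (w * s)) l

/-- Cayley–Hamilton expressions. -/
def BB (T Φ : R → E) (l : List R) (w : R) : E := BF T Φ l.length l w

theorem BB_eq (T Φ : R → E) (l : List R) (w : R) :
    BB T Φ l w = Φ w * EE T l - psum (fun s l' => BB T Φ l' (w * s)) l := by
  cases l with
  | nil => simp [BB, BF, psum]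
  | cons a l =>
    rw [BB, List.length_cons, BF]
    congr 1
    refine psum_congr fun s l' hp => ?_
    have := hp.length_eq
    simp only [List.length_cons, Nat.add_right_cancel_iff] at this
    rw [BB, this]

theorem BB_reduce (T : R → E) (Φ : R →+ E) (G : AddSubgroup E) (Pr : R → List R → Prop)
    (hPr : ∀ w l s l', Pr w l → List.Perm (s :: l') l → Pr (w * s) l')
    (hG : ∀ w l, Pr w l → l ≠ [] → Φ w * EE T l ∈ G) : ∀ (k : ℕ) (l : List R) (w : R),
    l.length = k → Pr w l → BB T Φ l w - (-1 : ℤ) ^ k • Φ (w * sy l) ∈ G := by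
  intro k
  induction k with
  | zero =>
    intro l w hl _
    obtain rfl := List.length_eq_zero_iff.1 hl
    rw [BB_eq]
    simp [psum, EE_nil, sy_nil]
  | succ k ih =>
    intro l w hl hw
    have hne : l ≠ [] := by rintro rfl; simp at hl
    have e1 : Φ (w * sy l) = psum (fun s l' => Φ (w * s * sy l')) l := by
      cases l with
      | nil => simp at hl
      | cons a l =>
        rw [sy_cons]
        have := psum_map (Φ.comp (AddMonoidHom.mulLeft w)) (fun s l' => s * sy l') (a :: l)
        simp only [AddMonoidHom.comp_apply, AddMonoidHom.coe_mulLeft] at this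
        rw [this]
        simp only [mul_assoc]
    have e2 : BB T Φ l w - (-1 : ℤ) ^ (k + 1) • Φ (w * sy l) = Φ w * EE T l -
        psum (fun s l' => BB T Φ l' (w * s) - (-1 : ℤ) ^ k • Φ (w * s * sy l')) l := by
      rw [BB_eq, e1]
      have h1 := psum_map (zsmulAddGroupHom (α := E) (-(-1 : ℤ) ^ k))
        (fun s l' => Φ (w * s * sy l')) l
      simp only [zsmulAddGroupHom_apply] at h1
      have h2 : (-1 : ℤ) ^ (k + 1) = -(-1 : ℤ) ^ k := by ring
      rw [h2, h1, sub_sub, ← psum_add]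
      congr 1
      refine psum_congr fun s l' _ => ?_
      rw [neg_smul, sub_eq_add_neg]
    rw [e2]
    refine G.sub_mem (hG w l hw hne) (psum_mem G fun s l' hp => ?_)
    have := hp.length_eq
    simp only [List.length_cons] at this
    exact ih l' _ (by omega) (hPr _ _ _ _ hw hp)

end Ops

section Comm
variable {F E : Type} [Field F] [Ring E] [Algebra F E]

theorem adjoin_comm {S : Set E} (hc : ∀ a ∈ S, ∀ b ∈ S, a * b = b * a) :
    ∀ x ∈ Algebra.adjoin F S, ∀ y ∈ Algebra.adjoin F S, x * y = y * x := by
  intro x hx y hy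
  letI := Algebra.adjoinCommRingOfComm F hc
  exact congrArg Subtype.val (mul_comm (⟨x, hx⟩ : Algebra.adjoin F S) ⟨y, hy⟩)

theorem comm_nil {S : Set E} (hfin : S.Finite) (hc : ∀ a ∈ S, ∀ b ∈ S, a * b = b * a) :
    ∃ r : ℕ, ∀ l : List E, l.length = r →
      (∀ x ∈ l, x ∈ Algebra.adjoin F S ∧ IsNilpotent x) → l.prod = 0 := by
  letI := Algebra.adjoinCommRingOfComm F hc
  have hfg : (Algebra.adjoin F S).FG := ⟨hfin.toFinset, by simp⟩
  haveI : Algebra.FiniteType F (Algebra.adjoin F S) :=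
    (Subalgebra.fg_iff_finiteType _).1 hfg
  haveI : IsNoetherianRing (Algebra.adjoin F S) := Algebra.FiniteType.isNoetherianRing F _
  obtain ⟨r, hr⟩ := IsNoetherianRing.isNilpotent_nilradical (Algebra.adjoin F S)
  refine ⟨r, fun l hl hx => ?_⟩
  have key : ∀ l : List E, (∀ x ∈ l, x ∈ Algebra.adjoin F S ∧ IsNilpotent x) →
      ∃ p ∈ (nilradical (Algebra.adjoin F S)) ^ l.length, (p : E) = l.prod := by
    intro l
    induction l with
    | nil => exact fun _ => ⟨1, by simp, by simp⟩
    | cons a l ih =>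
      intro h
      obtain ⟨p, hp, hpe⟩ := ih fun x hx => h x (List.mem_cons_of_mem _ hx)
      obtain ⟨ha, k, hk⟩ := h a List.mem_cons_self
      refine ⟨⟨a, ha⟩ * p, ?_, ?_⟩
      · rw [List.length_cons, pow_succ']
        refine Ideal.mul_mem_mul ?_ hp
        rw [mem_nilradical]
        exact ⟨k, Subtype.ext (by simpa using hk)⟩
      · simp [hpe]
  obtain ⟨p, hp, hpe⟩ := key l hx
  rw [hl, hr] at hp
  rw [← hpe, (Ideal.mem_bot (R := Algebra.adjoin F S)).1 hp]
  rfl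

/-- nilpotent elements of a commutative subalgebra -/
def nilG (S : Set E) (hc : ∀ a ∈ S, ∀ b ∈ S, a * b = b * a) : AddSubgroup E where
  carrier := {x | x ∈ Algebra.adjoin F S ∧ IsNilpotent x}
  zero_mem' := ⟨zero_mem _, IsNilpotent.zero⟩
  add_mem' := fun {a b} ha hb => ⟨add_mem ha.1 hb.1,
    Commute.isNilpotent_add (adjoin_comm hc a ha.1 b hb.1) ha.2 hb.2⟩
  neg_mem' := fun {a} ha => ⟨neg_mem ha.1, ha.2.neg⟩

end Comm

section TraceFG
open Polynomial
variable {F R E : Type} [Field F] [CharZero F] [Ring R] [Algebra F R] [Ring E] [Algebra F E]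

theorem psum_map_list {A B M : Type} [AddCommGroup M] (g : A → B) (f : B → List B → M)
    (l : List A) : psum f (l.map g) = psum (fun s l' => f (g s) (l'.map g)) l := by
  induction l generalizing f with
  | nil => rfl
  | cons a l ih => simp only [List.map_cons, psum, ih]

theorem sy_monomial : ∀ (k : ℕ) (l : List (ℕ × R)), l.length = k →
    sy (l.map fun p => monomial p.1 p.2) =
      monomial (l.map Prod.fst).sum (sy (l.map Prod.snd)) := by
  intro k
  induction k with
  | zero =>
    intro l hl
    obtain rfl := List.length_eq_zero_iff.1 hl
    simp [sy_nil]
  | succ k ih =>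
    intro l hl
    cases l with
    | nil => simp at hl
    | cons a l =>
      have e1 : sy ((a :: l).map Prod.snd) = psum (fun s l' => s * sy l') ((a :: l).map Prod.snd) :=
        sy_cons _ _
      have e2 : sy ((a :: l).map fun p : ℕ × R => monomial p.1 p.2) =
          psum (fun s l' => s * sy l') ((a :: l).map fun p : ℕ × R => monomial p.1 p.2) :=
        sy_cons _ _
      rw [e1, e2, psum_map_list, psum_map_list]
      have := psum_map (monomial (R := R) ((a :: l).map Prod.fst).sum).toAddMonoidHom
        (fun s l' => s.2 * sy (l'.map Prod.snd)) (a :: l)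
      simp only [LinearMap.toAddMonoidHom_coe] at this
      rw [this]
      refine psum_congr fun s l' hp => ?_
      have hlen := hp.length_eq
      simp only [List.length_cons] at hlen hl
      rw [ih l' (by omega), monomial_mul_monomial]
      have := (hp.map Prod.fst).sum_eq
      simp only [List.map_cons, List.sum_cons] at this ⊢
      rw [this]

theorem prod_monomial (l : List R) :
    (l.map fun w => (monomial 1 w : R[X])).prod = monomial l.length l.prod := by
  induction l with
  | nil => simp
  | cons a l ih => simp [ih, monomial_mul_monomial, add_comm]

theorem Wt_of_list {W : ℕ → Set R} : ∀ (l : List (ℕ × R)),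
    (∀ p ∈ l, 1 ≤ p.1 ∧ p.2 ∈ W p.1) → Wt W (l.map Prod.snd) (l.map Prod.fst).sum
  | [], _ => rfl
  | p :: l, h => ⟨p.1, _, (h p (by simp)).1, (h p (by simp)).2,
      Wt_of_list l fun q hq => h q (by simp [hq]), by simp⟩

theorem mem_span_pow (W : Submodule F R) : ∀ k : ℕ,
    W ^ k ≤ Submodule.span F {x | ∃ l : List R, l.length = k ∧ (∀ y ∈ l, y ∈ W) ∧ l.prod = x} := by
  intro k
  induction k with
  | zero =>
    rw [pow_zero, Submodule.one_eq_span, Submodule.span_le]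
    rintro _ rfl
    exact Submodule.subset_span ⟨[], rfl, by simp, rfl⟩
  | succ k ih =>
    have h1 : W * W ^ k ≤ Submodule.span F (W : Set R) * Submodule.span F
        {x | ∃ l : List R, l.length = k ∧ (∀ y ∈ l, y ∈ W) ∧ l.prod = x} :=
      mul_le_mul' (by rw [Submodule.span_eq]) ih
    rw [pow_succ']
    refine h1.trans ?_
    rw [Submodule.span_mul_span, Submodule.span_le]
    rintro _ ⟨a, ha, b, ⟨l, hl, hlW, rfl⟩, rfl⟩
    refine Submodule.subset_span ⟨a :: l, by simp [hl], ?_, by simp⟩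
    intro y hy
    rcases List.mem_cons.1 hy with rfl | hy
    · exact ha
    · exact hlW y hy

theorem pow_mem_add {V : Submodule F R} {i j k : ℕ} {a b : R} (ha : a ∈ V ^ i) (hb : b ∈ V ^ j)
    (h : k = i + j) : a * b ∈ V ^ k := by
  subst h
  rw [pow_add]
  exact Submodule.mul_mem_mul ha hb

/-- auxiliary submodule of polynomials -/
def GLm (V : Submodule F R) (T : R →ₗ[F] E) (C : Subalgebra F E) (L : ℕ) : Submodule F R[X] where
  carrier := {g | ∀ l a b, 1 ≤ b → a + l + b ≤ L → ∀ u ∈ V ^ a, ∀ v ∈ V ^ b,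
    T (u * g.coeff l * v) ∈ C}
  zero_mem' := by
    intro l a b _ _ u _ v _
    simp
  add_mem' := by
    intro g g' hg hg' l a b hb hL u hu v hv
    rw [coeff_add, mul_add, add_mul, map_add]
    exact add_mem (hg l a b hb hL u hu v hv) (hg' l a b hb hL u hu v hv)
  smul_mem' := by
    intro c g hg l a b hb hL u hu v hv
    rw [coeff_smul, mul_smul_comm, smul_mul_assoc, map_smul]
    exact C.smul_mem (hg l a b hb hL u hu v hv) c

theorem trace_fg (hfg : Algebra.FiniteType F R) (T : R →ₗ[F] E) (n : ℕ)
    (hTCH : ∀ (a c : R) (l : List R), l.length = n → BB T (fun w => T (a * w * c)) l 1 = 0) :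
    ∃ S : Set E, S.Finite ∧ S ⊆ Set.range T ∧ ∀ a, T a ∈ Algebra.adjoin F S := by
  classical
  obtain ⟨s, hs⟩ := hfg.out
  set V : Submodule F R := Submodule.span F (s : Set R) with hV
  have hVfg : V.FG := ⟨s, rfl⟩
  set S0 : Set R[X] := {g | ∃ i w, 1 ≤ i ∧ w ∈ V ^ i ∧ g = monomial i w} with hS0
  have hS0m : ∀ a ∈ S0, ∀ b ∈ S0, a * b ∈ S0 := by
    rintro _ ⟨i, w, hi, hw, rfl⟩ _ ⟨j, w', hj, hw', rfl⟩
    exact ⟨i + j, w * w', by omega, pow_mem_add hw hw' rfl, monomial_mul_monomial _ _ _ _⟩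
  obtain ⟨D, hD⟩ := nagata_higman (F := F) hS0m n
  have hgen : ∀ i : ℕ, ∃ t : Finset R, Submodule.span F (t : Set R) = V ^ i :=
    fun i => (hVfg.pow i)
  choose t ht using hgen
  set S : Set E := T '' (((Finset.range (D + 1)).biUnion t : Finset R) : Set R) with hS
  have hsmall : ∀ i ≤ D, ∀ a ∈ V ^ i, T a ∈ Algebra.adjoin F S := by
    intro i hi a ha
    rw [← ht i] at ha
    have : Submodule.span F (t i : Set R) ≤
        (Subalgebra.toSubmodule (Algebra.adjoin F S)).comap T := by
      rw [Submodule.span_le]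
      intro x hx
      refine Algebra.subset_adjoin ⟨x, ?_, rfl⟩
      rw [Finset.mem_coe, Finset.mem_biUnion]
      exact ⟨i, Finset.mem_range.2 (by omega), hx⟩
    exact this ha
  have hall : ∀ L, ∀ a ∈ V ^ L, T a ∈ Algebra.adjoin F S := by
    intro L
    induction L using Nat.strong_induction_on with
    | _ L ih =>
      rcases Nat.lt_or_ge D L with hDL | hDL
      swap
      · exact hsmall L hDL
      set C := Algebra.adjoin F S with hC
      have hW : ∀ i j, ∀ a ∈ (fun i => ((V ^ i : Submodule F R) : Set R)) i,
          ∀ b ∈ (fun i => ((V ^ i : Submodule F R) : Set R)) j,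
          a * b ∈ (fun i => ((V ^ i : Submodule F R) : Set R)) (i + j) :=
        fun i j a ha b hb => pow_mem_add ha hb rfl
      have hG1 : ∀ x ∈ S0, ∀ g ∈ GLm V T C L, x * g ∈ GLm V T C L := by
        rintro _ ⟨i, w, hi, hw, rfl⟩ g hg l a b hb hL u hu v hv
        rw [← C_mul_X_pow_eq_monomial, mul_assoc (Polynomial.C w), coeff_C_mul, coeff_X_pow_mul']
        split_ifs with hil
        · rw [← mul_assoc]
          exact hg (l - i) (a + i) b hb (by omega) _ (pow_mem_add hu hw rfl) v hv
        · simp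
      have hG2 : ∀ x ∈ S0, ∀ g ∈ GLm V T C L, g * x ∈ GLm V T C L := by
        rintro _ ⟨i, w, hi, hw, rfl⟩ g hg l a b hb hL u hu v hv
        rw [← C_mul_X_pow_eq_monomial, ← X_pow_mul, ← mul_assoc, coeff_mul_C, coeff_mul_X_pow']
        split_ifs with hil
        · have := hg (l - i) a (i + b) (by omega) (by omega) u hu _ (pow_mem_add hw hv rfl)
          simpa only [mul_assoc] using this
        · simp
      have hG3 : ∀ l : List R[X], l.length = n → (∀ x ∈ l, x ∈ S0) → sy l ∈ GLm V T C L := by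
        intro l hl hlS
        obtain ⟨l, rfl, hl'⟩ : ∃ l' : List (ℕ × R), l = l'.map (fun p => monomial p.1 p.2) ∧
            ∀ p ∈ l', 1 ≤ p.1 ∧ p.2 ∈ V ^ p.1 := by
          clear hl
          induction l with
          | nil => exact ⟨[], rfl, by simp⟩
          | cons a l ih =>
            obtain ⟨l', rfl, h⟩ := ih fun x hx => hlS x (List.mem_cons_of_mem _ hx)
            obtain ⟨i, w, hi, hw, rfl⟩ := hlS a List.mem_cons_self
            refine ⟨(i, w) :: l', rfl, ?_⟩
            intro p hp
            rcases List.mem_cons.1 hp with rfl | hp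
            · exact ⟨hi, hw⟩
            · exact h p hp
        have hwt : Wt (fun i => ((V ^ i : Submodule F R) : Set R)) (l.map Prod.snd)
          (l.map Prod.fst).sum := Wt_of_list l hl'
        rw [sy_monomial _ l rfl]
        intro j a b hb hL u hu v hv
        rw [coeff_monomial]
        split_ifs with hj
        swap
        · simp
        subst hj
        rw [List.length_map] at hl
        have h0 := hTCH u v (l.map Prod.snd) (by rw [List.length_map, hl])
        let Φ : R →ₗ[F] E := T ∘ₗ LinearMap.mulRight F v ∘ₗ LinearMap.mulLeft F u
        have hmain := BB_reduce T Φ.toAddMonoidHom (Subalgebra.toSubmodule C).toAddSubgroup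
          (fun w l => ∃ e d, w ∈ V ^ e ∧ Wt (fun i => ((V ^ i : Submodule F R) : Set R)) l d ∧
            a + e + d + b ≤ L) ?_ ?_ n (l.map Prod.snd) 1 (by simpa using hl)
            ⟨0, _, by simp [Submodule.one_le.1], hwt, by omega⟩
        · have h0' : BB T Φ.toAddMonoidHom (l.map Prod.snd) 1 = 0 := h0
          rw [h0', zero_sub, neg_mem_iff] at hmain
          have h3 := (Subalgebra.toSubmodule C).toAddSubgroup.zsmul_mem hmain ((-1 : ℤ) ^ n)
          rw [smul_smul, ← mul_pow] at h3
          simpa [Φ] using h3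
        · rintro w l s l' ⟨e, d, hw, hd, hle⟩ hp
          obtain ⟨i, d', hi, hs', hd', rfl⟩ := Wt_perm hp.symm _ hd
          exact ⟨e + i, d', pow_mem_add hw hs' rfl, hd', by omega⟩
        · rintro w l ⟨e, d, hw, hd, hle⟩ hne
          have hd1 : 1 ≤ d := by
            cases l with
            | nil => exact absurd rfl hne
            | cons c l =>
              obtain ⟨i, d', hi, hs', hd', rfl⟩ := hd
              omega
          refine C.mul_mem ?_ ?_
          · refine ih (a + e + b) (by omega) _ ?_
            exact pow_mem_add (pow_mem_add hu hw rfl) hv rfl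
          · exact (EE_mem T C.toSubring C.toSubring.toAddSubgroup (fun x hx => hx)
              (fun x hx y hy => C.mul_mem hx hy) hW L (fun i hi a ha => ih i hi a ha)
              _ l rfl d hd (by omega)).1
      intro a ha
      have hprod := hD (GLm V T C L) hG1 hG2 hG3
      have hle : V ^ L ≤ (Subalgebra.toSubmodule C).comap T := by
        obtain ⟨b, rfl⟩ := Nat.exists_eq_add_of_lt hDL
        rw [add_assoc, pow_add, Submodule.mul_le]
        intro x hx y hy
        have hx' := mem_span_pow V D hx
        clear hx
        induction hx' using Submodule.span_induction with
        | mem x hx =>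
          obtain ⟨l, hl, hlV, rfl⟩ := hx
          have := hprod (l.map fun w => (monomial 1 w : R[X])) (by simpa using hl) (by
            intro g hg
            obtain ⟨w, hw, rfl⟩ := List.mem_map.1 hg
            exact ⟨1, w, le_rfl, by simpa using hlV w hw, rfl⟩)
          rw [prod_monomial] at this
          have := this l.length 0 (b + 1) (by omega) (by omega) 1 (by simp [Submodule.one_le.1]) y hy
          simpa using this
        | zero => simp
        | add x x' _ _ hx hx' => rw [add_mul]; exact add_mem hx hx'
        | smul c x _ hx => rw [smul_mul_assoc]; exact Submodule.smul_mem _ c hx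
      exact hle ha
  refine ⟨S, (Finset.finite_toSet _).image _, Set.image_subset_range _ _, fun a => ?_⟩
  have ha : a ∈ Algebra.adjoin F (s : Set R) := by rw [hs]; trivial
  rw [← Subalgebra.mem_toSubmodule, Algebra.adjoin_eq_span] at ha
  have : Submodule.span F ((Submonoid.closure (s : Set R) : Submonoid R) : Set R) ≤
      (Subalgebra.toSubmodule (Algebra.adjoin F S)).comap T := by
    rw [Submodule.span_le]
    intro x hx
    have : ∃ L, x ∈ V ^ L := by
      induction hx using Submonoid.closure_induction with
      | mem x hx => exact ⟨1, by simpa using Submodule.subset_span hx⟩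
      | one => exact ⟨0, by simp [Submodule.one_le.1]⟩
      | mul x y _ _ hx hy =>
        obtain ⟨i, hi⟩ := hx
        obtain ⟨j, hj⟩ := hy
        exact ⟨i + j, pow_mem_add hi hj rfl⟩
    obtain ⟨L, hL⟩ := this
    exact hall L x hL
  exact this ha

end TraceFG

section Abstract
variable {F R Q : Type} [Field F] [CharZero F] [Ring R] [Algebra F R] [AddCommGroup Q] [Module F Q]

theorem Wt_const {P : Set R} : ∀ l : List R, (∀ x ∈ l, x ∈ P) → Wt (fun _ => P) l l.length
  | [], _ => rfl
  | a :: l, h => ⟨1, l.length, le_rfl, h a (by simp),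
      Wt_const l fun x hx => h x (by simp [hx]), by simp [add_comm]⟩

theorem abstract_nil (hfg : Algebra.FiniteType F R) (T : R →ₗ[F] Module.End F Q)
    (μ : R →ₗ[F] Module.End F Q) (hμ : ∀ a b, μ (a * b) = μ b * μ a) (hμ1 : μ 1 = 1)
    (hTT : ∀ a b, T a * T b = T b * T a) (hTμ : ∀ a b, T a * μ b = μ b * T a) (n : ℕ)
    (hCH : ∀ l : List R, l.length = n → BB T μ l 1 = 0)
    (hTCH : ∀ (a c : R) (l : List R), l.length = n → BB T (fun w => T (a * w * c)) l 1 = 0)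
    (hnil : ∀ z, IsNilpotent z → IsNilpotent (T z))
    (N : TwoSidedIdeal R) (hN : ∀ z ∈ N, IsNilpotent z) :
    ∃ D : ℕ, ∀ l : List R, l.length = D → (∀ x ∈ l, x ∈ N) → μ l.prod = 0 := by
  obtain ⟨S, hSfin, hSr, hST⟩ := trace_fg hfg T n hTCH
  have hSc : ∀ a ∈ S, ∀ b ∈ S, a * b = b * a := by
    intro a ha b hb
    obtain ⟨a, rfl⟩ := hSr ha
    obtain ⟨b, rfl⟩ := hSr hb
    exact hTT a b
  obtain ⟨r, hr⟩ := comm_nil (F := F) hSfin hSc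
  have hCμ : ∀ x ∈ Algebra.adjoin F S, ∀ b, x * μ b = μ b * x := by
    intro x hx b
    induction hx using Algebra.adjoin_induction with
    | mem x hx => obtain ⟨a, rfl⟩ := hSr hx; exact hTμ a b
    | algebraMap c => exact Algebra.commutes c _
    | add x y _ _ hx hy => rw [add_mul, mul_add, hx, hy]
    | mul x y _ _ hx hy => rw [mul_assoc, hy, ← mul_assoc, hx, mul_assoc]
  -- EE of lists in N
  have hEE : ∀ l : List R, (∀ x ∈ l, x ∈ N) → l ≠ [] →
      EE T l ∈ Algebra.adjoin F S ∧ IsNilpotent (EE T l) := by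
    intro l hl hne
    have := (EE_mem T (Algebra.adjoin F S).toSubring (nilG (F := F) S hSc) (fun x hx => hx.1)
      (fun x hx y hy => ⟨mul_mem hx.1 hy,
        (Commute.isNilpotent_mul_right (adjoin_comm hSc x hx.1 y hy) hx.2)⟩)
      (W := fun _ => {x | x ∈ N}) (fun _ _ a ha b _ => N.mul_mem_right a b ha) (l.length + 1)
      (fun _ _ a ha => ⟨hST a, hnil a (hN a ha)⟩) l.length l rfl l.length
      (Wt_const l hl) (by omega)).2 hne
    exact this
  let Qj : ℕ → Submodule F Q := fun j => Submodule.span F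
    {q | ∃ (l : List (Module.End F Q)) (q' : Q), l.length = j ∧
      (∀ x ∈ l, x ∈ Algebra.adjoin F S ∧ IsNilpotent x) ∧ q = l.prod q'}
  have hQμ : ∀ j b, ∀ q ∈ Qj j, μ b q ∈ Qj j := by
    intro j b
    have : Qj j ≤ (Qj j).comap (μ b) := by
      refine Submodule.span_le.2 ?_
      rintro _ ⟨l, q', hl, hx, rfl⟩
      refine Submodule.subset_span ⟨l, μ b q', hl, hx, ?_⟩
      have : l.prod * μ b = μ b * l.prod :=
        hCμ _ (list_prod_mem fun x h => (hx x h).1) b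
      exact (LinearMap.congr_fun this q').symm
    exact this
  have hQE : ∀ j x, x ∈ Algebra.adjoin F S → IsNilpotent x → ∀ q ∈ Qj j, x q ∈ Qj (j + 1) := by
    intro j x hx1 hx2
    have : Qj j ≤ (Qj (j + 1)).comap x := by
      refine Submodule.span_le.2 ?_
      rintro _ ⟨l, q', hl, hx, rfl⟩
      refine Submodule.subset_span ⟨x :: l, q', by simp [hl], ?_, by simp⟩
      intro y hy
      rcases List.mem_cons.1 hy with rfl | hy
      · exact ⟨hx1, hx2⟩
      · exact hx y hy
    exact this
  let 𝔐 : Submodule F (Module.End F Q) :=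
    { carrier := {Y | ∀ j, ∀ q ∈ Qj j, Y q ∈ Qj (j + 1)}
      zero_mem' := fun j q _ => by simp
      add_mem' := fun {a b} ha hb j q hq => by
        rw [LinearMap.add_apply]; exact add_mem (ha j q hq) (hb j q hq)
      smul_mem' := fun c a ha j q hq => by
        rw [LinearMap.smul_apply]; exact Submodule.smul_mem _ c (ha j q hq) }
  obtain ⟨D, hD⟩ := nagata_higman (F := F) (S := {x : R | x ∈ N})
    (fun a ha b _ => N.mul_mem_right a b ha) n
  have hP : ∀ l : List R, l.length = D → (∀ x ∈ l, x ∈ N) → μ l.prod ∈ 𝔐 := by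
    refine hD (𝔐.comap μ) ?_ ?_ ?_
    · intro s _ g hg j q hq
      rw [hμ]
      exact hg j _ (hQμ j s q hq)
    · intro s _ g hg j q hq
      rw [hμ]
      exact hQμ (j + 1) s _ (hg j _ hq)
    · intro l hl hlN
      have hmain := BB_reduce T μ.toAddMonoidHom 𝔐.toAddSubgroup (fun _ l => ∀ x ∈ l, x ∈ N)
        ?_ ?_ n l 1 hl hlN
      · have h0 : BB T μ.toAddMonoidHom l 1 = 0 := hCH l hl
        rw [h0, zero_sub, neg_mem_iff] at hmain
        have h3 := 𝔐.toAddSubgroup.zsmul_mem hmain ((-1 : ℤ) ^ n)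
        rw [smul_smul, ← mul_pow] at h3
        simpa using h3
      · intro w l s l' h hp x hx
        exact h x (hp.subset (List.mem_cons_of_mem _ hx))
      · intro w l h hne j q hq
        exact hQμ (j + 1) w _ (hQE j _ (hEE l h hne).1 (hEE l h hne).2 q hq)
  have hpow : ∀ (k : ℕ) (l : List R), l.length = k * D → (∀ x ∈ l, x ∈ N) →
      ∀ q, μ l.prod q ∈ Qj k := by
    intro k
    induction k with
    | zero =>
      intro l hl _ q
      rw [Nat.zero_mul] at hl
      obtain rfl := List.length_eq_zero_iff.1 hl
      refine Submodule.subset_span ⟨[], q, rfl, by simp, ?_⟩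
      simp [hμ1]
    | succ k ih =>
      intro l hl hlN q
      have e : l.prod = (l.take (k * D)).prod * (l.drop (k * D)).prod := by
        rw [← List.prod_append, List.take_append_drop]
      rw [e, hμ]
      refine hP _ ?_ (fun x hx => hlN x (List.mem_of_mem_drop hx)) k _
        (ih _ ?_ (fun x hx => hlN x (List.mem_of_mem_take hx)) q)
      · rw [List.length_drop, hl, Nat.succ_mul]; omega
      · rw [List.length_take, hl, Nat.succ_mul]; omega
  refine ⟨r * D, fun l hl hlN => ?_⟩
  ext q
  have h1 := hpow r l hl hlN q
  have h2 : Qj r ≤ ⊥ := by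
    refine Submodule.span_le.2 ?_
    rintro _ ⟨l, q', hl, hx, rfl⟩
    rw [hr l hl hx]
    simp
  simpa using h2 h1

end Abstract

section Cap
open Function
variable {R : Type} [Ring R] {n : ℕ}

/-- Generalized monomials. -/
def mon (u : Fin (n + 1) → R) (x : Fin n → R) : R :=
  u 0 * (List.ofFn fun i : Fin n => x i * u i.succ).prod

/-- Capelli polynomial. -/
def cap (u : Fin (n + 1) → R) (x : Fin n → R) : R :=
  ∑ σ : Equiv.Perm (Fin n), ((Equiv.Perm.sign σ : ℤˣ) : ℤ) • mon u fun i => x (σ i)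

/-- Maps `t ↦ ∑ l t r`. -/
def IsBi (f : R → R) : Prop := ∃ L : List (R × R), ∀ t, f t = (L.map fun p => p.1 * t * p.2).sum

theorem IsBi.zero : IsBi (fun _ : R => 0) := ⟨[], fun t => by simp⟩

theorem IsBi.id : IsBi (fun t : R => t) := ⟨[(1, 1)], fun t => by simp⟩

theorem IsBi.add {f g : R → R} (hf : IsBi f) (hg : IsBi g) : IsBi fun t => f t + g t := by
  obtain ⟨L, hL⟩ := hf
  obtain ⟨L', hL'⟩ := hg
  exact ⟨L ++ L', fun t => by simp [hL, hL']⟩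

theorem IsBi.mul_left {f : R → R} (hf : IsBi f) (a : R) : IsBi fun t => a * f t := by
  obtain ⟨L, hL⟩ := hf
  refine ⟨L.map fun p => (a * p.1, p.2), fun t => ?_⟩
  simp only [hL]
  rw [← List.sum_map_mul_left]
  simp [Function.comp_def, mul_assoc]

theorem IsBi.mul_right {f : R → R} (hf : IsBi f) (a : R) : IsBi fun t => f t * a := by
  obtain ⟨L, hL⟩ := hf
  refine ⟨L.map fun p => (p.1, p.2 * a), fun t => ?_⟩
  simp only [hL]
  rw [← List.sum_map_mul_right]
  simp [Function.comp_def, mul_assoc]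

theorem IsBi.comp {f g : R → R} (hf : IsBi f) (hg : IsBi g) : IsBi fun t => f (g t) := by
  obtain ⟨L, hL⟩ := hf
  induction L generalizing f with
  | nil => simpa [hL] using IsBi.zero
  | cons p L ih =>
    have := ((hg.mul_left p.1).mul_right p.2).add (ih (f := fun t => (L.map fun p => p.1 * t * p.2).sum)
      fun _ => rfl)
    simpa [hL] using this

theorem IsBi.zsmul {f : R → R} (hf : IsBi f) (k : ℤ) : IsBi fun t => k • f t := by
  have := hf.mul_left (k : R)
  simpa [zsmul_eq_mul] using this

theorem IsBi.sum {ι : Type} (s : Finset ι) {f : ι → R → R} (hf : ∀ i ∈ s, IsBi (f i)) :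
    IsBi fun t => ∑ i ∈ s, f i t := by
  classical
  induction s using Finset.induction_on with
  | empty => simpa using IsBi.zero
  | insert a s ha ih =>
    have := (hf a (Finset.mem_insert_self _ _)).add
      (ih fun i hi => hf i (Finset.mem_insert_of_mem hi))
    simpa [Finset.sum_insert ha] using this

theorem IsBi.map_add {f : R → R} (hf : IsBi f) (s t : R) : f (s + t) = f s + f t := by
  obtain ⟨L, hL⟩ := hf
  rw [hL, hL, hL, ← List.sum_map_add]
  simp [mul_add, add_mul]

theorem IsBi.map_zero {f : R → R} (hf : IsBi f) : f 0 = 0 := by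
  obtain ⟨L, hL⟩ := hf
  rw [hL]; simp

theorem IsBi.map_smul {F : Type} [Field F] [Algebra F R] {f : R → R} (hf : IsBi f) (c : F) (t : R) :
    f (c • t) = c • f t := by
  obtain ⟨L, hL⟩ := hf
  rw [hL, hL, List.smul_sum]
  simp [Function.comp_def]

theorem mon_succ (u : Fin (n + 2) → R) (x : Fin (n + 1) → R) :
    mon u x = u 0 * (x 0 * mon (fun i => u i.succ) fun i => x i.succ) := by
  simp [mon, List.ofFn_succ, mul_assoc]

theorem mon_succ' (u : Fin (n + 2) → R) (x : Fin (n + 1) → R) :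
    mon u x = mon (fun i => u i.castSucc) (fun i => x i.castSucc) *
      (x (Fin.last n) * u (Fin.last (n + 1))) := by
  rw [mon, mon, List.ofFn_succ']
  simp [List.concat_eq_append, mul_assoc]

theorem mon_bi (u : Fin (n + 1) → R) (x : Fin n → R) (i : Fin n) :
    IsBi fun t => mon u (update x i t) := by
  induction n with
  | zero => exact i.elim0
  | succ n ih =>
    simp only [mon_succ]
    refine IsBi.mul_left ?_ _
    refine Fin.cases ?_ (fun j => ?_) i
    · simpa using IsBi.id.mul_right (mon (fun i => u i.succ) fun i => x i.succ)
    · have := (ih (fun i => u i.succ) (fun i => x i.succ) j).mul_left (x 0)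
      have e : ∀ t, (fun i : Fin n => update x j.succ t i.succ) =
          update (fun i : Fin n => x i.succ) j t := by
        intro t
        funext k
        simp only [update_apply, Fin.succ_inj]
      simpa [e, update_of_ne (Fin.succ_ne_zero j).symm] using this

theorem cap_bi (u : Fin (n + 1) → R) (x : Fin n → R) (i : Fin n) :
    IsBi fun t => cap u (update x i t) := by
  refine IsBi.sum _ fun σ _ => IsBi.zsmul ?_ _
  have := mon_bi u (fun j => x (σ j)) (σ.symm i)
  have e : ∀ t, (fun j => update x i t (σ j)) = update (fun j => x (σ j)) (σ.symm i) t := by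
    intro t
    funext j
    simp only [update_apply, Equiv.eq_symm_apply]
  simpa only [e] using this

theorem cap_zero (u : Fin (n + 1) → R) (x : Fin n → R) (i : Fin n) (h : x i = 0) :
    cap u x = 0 := by
  have := (cap_bi u x i).map_zero
  rwa [show (0 : R) = x i from h.symm, update_eq_self, h] at this

theorem mul_cap (w : R) (u : Fin (n + 1) → R) (x : Fin n → R) :
    w * cap u x = cap (update u 0 (w * u 0)) x := by
  rw [cap, cap, Finset.mul_sum]
  refine Finset.sum_congr rfl fun σ _ => ?_
  rw [mul_smul_comm]
  simp [mon, mul_assoc]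

theorem cap_mul (w : R) (u : Fin (n + 1) → R) (x : Fin n → R) :
    cap u x * w = cap (update u (Fin.last n) (u (Fin.last n) * w)) x := by
  rw [cap, cap, Finset.sum_mul]
  refine Finset.sum_congr rfl fun σ _ => ?_
  rw [smul_mul_assoc]
  congr 1
  cases n with
  | zero => simp [mon, Fin.last_zero]
  | succ n =>
    rw [mon_succ', mon_succ']
    have e : (fun i : Fin (n + 1) => update u (Fin.last (n + 1)) (u (Fin.last (n + 1)) * w) i.castSucc) =
        fun i => u i.castSucc := by
      funext i
      rw [update_of_ne (Fin.castSucc_lt_last i).ne]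
    rw [e]
    simp [mul_assoc]

theorem perm_expand (G : (Fin (n + 1) → R) → R) (t : R) (x : Fin n → R) :
    ∑ σ : Equiv.Perm (Fin (n + 1)), ((Equiv.Perm.sign σ : ℤˣ) : ℤ) •
      G (fun i => (Fin.cons t x : Fin (n + 1) → R) (σ i)) =
    ∑ e : Equiv.Perm (Fin n), ((Equiv.Perm.sign e : ℤˣ) : ℤ) •
      G (Fin.cons t fun i => x (e i)) -
    ∑ k, ∑ e : Equiv.Perm (Fin n), ((Equiv.Perm.sign e : ℤˣ) : ℤ) •
      G (Fin.cons (x k) fun i => update x k t (e i)) := by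
  rw [← Equiv.sum_comp Equiv.Perm.decomposeFin.symm, Fintype.sum_prod_type, Fin.sum_univ_succ,
    sub_eq_add_neg, ← Finset.sum_neg_distrib]
  congr 1
  · refine Finset.sum_congr rfl fun e _ => ?_
    congr 2
    · simp [Equiv.Perm.decomposeFin.symm_sign]
    · funext i
      refine Fin.cases ?_ (fun j => ?_) i
      · simp
      · simp
  · refine Finset.sum_congr rfl fun k _ => ?_
    rw [← Finset.sum_neg_distrib]
    refine Finset.sum_congr rfl fun e _ => ?_
    rw [← neg_smul]
    congr 2
    · simp [Equiv.Perm.decomposeFin.symm_sign]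
    · funext i
      refine Fin.cases ?_ (fun j => ?_) i
      · simp
      · simp only [Equiv.Perm.decomposeFin_symm_apply_succ, Fin.cons_succ, update_apply]
        split_ifs with h
        · rw [h]; simp
        · rw [Equiv.swap_apply_of_ne_of_ne (Fin.succ_ne_zero _) (fun h' => h (Fin.succ_inj.1 h'))]
          simp

theorem left_exchange (hC : ∀ (u : Fin (n + 2) → R) (x : Fin (n + 1) → R), cap u x = 0)
    (u : Fin (n + 1) → R) (x : Fin n → R) (t : R) :
    t * cap u x = ∑ k, x k * cap u (update x k t) := by
  have h1 := perm_expand (mon (Fin.cons 1 u)) t x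
  have h2 := hC (Fin.cons 1 u) (Fin.cons t x)
  rw [cap] at h2
  rw [h2, eq_comm, sub_eq_zero] at h1
  simp only [mon_succ, Fin.cons_zero, Fin.cons_succ, one_mul] at h1
  simpa only [cap, Finset.mul_sum, mul_smul_comm] using h1

theorem right_exchange (hC : ∀ (u : Fin (n + 2) → R) (x : Fin (n + 1) → R), cap u x = 0)
    (u : Fin (n + 1) → R) (x : Fin n → R) (t : R) :
    cap u x * t = ∑ k, cap u (update x k t) * x k := by
  have h1 := perm_expand (fun z => mon (Fin.snoc u 1 : Fin (n + 2) → R)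
    fun i => z (finRotate (n + 1) i)) t x
  have h2 := hC (Fin.snoc u 1) (Fin.cons t x)
  have h3 : ∑ σ : Equiv.Perm (Fin (n + 1)), ((Equiv.Perm.sign σ : ℤˣ) : ℤ) •
      mon (Fin.snoc u 1 : Fin (n + 2) → R)
        (fun i => (Fin.cons t x : Fin (n + 1) → R) (σ (finRotate (n + 1) i))) = 0 := by
    rw [← Equiv.sum_comp (Equiv.mulRight (finRotate (n + 1))⁻¹)]
    have : ∀ σ : Equiv.Perm (Fin (n + 1)),
        ((Equiv.Perm.sign (Equiv.mulRight (finRotate (n + 1))⁻¹ σ) : ℤˣ) : ℤ) •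
      mon (Fin.snoc u 1 : Fin (n + 2) → R)
        (fun i => (Fin.cons t x : Fin (n + 1) → R)
          ((Equiv.mulRight (finRotate (n + 1))⁻¹ σ) (finRotate (n + 1) i))) =
        ((Equiv.Perm.sign (finRotate (n + 1)) : ℤˣ) : ℤ) • ((Equiv.Perm.sign σ : ℤˣ) : ℤ) •
      mon (Fin.snoc u 1 : Fin (n + 2) → R)
        (fun i => (Fin.cons t x : Fin (n + 1) → R) (σ i)) := by
      intro σ
      rw [smul_smul]
      simp [mul_comm]
    rw [Finset.sum_congr rfl fun σ _ => this σ, ← Finset.smul_sum]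
    rw [cap] at h2
    rw [h2, smul_zero]
  rw [h3, eq_comm, sub_eq_zero] at h1
  have e : ∀ (i : Fin n), finRotate (n + 1) i.castSucc = i.succ := by
    intro i
    simp
  simp only [mon_succ', Fin.snoc_castSucc, Fin.snoc_last, finRotate_last, e, Fin.cons_zero,
    Fin.cons_succ, mul_one] at h1
  simpa only [cap, Finset.sum_mul, smul_mul_assoc] using h1

end Cap

section Exch
open Function
variable {R : Type} [Ring R] {n : ℕ}

/-- Multiply one slot by `a` on the left. -/
def xu (x : Fin n → R) (i : Fin n) (a : R) : Fin n → R := update x i (a * x i)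

theorem xu_comm (x : Fin n → R) {i j : Fin n} (h : i ≠ j) (a b : R) :
    xu (xu x i a) j b = xu (xu x j b) i a := by
  simp only [xu]
  rw [update_of_ne h.symm, update_of_ne h, update_comm h]

theorem xu_xu (x : Fin n → R) (i : Fin n) (a b : R) :
    xu (xu x i a) i b = xu x i (b * a) := by
  simp [xu, mul_assoc]

theorem left_exchange_bi (hC : ∀ (u : Fin (n + 2) → R) (x : Fin (n + 1) → R), cap u x = 0)
    (u : Fin (n + 1) → R) (x : Fin n → R) (t : R) {f : R → R} (hf : IsBi f) :
    f t * cap u x = ∑ k, f (x k) * cap u (update x k t) := by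
  obtain ⟨L, hL⟩ := hf
  simp only [hL]
  clear hL
  induction L with
  | nil => simp
  | cons p L ih =>
    simp only [List.map_cons, List.sum_cons, add_mul, Finset.sum_add_distrib, ih]
    congr 1
    have := left_exchange hC (update u 0 (p.2 * u 0)) x t
    simp only [← mul_cap] at this
    simp only [mul_assoc, this, Finset.mul_sum]

theorem right_exchange_bi (hC : ∀ (u : Fin (n + 2) → R) (x : Fin (n + 1) → R), cap u x = 0)
    (u : Fin (n + 1) → R) (x : Fin n → R) (t : R) {f : R → R} (hf : IsBi f) :
    cap u x * f t = ∑ k, cap u (update x k t) * f (x k) := by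
  obtain ⟨L, hL⟩ := hf
  simp only [hL]
  clear hL
  induction L with
  | nil => simp
  | cons p L ih =>
    simp only [List.map_cons, List.sum_cons, mul_add, Finset.sum_add_distrib, ih]
    congr 1
    have := right_exchange hC (update u (Fin.last n) (u (Fin.last n) * p.1)) x t
    simp only [← cap_mul] at this
    simp only [← mul_assoc, this, Finset.sum_mul]

/-- The derivation-like operation on Capelli values. -/
def dcap (a : R) (u : Fin (n + 1) → R) (x : Fin n → R) : R := ∑ i, cap u (xu x i a)

theorem prod_exchange (hC : ∀ (u : Fin (n + 2) → R) (x : Fin (n + 1) → R), cap u x = 0)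
    (u : Fin (n + 1) → R) (x : Fin n → R) (v : Fin (n + 1) → R) (y : Fin n → R) (a : R) :
    dcap a u x * cap v y = cap u x * dcap a v y := by
  have h1 : ∀ i, cap u (xu x i a) * cap v y =
      ∑ j, cap u (update x i (y j)) * cap v (update y j (a * x i)) := by
    intro i
    exact left_exchange_bi hC v y (a * x i) (f := fun s => cap u (update x i s)) (cap_bi u x i)
  have h2 : ∀ j, cap u x * cap v (xu y j a) =
      ∑ i, cap u (update x i (y j)) * cap v (update y j (a * x i)) := by
    intro j
    exact right_exchange_bi hC u x (y j) (f := fun s => cap v (update y j (a * s)))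
      ((cap_bi v y j).comp (IsBi.id.mul_left a))
  rw [dcap, dcap, Finset.sum_mul, Finset.mul_sum, Finset.sum_congr rfl fun i _ => h1 i,
    Finset.sum_congr rfl fun i _ => h2 i, Finset.sum_comm]

theorem dcap_bi (u : Fin (n + 1) → R) (x : Fin n → R) : IsBi fun a => dcap a u x := by
  refine IsBi.sum _ fun i _ => ?_
  exact (cap_bi u x i).comp (IsBi.id.mul_right (x i))

/-- Polarized evaluation: multiply distinct slots in `S` by the entries of `l`. -/
def Ev : Finset (Fin n) → List R → ((Fin n → R) → R) → (Fin n → R) → R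
  | _, [], f, x => f x
  | S, a :: l, f, x => ∑ i ∈ S, Ev (S.erase i) l f (xu x i a)

theorem Ev_swap (S : Finset (Fin n)) (a b : R) (l : List R) (f : (Fin n → R) → R) (x : Fin n → R) :
    Ev S (a :: b :: l) f x = Ev S (b :: a :: l) f x := by
  simp only [Ev]
  rw [Finset.sum_comm' (t' := S) (s' := fun j => S.erase j)]
  · refine Finset.sum_congr rfl fun j hj => Finset.sum_congr rfl fun i hi => ?_
    rw [Finset.erase_right_comm, xu_comm _ (Finset.ne_of_mem_erase hi)]
  · intro i j
    simp only [Finset.mem_erase]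
    tauto

theorem bsum_sum {ι : Type} (s : Finset ι) (a : R) (g : ι → List R → R) (l : List R) :
    ∑ i ∈ s, bsum a (g i) l = bsum a (fun l' => ∑ i ∈ s, g i l') l := by
  induction l generalizing g with
  | nil => simp [bsum]
  | cons b l ih => simp only [bsum, Finset.sum_add_distrib, ih]

theorem psum_sum {A : Type} {ι : Type} (s : Finset ι) (g : ι → A → List A → R) (l : List A) :
    ∑ i ∈ s, psum (g i) l = psum (fun t l' => ∑ i ∈ s, g i t l') l := by
  induction l generalizing g with
  | nil => simp [psum]
  | cons b l ih => simp only [psum, Finset.sum_add_distrib, ih]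

theorem Ev_expand (a : R) (f : (Fin n → R) → R) (l : List R) (S : Finset (Fin n)) (x : Fin n → R) :
    ∑ i ∈ S, Ev S l f (xu x i a) = Ev S (a :: l) f x + bsum a (fun l' => Ev S l' f x) l := by
  induction l generalizing S x with
  | nil => simp [Ev, bsum]
  | cons b l ih =>
    rw [Ev_swap]
    simp only [bsum]
    have h1 : ∀ j ∈ S, ∑ i ∈ S, Ev (S.erase j) l f (xu (xu x i a) j b) =
        Ev (S.erase j) l f (xu x j (b * a)) + (Ev (S.erase j) (a :: l) f (xu x j b) +
          bsum a (fun l' => Ev (S.erase j) l' f (xu x j b)) l) := by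
      intro j hj
      rw [← ih, ← Finset.add_sum_erase S _ hj, xu_xu]
      congr 1
      refine Finset.sum_congr rfl fun i hi => ?_
      rw [xu_comm _ (Finset.ne_of_mem_erase hi)]
    have h2 : ∑ i ∈ S, Ev S (b :: l) f (xu x i a) =
        ∑ j ∈ S, ∑ i ∈ S, Ev (S.erase j) l f (xu (xu x i a) j b) := by
      rw [Finset.sum_comm]
      rfl
    rw [h2, Finset.sum_congr rfl h1, Finset.sum_add_distrib, Finset.sum_add_distrib, bsum_sum]
    simp only [Ev]
    abel

theorem Ev_add (l : List R) (f g : (Fin n → R) → R) (S : Finset (Fin n)) (x : Fin n → R) :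
    Ev S l (fun z => f z + g z) x = Ev S l f x + Ev S l g x := by
  induction l generalizing S x with
  | nil => rfl
  | cons a l ih => simp only [Ev, ih, Finset.sum_add_distrib]

theorem Ev_zero (l : List R) (S : Finset (Fin n)) (x : Fin n → R) :
    Ev S l (fun _ => 0) x = 0 := by
  induction l generalizing S x with
  | nil => rfl
  | cons a l ih => simp only [Ev, ih, Finset.sum_const_zero]

theorem Ev_sum {ι : Type} (s : Finset ι) (l : List R) (f : ι → (Fin n → R) → R)
    (S : Finset (Fin n)) (x : Fin n → R) :
    Ev S l (fun z => ∑ i ∈ s, f i z) x = ∑ i ∈ s, Ev S l (f i) x := by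
  induction l generalizing S x with
  | nil => rfl
  | cons a l ih => simp only [Ev, ih]; rw [Finset.sum_comm]

theorem Ev_mul (r : R) (l : List R) (f : (Fin n → R) → R) (S : Finset (Fin n)) (x : Fin n → R) :
    Ev S l (fun z => r * f z) x = r * Ev S l f x := by
  induction l generalizing S x with
  | nil => rfl
  | cons a l ih => simp only [Ev, ih, Finset.mul_sum]

theorem Ev_long (l : List R) (f : (Fin n → R) → R) (S : Finset (Fin n)) (x : Fin n → R)
    (h : S.card < l.length) : Ev S l f x = 0 := by
  induction l generalizing S x with
  | nil => simp at h
  | cons a l ih =>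
    simp only [Ev]
    refine Finset.sum_eq_zero fun i hi => ih _ _ ?_
    have := Finset.card_erase_add_one hi
    simp only [List.length_cons] at h
    omega

theorem Ev_slot_notMem (f : (Fin n → R) → R) (i : Fin n) (l : List R) (S : Finset (Fin n))
    (x : Fin n → R) (hi : i ∉ S) :
    Ev S l (fun z => z i * f (update z i 1)) x = x i * Ev S l f (update x i 1) := by
  induction l generalizing S x with
  | nil => rfl
  | cons a l ih =>
    simp only [Ev, Finset.mul_sum]
    refine Finset.sum_congr rfl fun j hj => ?_
    have hij : j ≠ i := fun h => hi (h ▸ hj)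
    rw [ih _ _ (fun h => hi (Finset.mem_of_mem_erase h))]
    simp only [xu]
    rw [update_of_ne hij.symm, update_of_ne hij, update_comm hij]

theorem Ev_slot_mem (f : (Fin n → R) → R) (i : Fin n) (l : List R) (S : Finset (Fin n))
    (x : Fin n → R) (hi : i ∈ S) :
    Ev S l (fun z => z i * f (update z i 1)) x = x i * Ev (S.erase i) l f (update x i 1) +
      psum (fun s l' => s * (x i * Ev (S.erase i) l' f (update x i 1))) l := by
  induction l generalizing S x with
  | nil => simp [Ev, psum]
  | cons a l ih =>
    have h0 : Ev S (a :: l) (fun z => z i * f (update z i 1)) x =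
      Ev (S.erase i) l (fun z => z i * f (update z i 1)) (xu x i a) +
      ∑ j ∈ S.erase i, Ev (S.erase j) l (fun z => z i * f (update z i 1)) (xu x j a) := by
      simp only [Ev]
      rw [← Finset.add_sum_erase S _ hi]
    rw [h0, Ev_slot_notMem _ _ _ _ _ (Finset.notMem_erase i S)]
    have h1 : ∀ j ∈ S.erase i, Ev (S.erase j) l (fun z => z i * f (update z i 1)) (xu x j a) =
        x i * Ev ((S.erase i).erase j) l f (xu (update x i 1) j a) +
        psum (fun s l' => s * (x i * Ev ((S.erase i).erase j) l' f (xu (update x i 1) j a))) l := by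
      intro j hj
      have hij : j ≠ i := Finset.ne_of_mem_erase hj
      rw [ih _ _ (Finset.mem_erase.2 ⟨hij.symm, hi⟩), Finset.erase_right_comm]
      simp only [xu]
      rw [update_of_ne hij.symm, update_of_ne hij, update_comm hij]
    rw [Finset.sum_congr rfl h1, Finset.sum_add_distrib, psum_sum]
    simp only [psum, Ev, Finset.mul_sum]
    have e1 : xu x i a i = a * x i := by simp [xu]
    have e2 : update (xu x i a) i 1 = update x i 1 := by simp [xu]
    rw [e1, e2, mul_assoc]
    abel

/-- The Cayley–Hamilton remainder. -/
def bb (v : Fin (n + 1) → R) (y : Fin n → R) (l : List R) : R :=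
  ∑ i, y i * Ev (Finset.univ.erase i) l (cap v) (update y i 1)

theorem bb_long (v : Fin (n + 1) → R) (y : Fin n → R) (l : List R) (h : l.length = n) :
    bb v y l = 0 := by
  refine Finset.sum_eq_zero fun i _ => ?_
  rw [Ev_long, mul_zero]
  have := Finset.card_erase_add_one (Finset.mem_univ i)
  rw [Finset.card_univ, Fintype.card_fin] at this
  omega

theorem Ev_bb (hC : ∀ (u : Fin (n + 2) → R) (x : Fin (n + 1) → R), cap u x = 0)
    (v : Fin (n + 1) → R) (y : Fin n → R) (l : List R) :
    Ev Finset.univ l (cap v) y = bb v y l + psum (fun s l' => s * bb v y l') l := by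
  have e : cap v = fun z => ∑ i, z i * cap v (update z i 1) := by
    funext z
    rw [← left_exchange hC, one_mul]
  conv_lhs => rw [e]
  rw [Ev_sum, Finset.sum_congr rfl fun i _ => Ev_slot_mem (cap v) i l _ y (Finset.mem_univ i),
    Finset.sum_add_distrib, psum_sum]
  simp only [bb, Finset.mul_sum]

end Exch

section Concrete
open Function
variable {F R : Type} [Field F] [CharZero F] [Ring R] [Algebra F R] {n : ℕ}

/-- Functions of a Capelli argument. -/
abbrev HH (R : Type) (n : ℕ) : Type := (Fin (n + 1) → R) × (Fin n → R) → R

/-- Generating functions. -/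
def hr (n : ℕ) (r : R) : HH R n := fun p => r * cap p.1 p.2

variable (F R n) in
/-- The submodule spanned by the functions attached to products of two Capelli values. -/
def QQ : Submodule F (HH R n) :=
  Submodule.span F {h | ∃ (u' : Fin (n + 1) → R) (x' : Fin n → R) (u : Fin (n + 1) → R) (x : Fin n → R), h = hr n (cap u' x' * cap u x)}

variable (F) in
/-- Trace-like operators. -/
def TH (n : ℕ) (a : R) : HH R n →ₗ[F] HH R n where
  toFun h := fun p => ∑ j, h (p.1, xu p.2 j a)
  map_add' h h' := by funext p; simp [Finset.sum_add_distrib]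
  map_smul' c h := by funext p; simp [Finset.smul_sum]

variable (F) in
/-- Multiplication operators. -/
def MH (n : ℕ) (w : R) : HH R n →ₗ[F] HH R n where
  toFun h := fun p => h (update p.1 0 (w * p.1 0), p.2)
  map_add' h h' := rfl
  map_smul' c h := rfl

theorem hr_add (r s : R) : hr n (r + s) = hr n r + hr n s := by
  funext p; simp [hr, add_mul]

theorem hr_smul (c : F) (r : R) : hr n (c • r) = c • hr n r := by
  funext p; simp [hr]

theorem hr_sum {ι : Type} (s : Finset ι) (f : ι → R) :
    hr n (∑ i ∈ s, f i) = ∑ i ∈ s, hr n (f i) := by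
  funext p; simp [hr, Finset.sum_mul]

theorem MH_hr (w r : R) : MH F n w (hr n r) = hr n (r * w) := by
  funext p
  simp only [MH, hr, LinearMap.coe_mk, AddHom.coe_mk]
  rw [← mul_cap, mul_assoc]

variable (hC : ∀ (u : Fin (n + 2) → R) (x : Fin (n + 1) → R), cap u x = 0)

theorem TH_hr (hC : ∀ (u : Fin (n + 2) → R) (x : Fin (n + 1) → R), cap u x = 0)
    (a s : R) (u : Fin (n + 1) → R) (x : Fin n → R) :
    TH F n a (hr n (s * cap u x)) = hr n (s * dcap a u x) := by
  funext p
  simp only [TH, hr, LinearMap.coe_mk, AddHom.coe_mk, mul_assoc]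
  rw [prod_exchange hC, ← Finset.mul_sum, ← Finset.mul_sum]
  rfl

theorem TH_hr' (hC : ∀ (u : Fin (n + 2) → R) (x : Fin (n + 1) → R), cap u x = 0)
    (a : R) (u' : Fin (n + 1) → R) (x' : Fin n → R) (u : Fin (n + 1) → R)
    (x : Fin n → R) :
    TH F n a (hr n (cap u' x' * cap u x)) = hr n (dcap a u' x' * cap u x) := by
  rw [TH_hr hC, prod_exchange hC]

theorem TH_mem (hC : ∀ (u : Fin (n + 2) → R) (x : Fin (n + 1) → R), cap u x = 0)
    (a : R) : ∀ h ∈ QQ F R n, TH F n a h ∈ QQ F R n := by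
  have : QQ F R n ≤ (QQ F R n).comap (TH F n a) := by
    refine Submodule.span_le.2 ?_
    rintro _ ⟨u', x', u, x, rfl⟩
    change TH F n a _ ∈ QQ F R n
    rw [TH_hr hC, dcap, Finset.mul_sum, hr_sum]
    exact Submodule.sum_mem _ fun i _ => Submodule.subset_span ⟨u', x', u, _, rfl⟩
  exact this

theorem MH_mem (w : R) : ∀ h ∈ QQ F R n, MH F n w h ∈ QQ F R n := by
  have : QQ F R n ≤ (QQ F R n).comap (MH F n w) := by
    refine Submodule.span_le.2 ?_
    rintro _ ⟨u', x', u, x, rfl⟩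
    change MH F n w _ ∈ QQ F R n
    rw [MH_hr, mul_assoc, cap_mul w u x]
    exact Submodule.subset_span ⟨u', x', _, x, rfl⟩
  exact this

theorem QQ_ext {f g : HH R n →ₗ[F] HH R n}
    (h : ∀ (u' : Fin (n + 1) → R) (x' : Fin n → R) (u : Fin (n + 1) → R) (x : Fin n → R),
      f (hr n (cap u' x' * cap u x)) = g (hr n (cap u' x' * cap u x))) :
    ∀ q ∈ QQ F R n, f q = g q := by
  intro q hq
  refine LinearMap.eqOn_span (f := f) (g := g) ?_ hq
  rintro _ ⟨u', x', u, x, rfl⟩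
  exact h u' x' u x

theorem TH_add (hC : ∀ (u : Fin (n + 2) → R) (x : Fin (n + 1) → R), cap u x = 0)
    (a b : R) : ∀ q ∈ QQ F R n, TH F n (a + b) q = TH F n a q + TH F n b q := by
  refine QQ_ext (g := TH F n a + TH F n b) fun u' x' u x => ?_
  rw [LinearMap.add_apply, TH_hr hC, TH_hr hC, TH_hr hC, (dcap_bi u x).map_add, mul_add, hr_add]

theorem TH_smul (hC : ∀ (u : Fin (n + 2) → R) (x : Fin (n + 1) → R), cap u x = 0)
    (c : F) (a : R) : ∀ q ∈ QQ F R n, TH F n (c • a) q = c • TH F n a q := by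
  refine QQ_ext (g := c • TH F n a) fun u' x' u x => ?_
  rw [LinearMap.smul_apply, TH_hr hC, TH_hr hC, (dcap_bi u x).map_smul, mul_smul_comm, hr_smul]

theorem TH_TH (hC : ∀ (u : Fin (n + 2) → R) (x : Fin (n + 1) → R), cap u x = 0)
    (a b : R) : ∀ q ∈ QQ F R n, TH F n a (TH F n b q) = TH F n b (TH F n a q) := by
  refine QQ_ext (f := TH F n a ∘ₗ TH F n b) (g := TH F n b ∘ₗ TH F n a) fun u' x' u x => ?_
  simp only [LinearMap.comp_apply]
  rw [TH_hr' hC, TH_hr hC, TH_hr hC]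
  simp only [dcap, Finset.mul_sum, hr_sum, map_sum]
  refine Finset.sum_congr rfl fun i _ => ?_
  rw [TH_hr' hC]
  simp only [dcap]

theorem MH_add (a b : R) : ∀ q ∈ QQ F R n, MH F n (a + b) q = MH F n a q + MH F n b q := by
  refine QQ_ext (g := MH F n a + MH F n b) fun u' x' u x => ?_
  rw [LinearMap.add_apply, MH_hr, MH_hr, MH_hr, mul_add, hr_add]

theorem MH_smul (c : F) (a : R) : ∀ q ∈ QQ F R n, MH F n (c • a) q = c • MH F n a q := by
  refine QQ_ext (g := c • MH F n a) fun u' x' u x => ?_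
  rw [LinearMap.smul_apply, MH_hr, MH_hr, mul_smul_comm, hr_smul]

variable (F) in
/-- Trace operators on `QQ`. -/
def TQ : R →ₗ[F] Module.End F (QQ F R n) where
  toFun a := (TH F n a).restrict (TH_mem hC a)
  map_add' a b := by
    ext1 q
    exact Subtype.ext (TH_add hC a b q.1 q.2)
  map_smul' c a := by
    ext1 q
    exact Subtype.ext (TH_smul hC c a q.1 q.2)

variable (F R n) in
/-- Multiplication operators on `QQ`. -/
def MQ : R →ₗ[F] Module.End F (QQ F R n) where
  toFun a := (MH F n a).restrict (MH_mem a)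
  map_add' a b := by
    ext1 q
    exact Subtype.ext (MH_add a b q.1 q.2)
  map_smul' c a := by
    ext1 q
    exact Subtype.ext (MH_smul c a q.1 q.2)

theorem TQ_apply (a : R) (q : QQ F R n) (v : Fin (n + 1) → R) (y : Fin n → R) :
    (TQ F hC a q).1 (v, y) = ∑ j, q.1 (v, xu y j a) := rfl

theorem MQ_apply (a : R) (q : QQ F R n) (v : Fin (n + 1) → R) (y : Fin n → R) :
    (MQ F R n a q).1 (v, y) = q.1 (update v 0 (a * v 0), y) := rfl

theorem EE_TQ (hC : ∀ (u : Fin (n + 2) → R) (x : Fin (n + 1) → R), cap u x = 0)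
    (q : QQ F R n) (v : Fin (n + 1) → R) : ∀ (k : ℕ) (l : List R), l.length = k →
    ∀ y : Fin n → R, (EE (TQ F hC) l q).1 (v, y) = Ev Finset.univ l (fun x => q.1 (v, x)) y := by
  intro k
  induction k with
  | zero =>
    intro l hl y
    obtain rfl := List.length_eq_zero_iff.1 hl
    rfl
  | succ k ih =>
    intro l hl y
    cases l with
    | nil => simp at hl
    | cons a l =>
      simp only [List.length_cons, Nat.add_right_cancel_iff] at hl
      let φ : Module.End F (QQ F R n) →+ R :=
        { toFun := fun g => (g q).1 (v, y)
          map_zero' := rfl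
          map_add' := fun _ _ => rfl }
      have h1 : (EE (TQ F hC) (a :: l) q).1 (v, y) =
          (TQ F hC a (EE (TQ F hC) l q)).1 (v, y) - φ (bsum a (EE (TQ F hC)) l) := by
        rw [EE_cons]; rfl
      have h2 : φ (bsum a (EE (TQ F hC)) l) = bsum a (fun l' => φ (EE (TQ F hC) l')) l :=
        bsum_map a φ (EE (TQ F hC)) l
      rw [h1, h2, TQ_apply, Finset.sum_congr rfl fun j _ => ih l hl _, Ev_expand]
      have h3 : bsum a (fun l' => φ (EE (TQ F hC) l')) l =
          bsum a (fun l' => Ev Finset.univ l' (fun x => q.1 (v, x)) y) l :=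
        bsum_congr fun l' hl' => ih l' (hl'.trans hl) y
      rw [h3]
      abel

/-- Weighted evaluation sum. -/
def th (L : List (R × R)) (w : R) : (R → R) →+ R where
  toFun g := (L.map fun p => p.1 * w * g p.2).sum
  map_zero' := by simp
  map_add' g g' := by simp [mul_add, List.sum_map_add]

theorem BB_gen (hC : ∀ (u : Fin (n + 2) → R) (x : Fin (n + 1) → R), cap u x = 0)
    (q : QQ F R n) (Φ : R → Module.End F (QQ F R n)) (L : List (R × R))
    (v : Fin (n + 1) → R) (y : Fin n → R)
    (h : ∀ w l, ((Φ w * EE (TQ F hC) l) q).1 (v, y) =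
      th L w fun β => Ev Finset.univ l (cap (update v 0 (β * v 0))) y) :
    ∀ (k : ℕ) (l : List R), l.length = k → ∀ w, (BB (TQ F hC) Φ l w q).1 (v, y) =
      th L w fun β => bb (update v 0 (β * v 0)) y l := by
  intro k
  induction k with
  | zero =>
    intro l hl w
    obtain rfl := List.length_eq_zero_iff.1 hl
    rw [BB_eq]
    simp only [psum, sub_zero]
    rw [h]
    simp only [Ev_bb hC, psum, add_zero]
  | succ k ih =>
    intro l hl w
    let φ : Module.End F (QQ F R n) →+ R :=
      { toFun := fun g => (g q).1 (v, y)
        map_zero' := rfl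
        map_add' := fun _ _ => rfl }
    have h1 : (BB (TQ F hC) Φ l w q).1 (v, y) = ((Φ w * EE (TQ F hC) l) q).1 (v, y) -
        φ (psum (fun s l' => BB (TQ F hC) Φ l' (w * s)) l) := by
      rw [BB_eq]; rfl
    have h2 : (fun β => Ev Finset.univ l (cap (update v 0 (β * v 0))) y) =
        (fun β => bb (update v 0 (β * v 0)) y l) +
        psum (fun s l' => fun β => s * bb (update v 0 (β * v 0)) y l') l := by
      funext β
      rw [Ev_bb hC, Pi.add_apply]
      congr 1
      exact (psum_map (Pi.evalAddMonoidHom (fun _ : R => R) β)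
        (fun s l' => fun β => s * bb (update v 0 (β * v 0)) y l') l).symm
    have h4 : φ (psum (fun s l' => BB (TQ F hC) Φ l' (w * s)) l) =
        psum (fun s l' => φ (BB (TQ F hC) Φ l' (w * s))) l :=
      psum_map φ (fun s l' => BB (TQ F hC) Φ l' (w * s)) l
    rw [h1, h, h2, map_add, psum_map, h4]
    have h3 : psum (fun s l' => φ (BB (TQ F hC) Φ l' (w * s))) l =
        psum (fun s l' => th L w fun β => s * bb (update v 0 (β * v 0)) y l') l := by
      refine psum_congr fun s l' hp => ?_
      have hlen := hp.length_eq
      simp only [List.length_cons] at hlen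
      have := ih l' (by omega) (w * s)
      refine this.trans ?_
      simp [th, mul_assoc]
    rw [h3, add_sub_cancel_right]

theorem BB_zero (hC : ∀ (u : Fin (n + 2) → R) (x : Fin (n + 1) → R), cap u x = 0)
    (q : QQ F R n) (Φ : R → Module.End F (QQ F R n)) (L : List (R × R))
    (h : ∀ v y w l, ((Φ w * EE (TQ F hC) l) q).1 (v, y) =
      th L w fun β => Ev Finset.univ l (cap (update v 0 (β * v 0))) y) (l : List R)
    (hl : l.length = n) : BB (TQ F hC) Φ l 1 q = 0 := by
  apply Subtype.ext
  funext ⟨v, y⟩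
  rw [BB_gen hC q Φ L v y (h v y) n l hl]
  simp only [bb_long _ _ l hl]
  exact (th L 1).map_zero

theorem QQ_ext' {f g : Module.End F (QQ F R n)}
    (h : ∀ (q : QQ F R n) (u' : Fin (n + 1) → R) (x' : Fin n → R) (u : Fin (n + 1) → R) (x : Fin n → R),
      q.1 = hr n (cap u' x' * cap u x) → f q = g q) : f = g := by
  ext1 ⟨q, hq⟩
  induction hq using Submodule.span_induction with
  | mem x hx =>
    obtain ⟨u', x', u, y, rfl⟩ := hx
    exact h _ u' x' u y rfl
  | zero => exact (f.map_zero).trans (g.map_zero).symm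
  | add x y hx hy h1 h2 =>
    have e : (⟨x + y, add_mem hx hy⟩ : QQ F R n) = ⟨x, hx⟩ + ⟨y, hy⟩ := rfl
    exact (congrArg f e).trans ((f.map_add _ _).trans ((congrArg₂ _ h1 h2).trans
      (g.map_add _ _).symm))
  | smul c x hx h1 =>
    have e : (⟨c • x, Submodule.smul_mem _ c hx⟩ : QQ F R n) = c • ⟨x, hx⟩ := rfl
    exact (congrArg f e).trans ((f.map_smul _ _).trans ((congrArg _ h1).trans
      (g.map_smul _ _).symm))

theorem TQ_comm (hC : ∀ (u : Fin (n + 2) → R) (x : Fin (n + 1) → R), cap u x = 0)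
    (a b : R) : TQ F hC a * TQ F hC b = TQ F hC b * TQ F hC a := by
  ext1 q
  exact Subtype.ext (TH_TH hC a b q.1 q.2)

theorem CH (hC : ∀ (u : Fin (n + 2) → R) (x : Fin (n + 1) → R), cap u x = 0)
    (l : List R) (hl : l.length = n) : BB (TQ F hC) (MQ F R n) l 1 = 0 := by
  refine QQ_ext' fun q u' x' u x hq => ?_
  rw [LinearMap.zero_apply]
  refine BB_zero hC q _ [(cap u' x' * cap u x, 1)] (fun v y w l => ?_) l hl
  change (EE (TQ F hC) l q).1 (update v 0 (w * v 0), y) = _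
  rw [EE_TQ hC q _ _ l rfl, hq]
  simp only [hr, th, AddMonoidHom.coe_mk, ZeroHom.coe_mk, List.map_cons, List.map_nil,
    List.sum_cons, List.sum_nil, add_zero, one_mul, update_eq_self, ← mul_cap]
  simp only [← mul_assoc]
  rw [Ev_mul]

theorem TCH (hC : ∀ (u : Fin (n + 2) → R) (x : Fin (n + 1) → R), cap u x = 0)
    (a c : R) (l : List R) (hl : l.length = n) :
    BB (TQ F hC) (fun w => TQ F hC (a * w * c)) l 1 = 0 := by
  refine QQ_ext' fun q u' x' u x hq => ?_
  rw [LinearMap.zero_apply]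
  obtain ⟨L, hL⟩ := (dcap_bi u x).mul_left (cap u' x')
  refine BB_zero hC q _ (L.map fun p => (p.1 * a, c * p.2)) (fun v y w l => ?_) l hl
  have hcomm : TQ F hC (a * w * c) * EE (TQ F hC) l = EE (TQ F hC) l * TQ F hC (a * w * c) := by
    have := (EE_mem (TQ F hC) (Subring.centralizer (Set.range (TQ F hC)))
      (Subring.centralizer (Set.range (TQ F hC))).toAddSubgroup (fun x hx => hx)
      (fun x hx y hy => Subring.mul_mem _ hx hy) (W := fun _ => Set.univ)
      (fun _ _ _ _ _ _ => trivial) (l.length + 1) (fun _ _ b _ => by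
        rintro _ ⟨d, rfl⟩
        exact TQ_comm hC d b) l.length l rfl l.length
      (Wt_const l fun _ _ => trivial) (by omega)).1
    exact this _ ⟨_, rfl⟩
  rw [hcomm]
  change (EE (TQ F hC) l (TQ F hC (a * w * c) q)).1 (v, y) = _
  rw [EE_TQ hC _ _ _ l rfl]
  have e : (TQ F hC (a * w * c) q).1 = hr n (cap u' x' * dcap (a * w * c) u x) := by
    change TH F n (a * w * c) q.1 = _
    rw [hq, TH_hr hC]
  rw [e]
  have hL' := hL (a * w * c)
  simp only at hL'
  rw [hL']
  clear hL' e hL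
  induction L with
  | nil => simp [hr, th, Ev_zero]
  | cons p L ih =>
    simp only [hr, th, AddMonoidHom.coe_mk, ZeroHom.coe_mk, List.map_cons, List.sum_cons,
      add_mul] at ih ⊢
    rw [Ev_add, ih]
    congr 1
    rw [← Ev_mul]
    congr 1
    funext z
    rw [← mul_cap]
    simp only [mul_assoc]

theorem TQ_nil (hC : ∀ (u : Fin (n + 2) → R) (x : Fin (n + 1) → R), cap u x = 0)
    (z : R) (hz : IsNilpotent z) : IsNilpotent (TQ F hC z) := by
  obtain ⟨e, he⟩ := hz
  have key : ∀ (q : QQ F R n) (v : Fin (n + 1) → R) (N : ℕ) (y : Fin n → R),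
      (∀ k : Fin n → ℕ, ∑ i, k i = N → q.1 (v, fun i => z ^ k i * y i) = 0) →
      ((TQ F hC z ^ N) q).1 (v, y) = 0 := by
    intro q v N
    induction N with
    | zero =>
      intro y h
      have := h (fun _ => 0) (by simp)
      simpa using this
    | succ N ih =>
      intro y h
      rw [pow_succ']
      change (TQ F hC z ((TQ F hC z ^ N) q)).1 (v, y) = 0
      rw [TQ_apply]
      refine Finset.sum_eq_zero fun j _ => ih _ fun k hk => ?_
      have := h (update k j (k j + 1)) (by
        rw [Finset.sum_update_of_mem (Finset.mem_univ j), ← hk,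
          ← Finset.add_sum_erase Finset.univ k (Finset.mem_univ j), Finset.sdiff_singleton_eq_erase]
        omega)
      rw [← this]
      refine congrArg (fun t => q.1 (v, t)) ?_
      funext i
      by_cases hij : i = j
      · subst hij
        simp [xu, pow_succ, mul_assoc]
      · simp [xu, hij]
  have hslot : ∀ q ∈ QQ F R n, ∀ (v : Fin (n + 1) → R) (y : Fin n → R) (i : Fin n), y i = 0 →
      q (v, y) = 0 := by
    intro q hq v y i hi
    induction hq using Submodule.span_induction with
    | mem x hx =>
      obtain ⟨u', x', u, x, rfl⟩ := hx
      simp [hr, cap_zero v y i hi]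
    | zero => rfl
    | add x y _ _ h1 h2 => simp [h1, h2]
    | smul c x _ h1 => simp [h1]
  refine ⟨n * e + 1, ?_⟩
  ext1 q
  apply Subtype.ext
  funext ⟨v, y⟩
  refine key q v _ y fun k hk => ?_
  obtain ⟨i, hi⟩ : ∃ i, e ≤ k i := by
    by_contra hcon
    push Not at hcon
    have : ∑ i, k i ≤ ∑ _i : Fin n, e := Finset.sum_le_sum fun i _ => (hcon i).le
    simp at this
    omega
  refine hslot q.1 q.2 v _ i ?_
  rw [pow_eq_zero_of_le hi he, zero_mul]

theorem concrete (hC : ∀ (u : Fin (n + 2) → R) (x : Fin (n + 1) → R), cap u x = 0)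
    (hfg : Algebra.FiniteType F R) (N : TwoSidedIdeal R)
    (hN : ∀ z ∈ N, IsNilpotent z) : ∃ D : ℕ, ∀ l : List R, l.length = D → (∀ x ∈ l, x ∈ N) →
    ∀ (u' : Fin (n + 1) → R) (x' : Fin n → R) (u : Fin (n + 1) → R) (x : Fin n → R) (v : Fin (n + 1) → R) (y : Fin n → R),
      cap u' x' * cap u x * l.prod * cap v y = 0 := by
  obtain ⟨D, hD⟩ := abstract_nil hfg (TQ F hC) (MQ F R n) (by
      intro a b
      ext1 q
      apply Subtype.ext
      funext ⟨v, y⟩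
      change q.1 _ = q.1 _
      simp [mul_assoc]) (by
      ext1 q
      apply Subtype.ext
      funext ⟨v, y⟩
      change q.1 _ = q.1 _
      simp) (TQ_comm hC) (by
      intro a b
      ext1 q
      rfl) n (CH hC) (TCH hC) (TQ_nil hC) N hN
  refine ⟨D, fun l hl hlN u' x' u x v y => ?_⟩
  have h1 := hD l hl hlN
  have h2 : MH F n l.prod (hr n (cap u' x' * cap u x)) = 0 := congrArg Subtype.val
    (LinearMap.congr_fun h1 ⟨hr n (cap u' x' * cap u x),
      Submodule.subset_span ⟨u', x', u, x, rfl⟩⟩)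
  rw [MH_hr] at h2
  exact congrFun h2 (v, y)

end Concrete

section Final
open Function
variable {R : Type} [Ring R]

theorem map_cap {S : Type} [Ring S] (f : R →+* S) {n : ℕ} (u : Fin (n + 1) → R) (x : Fin n → R) :
    f (cap u x) = cap (fun i => f (u i)) (fun i => f (x i)) := by
  simp only [cap, mon, map_sum, map_zsmul, map_mul, map_list_prod, List.map_ofFn, comp_def]

/-- The ideal generated by Capelli values. -/
def capIdeal (R : Type) [Ring R] (n : ℕ) : TwoSidedIdeal R :=
  TwoSidedIdeal.mk'
    (AddSubgroup.closure {c : R | ∃ (u : Fin (n + 1) → R) (x : Fin n → R), c = cap u x} : Set R)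
    (AddSubgroup.zero_mem _) (fun h h' => AddSubgroup.add_mem _ h h')
    (fun h => AddSubgroup.neg_mem _ h)
    (by
      intro w z hz
      induction hz using AddSubgroup.closure_induction with
      | mem z hz =>
        obtain ⟨u, x, rfl⟩ := hz
        rw [mul_cap]
        exact AddSubgroup.subset_closure ⟨_, _, rfl⟩
      | zero => rw [mul_zero]; exact AddSubgroup.zero_mem _
      | add a b _ _ ha hb => rw [mul_add]; exact AddSubgroup.add_mem _ ha hb
      | neg a _ ha => rw [mul_neg]; exact AddSubgroup.neg_mem _ ha)
    (by
      intro z w hz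
      induction hz using AddSubgroup.closure_induction with
      | mem z hz =>
        obtain ⟨u, x, rfl⟩ := hz
        rw [cap_mul]
        exact AddSubgroup.subset_closure ⟨_, _, rfl⟩
      | zero => rw [zero_mul]; exact AddSubgroup.zero_mem _
      | add a b _ _ ha hb => rw [add_mul]; exact AddSubgroup.add_mem _ ha hb
      | neg a _ ha => rw [neg_mul]; exact AddSubgroup.neg_mem _ ha)

theorem mem_capIdeal {n : ℕ} {z : R} : z ∈ capIdeal R n ↔
    z ∈ AddSubgroup.closure {c : R | ∃ (u : Fin (n + 1) → R) (x : Fin n → R), c = cap u x} := by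
  rw [capIdeal, TwoSidedIdeal.mem_mk']
  rfl

theorem cap_mem {n : ℕ} (u : Fin (n + 1) → R) (x : Fin n → R) : cap u x ∈ capIdeal R n :=
  mem_capIdeal.2 (AddSubgroup.subset_closure ⟨_, _, rfl⟩)

theorem triple {n : ℕ} {p : R} (h : ∀ (u' : Fin (n + 1) → R) (x' : Fin n → R)
    (u : Fin (n + 1) → R) (x : Fin n → R) (v : Fin (n + 1) → R) (y : Fin n → R),
    cap u' x' * cap u x * p * cap v y = 0) {a b c : R} (ha : a ∈ capIdeal R n)
    (hb : b ∈ capIdeal R n) (hc : c ∈ capIdeal R n) : a * b * p * c = 0 := by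
  rw [mem_capIdeal] at ha hb hc
  induction ha using AddSubgroup.closure_induction with
  | zero => simp
  | add a a' _ _ ha ha' => simp [add_mul, ha, ha']
  | neg a _ ha => simp [neg_mul, ha]
  | mem a ha =>
    induction hb using AddSubgroup.closure_induction with
    | zero => simp
    | add a a' _ _ ha ha' => simp [add_mul, mul_add, ha, ha']
    | neg a _ ha => simp [neg_mul, ha]
    | mem b hb =>
      induction hc using AddSubgroup.closure_induction with
      | zero => simp
      | add a a' _ _ ha ha' => simp [mul_add, ha, ha']
      | neg a _ ha => simp [ha]
      | mem c hc =>
        obtain ⟨u', x', rfl⟩ := ha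
        obtain ⟨u, x, rfl⟩ := hb
        obtain ⟨v, y, rfl⟩ := hc
        exact h _ _ _ _ _ _

/-- Image of an ideal under a surjection. -/
def imIdeal {S : Type} [Ring S] (f : R →+* S) (hf : Surjective f) (N : TwoSidedIdeal R) :
    TwoSidedIdeal S :=
  TwoSidedIdeal.mk' {s | ∃ r ∈ N, f r = s}
    ⟨0, N.zero_mem, map_zero f⟩
    (by
      rintro _ _ ⟨a, ha, rfl⟩ ⟨b, hb, rfl⟩
      exact ⟨a + b, N.add_mem ha hb, map_add f a b⟩)
    (by
      rintro _ ⟨a, ha, rfl⟩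
      exact ⟨-a, N.neg_mem ha, map_neg f a⟩)
    (by
      rintro w _ ⟨a, ha, rfl⟩
      obtain ⟨w, rfl⟩ := hf w
      exact ⟨w * a, N.mul_mem_left _ _ ha, map_mul f w a⟩)
    (by
      rintro _ w ⟨a, ha, rfl⟩
      obtain ⟨w, rfl⟩ := hf w
      exact ⟨a * w, N.mul_mem_right _ _ ha, map_mul f a w⟩)

theorem mem_imIdeal {S : Type} [Ring S] (f : R →+* S) (hf : Surjective f) (N : TwoSidedIdeal R)
    (s : S) : s ∈ imIdeal f hf N ↔ ∃ r ∈ N, f r = s := by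
  rw [imIdeal, TwoSidedIdeal.mem_mk']
  rfl

theorem main_claim {F : Type} [Field F] [CharZero F] : ∀ (m : ℕ) (R : Type) [Ring R] [Algebra F R],
    Algebra.FiniteType F R → (∀ (u : Fin (m + 1) → R) (x : Fin m → R), cap u x = 0) →
    ∀ N : TwoSidedIdeal R, (∀ z ∈ N, IsNilpotent z) →
    ∃ s : ℕ, ∀ l : List R, l.length = s → (∀ x ∈ l, x ∈ N) → l.prod = 0 := by
  intro m
  induction m with
  | zero =>
    intro R _ _ _ hC N _
    refine ⟨0, fun l hl _ => ?_⟩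
    have h := hC (fun _ => 1) (fun _ => 1)
    simp [cap, mon] at h
    rw [List.length_eq_zero_iff.1 hl, List.prod_nil, h]
  | succ n ih =>
    intro R _ _ hfg hC N hN
    obtain ⟨D, hD⟩ := concrete hC hfg N hN
    let J := capIdeal R n
    let f : R →+* J.ringCon.Quotient := J.ringCon.mk'
    have hf : Surjective f := J.ringCon.mk'_surjective
    have hk : ∀ z, f z = 0 ↔ z ∈ J := fun z => by
      rw [← TwoSidedIdeal.mem_ker, TwoSidedIdeal.ker_ringCon_mk']
    have hfg' : Algebra.FiniteType F J.ringCon.Quotient :=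
      Algebra.FiniteType.of_surjective (J.ringCon.mkₐ F) (J.ringCon.mkₐ_surjective)
    obtain ⟨s, hs⟩ := ih J.ringCon.Quotient hfg' (by
      intro u x
      choose u' hu' using fun i => hf (u i)
      choose x' hx' using fun i => hf (x i)
      have h := map_cap f u' x'
      simp only [hu', hx'] at h
      rw [← h, hk]
      exact cap_mem _ _) (imIdeal f hf N) (by
      intro z hz
      obtain ⟨r, hr, rfl⟩ := (mem_imIdeal _ _ _ _).1 hz
      exact (hN r hr).map f)
    have key : ∀ l : List R, l.length = s → (∀ x ∈ l, x ∈ N) → l.prod ∈ J := by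
      intro l hl hlN
      rw [← hk, map_list_prod]
      apply hs _ (by simpa using hl)
      intro x hx
      obtain ⟨r, hr, rfl⟩ := List.mem_map.1 hx
      exact (mem_imIdeal _ _ _ _).2 ⟨r, hlN r hr, rfl⟩
    refine ⟨s + (s + (D + s)), fun l hl hlN => ?_⟩
    obtain ⟨l1, l', rfl, h1, hl⟩ : ∃ l1 l', l = l1 ++ l' ∧ l1.length = s ∧ l'.length = s + (D + s) :=
      ⟨l.take s, l.drop s, (List.take_append_drop _ _).symm, by simp [hl], by simp [hl]⟩
    obtain ⟨l2, l', rfl, h2, hl⟩ : ∃ l1 l'', l' = l1 ++ l'' ∧ l1.length = s ∧ l''.length = D + s :=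
      ⟨l'.take s, l'.drop s, (List.take_append_drop _ _).symm, by simp [hl], by simp [hl]⟩
    obtain ⟨l3, l4, rfl, h3, h4⟩ : ∃ l1 l'', l' = l1 ++ l'' ∧ l1.length = D ∧ l''.length = s :=
      ⟨l'.take D, l'.drop D, (List.take_append_drop _ _).symm, by simp [hl], by simp [hl]⟩
    simp only [List.mem_append] at hlN
    have := triple (hD l3 h3 fun x hx => hlN x (by tauto)) (key l1 h1 fun x hx => hlN x (by tauto))
      (key l2 h2 fun x hx => hlN x (by tauto)) (key l4 h4 fun x hx => hlN x (by tauto))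
    simpa [mul_assoc] using this

/-- Sum of two ideals. -/
def addIdeal (I K : TwoSidedIdeal R) : TwoSidedIdeal R :=
  TwoSidedIdeal.mk' {x | ∃ a ∈ I, ∃ b ∈ K, a + b = x}
    ⟨0, I.zero_mem, 0, K.zero_mem, add_zero _⟩
    (by
      rintro _ _ ⟨a, ha, b, hb, rfl⟩ ⟨c, hc, d, hd, rfl⟩
      exact ⟨a + c, I.add_mem ha hc, b + d, K.add_mem hb hd, by abel⟩)
    (by
      rintro _ ⟨a, ha, b, hb, rfl⟩
      exact ⟨-a, I.neg_mem ha, -b, K.neg_mem hb, by abel⟩)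
    (by
      rintro w _ ⟨a, ha, b, hb, rfl⟩
      exact ⟨w * a, I.mul_mem_left _ _ ha, w * b, K.mul_mem_left _ _ hb, (mul_add _ _ _).symm⟩)
    (by
      rintro _ w ⟨a, ha, b, hb, rfl⟩
      exact ⟨a * w, I.mul_mem_right _ _ ha, b * w, K.mul_mem_right _ _ hb, (add_mul _ _ _).symm⟩)

theorem mem_addIdeal (I K : TwoSidedIdeal R) (x : R) :
    x ∈ addIdeal I K ↔ ∃ a ∈ I, ∃ b ∈ K, a + b = x := by
  rw [addIdeal, TwoSidedIdeal.mem_mk']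
  rfl

theorem addIdeal_nil (I K : TwoSidedIdeal R) (hI : ∀ x ∈ I, IsNilpotent x)
    (hK : ∀ x ∈ K, IsNilpotent x) : ∀ x ∈ addIdeal I K, IsNilpotent x := by
  intro x hx
  obtain ⟨a, ha, b, hb, rfl⟩ := (mem_addIdeal _ _ _).1 hx
  have h : ∀ k : ℕ, (a + b) ^ k - a ^ k ∈ K := by
    intro k
    induction k with
    | zero => simpa using K.zero_mem
    | succ k ih =>
      have : (a + b) ^ (k + 1) - a ^ (k + 1) = ((a + b) ^ k - a ^ k) * a + (a + b) ^ k * b := by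
        rw [pow_succ, pow_succ]; noncomm_ring
      rw [this]
      exact K.add_mem (K.mul_mem_right _ _ ih) (K.mul_mem_left _ _ hb)
  obtain ⟨k, hk⟩ := hI a ha
  have h1 := h k
  rw [hk, sub_zero] at h1
  obtain ⟨j, hj⟩ := hK _ h1
  exact ⟨k * j, by rw [pow_mul, hj]⟩

/-- Union of the nil ideals. -/
def nilUnion (R : Type) [Ring R] : TwoSidedIdeal R :=
  TwoSidedIdeal.mk' {x | ∃ I : TwoSidedIdeal R, (∀ y ∈ I, IsNilpotent y) ∧ x ∈ I}
    ⟨⊥, by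
      intro y hy
      rw [(TwoSidedIdeal.mem_bot R).1 hy]
      exact IsNilpotent.zero, TwoSidedIdeal.zero_mem _⟩
    (by
      rintro x y ⟨I, hI, hx⟩ ⟨K, hK, hy⟩
      exact ⟨addIdeal I K, addIdeal_nil I K hI hK, (mem_addIdeal _ _ _).2 ⟨x, hx, y, hy, rfl⟩⟩)
    (by
      rintro x ⟨I, hI, hx⟩
      exact ⟨I, hI, I.neg_mem hx⟩)
    (by
      rintro w x ⟨I, hI, hx⟩
      exact ⟨I, hI, I.mul_mem_left _ _ hx⟩)
    (by
      rintro x w ⟨I, hI, hx⟩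
      exact ⟨I, hI, I.mul_mem_right _ _ hx⟩)

theorem mem_nilUnion (x : R) :
    x ∈ nilUnion R ↔ ∃ I : TwoSidedIdeal R, (∀ y ∈ I, IsNilpotent y) ∧ x ∈ I := by
  rw [nilUnion, TwoSidedIdeal.mem_mk']
  rfl

theorem sSup_nil : ∀ x ∈ sSup {I : TwoSidedIdeal R | ∀ y ∈ I, IsNilpotent y}, IsNilpotent x := by
  intro x hx
  have hle : sSup {I : TwoSidedIdeal R | ∀ y ∈ I, IsNilpotent y} ≤ nilUnion R := by
    refine sSup_le fun I hI => ?_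
    rw [TwoSidedIdeal.le_iff]
    intro y hy
    exact (mem_nilUnion y).2 ⟨I, hI, hy⟩
  obtain ⟨I, hI, hxI⟩ := (mem_nilUnion x).1 (TwoSidedIdeal.le_iff.1 hle hx)
  exact hI x hxI

end Final

end Raz

/-- **Razmyslov's theorem.** Let `F` be a field of characteristic `0` and let `R` be a
finitely generated `F`-algebra satisfying the Capelli identity `C_m` for some `m`. Then the
nil radical of `R` — the sum `N` (i.e. supremum) of all nil two-sided ideals of `R` — is a
nil ideal, and it is nilpotent: there is `s ≥ 1` such that every product of `s` elements of
`N` vanishes (`N ^ s = 0`). -/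
theorem razmyslov_nil_radical_nilpotent (F : Type) [Field F] [CharZero F]
    (R : Type) [Ring R] [Algebra F R] (hfg : Algebra.FiniteType F R)
    (m : ℕ) (hm : 1 ≤ m)
    (hCap : ∀ (y : Fin (m + 1) → R) (x : Fin m → R),
      ∑ σ : Equiv.Perm (Fin m),
        ((Equiv.Perm.sign σ : ℤˣ) : ℤ) •
          (y 0 * (List.ofFn fun i : Fin m => x (σ i) * y i.succ).prod) = 0) :
    (∀ x ∈ sSup {I : TwoSidedIdeal R | ∀ y ∈ I, IsNilpotent y}, IsNilpotent x) ∧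
    ∃ s : ℕ, 1 ≤ s ∧ ∀ f : Fin s → R,
      (∀ i, f i ∈ sSup {I : TwoSidedIdeal R | ∀ y ∈ I, IsNilpotent y}) →
      (List.ofFn f).prod = 0 := by
  refine ⟨Raz.sSup_nil, ?_⟩
  obtain ⟨s, hs⟩ := Raz.main_claim m R hfg hCap _ Raz.sSup_nil
  refine ⟨s + 1, Nat.succ_le_succ (Nat.zero_le s), fun f hf => ?_⟩
  rw [List.ofFn_succ, List.prod_cons, hs _ (List.length_ofFn), mul_zero]
  intro x hx
  obtain ⟨i, rfl⟩ := (List.mem_ofFn' _ _).1 hx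
  exact hf _
end

section
/- Let F be a field (of arbitrary characteristic) and let R be a finitely generated F-algebra satisfying a nonzero polynomial identity. Then the nil radical of R is nilpotent: the sum N of all nil two-sided ideals of R satisfies N^s = 0 for some integer s ≥ 1. (Razmyslov–Braun–Kemer theorem.) -/
namespace RBK

open MvPolynomial

section Slots

variable {C R : Type} [CommRing C] [Ring R] [Algebra C R]

/-- `u ^ a₀ y₀ u ^ a₁ y₁ ⋯ y_{m-1} u ^ a_m`. -/
def slotMon (u : R) : (m : ℕ) → (Fin m → R) → (Fin (m + 1) → ℕ) → R
  | 0, _, a => u ^ a 0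
  | m + 1, y, a => u ^ a 0 * y 0 * slotMon u m (fun i => y i.succ) (fun i => a i.succ)

/-- Linear extension of `slotMon` to polynomials. -/
noncomputable def slot (C : Type) {R : Type} [CommRing C] [Ring R] [Algebra C R]
    (u : R) (m : ℕ) (y : Fin m → R) : MvPolynomial (Fin (m + 1)) C →ₗ[C] R :=
  (basisMonomials (Fin (m + 1)) C).constr C (fun a => slotMon u m y a)

lemma slot_monomial (u : R) (m : ℕ) (y : Fin m → R) (a : Fin (m + 1) →₀ ℕ) :
    slot C u m y (monomial a 1) = slotMon u m y a := by
  have := (basisMonomials (Fin (m + 1)) C).constr_basis C (fun a => slotMon u m y a) a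
  simpa [slot] using this

lemma linmap_ext {σ M : Type} [AddCommGroup M] [Module C M] (f g : MvPolynomial σ C →ₗ[C] M)
    (h : ∀ a, f (monomial a 1) = g (monomial a 1)) : f = g := by
  apply (basisMonomials σ C).ext
  intro a
  simpa using h a

lemma slotMon_left (u : R) (m : ℕ) (y : Fin m → R) (a : Fin (m + 1) → ℕ) (j : Fin m) :
    slotMon u m y (fun i => a i + (if i = j.castSucc then 1 else 0))
      = slotMon u m (Function.update y j (u * y j)) a := by
  induction m with
  | zero => exact j.elim0
  | succ m ih =>
    refine Fin.cases ?_ (fun j => ?_) j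
    · simp [slotMon, pow_succ, mul_assoc]
    · have := ih (fun i => y i.succ) (fun i => a i.succ) j
      simp only [slotMon]
      have h1 : (fun i : Fin (m+1) => a i.succ + if i.succ = (j.succ).castSucc then 1 else 0)
          = (fun i => a i.succ + if i = j.castSucc then 1 else 0) := by
        funext i; simp [Fin.castSucc_succ]
      have h2 : (fun i => Function.update y j.succ (u * y j.succ) i.succ)
        = Function.update (fun i => y i.succ) j (u * y j.succ) := by
        funext i
        by_cases h : i = j <;> simp [Function.update, h]
      rw [h1, h2, this]
      simp [Fin.castSucc_succ, Function.update, (Fin.succ_ne_zero _).symm]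

lemma slotMon_right (u : R) (m : ℕ) (y : Fin m → R) (a : Fin (m + 1) → ℕ) (j : Fin m) :
    slotMon u m y (fun i => a i + (if i = j.succ then 1 else 0))
      = slotMon u m (Function.update y j (y j * u)) a := by
  induction m with
  | zero => exact j.elim0
  | succ m ih =>
    refine Fin.cases ?_ (fun j => ?_) j
    · cases m with
      | zero => simp [slotMon, pow_succ', mul_assoc]
      | succ m =>
        have e1 : ∀ i : Fin (m + 1), ¬ (i.succ.succ = Fin.succ (0 : Fin (m + 2))) := by
          intro i hi
          exact Fin.succ_ne_zero _ (Fin.succ_injective _ hi)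
        have e2 : ¬ ((0 : Fin (m + 3)) = Fin.succ 0) := (Fin.succ_ne_zero _).symm
        have e3 : (fun i : Fin m => Function.update y 0 (y 0 * u) i.succ.succ)
            = fun i => y i.succ.succ := by
          funext i; simp [Function.update]
        have e4 : Function.update y 0 (y 0 * u) (Fin.succ 0) = y (Fin.succ 0) := by
          simp [Function.update]
        simp only [slotMon, e1, e2, e3, e4, if_false, if_true, add_zero, pow_succ',
          Function.update_self, mul_assoc]
    · have := ih (fun i => y i.succ) (fun i => a i.succ) j
      simp only [slotMon]
      have h2 : (fun i => Function.update y j.succ (y j.succ * u) i.succ)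
        = Function.update (fun i => y i.succ) j (y j.succ * u) := by
        funext i
        by_cases h : i = j <;> simp [Function.update, h]
      simp only [Fin.succ_inj]
      rw [h2, this]
      simp [Function.update, (Fin.succ_ne_zero _).symm]

lemma slot_mul_X_left (u : R) (m : ℕ) (y : Fin m → R) (j : Fin m)
    (p : MvPolynomial (Fin (m + 1)) C) :
    slot C u m y (p * X j.castSucc) = slot C u m (Function.update y j (u * y j)) p := by
  have : (slot C u m y) ∘ₗ (LinearMap.mulRight C (X j.castSucc))
      = slot C u m (Function.update y j (u * y j)) := by
    apply linmap_ext
    intro a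
    simp only [LinearMap.comp_apply, LinearMap.mulRight_apply, X, monomial_mul, mul_one,
      slot_monomial]
    rw [← slotMon_left]
    congr 1
    funext i
    simp [Finsupp.single_apply, eq_comm]
  exact LinearMap.congr_fun this p

lemma slot_mul_X_right (u : R) (m : ℕ) (y : Fin m → R) (j : Fin m)
    (p : MvPolynomial (Fin (m + 1)) C) :
    slot C u m y (p * X j.succ) = slot C u m (Function.update y j (y j * u)) p := by
  have : (slot C u m y) ∘ₗ (LinearMap.mulRight C (X j.succ))
      = slot C u m (Function.update y j (y j * u)) := by
    apply linmap_ext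
    intro a
    simp only [LinearMap.comp_apply, LinearMap.mulRight_apply, X, monomial_mul, mul_one,
      slot_monomial]
    rw [← slotMon_right]
    congr 1
    funext i
    simp [Finsupp.single_apply, eq_comm]
  exact LinearMap.congr_fun this p

lemma slot_cons (u v : R) (m : ℕ) (y : Fin m → R) (k : ℕ)
    (p : MvPolynomial (Fin (m + 1)) C) :
    slot C u (m + 1) (Fin.cons v y) (X 0 ^ k * rename Fin.succ p)
      = u ^ k * v * slot C u m y p := by
  have : (slot C u (m + 1) (Fin.cons v y)) ∘ₗ (LinearMap.mulLeft C (X 0 ^ k)) ∘ₗ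
        (rename Fin.succ : MvPolynomial (Fin (m + 1)) C →ₐ[C] _).toLinearMap
      = (LinearMap.mulLeft C (u ^ k * v)) ∘ₗ slot C u m y := by
    apply linmap_ext
    intro a
    simp only [LinearMap.comp_apply, LinearMap.mulLeft_apply, AlgHom.toLinearMap_apply,
      rename_monomial, X_pow_eq_monomial, monomial_mul, mul_one, slot_monomial, slotMon]
    have h0 : (Finsupp.mapDomain Fin.succ a) (0 : Fin (m + 2)) = 0 := by
      apply Finsupp.mapDomain_of_notMem_range
      simp
    have h1 : ∀ i : Fin (m + 1), (Finsupp.mapDomain Fin.succ a) i.succ = a i := fun i =>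
      Finsupp.mapDomain_apply (Fin.succ_injective _) _ _
    simp [h0, h1]
  exact LinearMap.congr_fun this p

lemma slot_one (u : R) (m : ℕ) (y : Fin m → R) : slot C u m y 1 = (List.ofFn y).prod := by
  have : (1 : MvPolynomial (Fin (m + 1)) C) = monomial 0 1 := rfl
  rw [this, slot_monomial]
  induction m with
  | zero => simp [slotMon]
  | succ m ih => 
    have := ih (fun i => y i.succ) rfl
    simp only [slotMon, Finsupp.coe_zero, Pi.zero_apply, pow_zero, one_mul, List.ofFn_succ,
      List.prod_cons]
    rw [← this]; rfl

/-- A multilinear identity. -/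
def MLI (C R : Type) [CommRing C] [Ring R] [Algebra C R] (d : ℕ)
    (α : Equiv.Perm (Fin d) → C) : Prop :=
  ∀ x : Fin d → R, ∑ σ, α σ • (List.ofFn (x ∘ σ)).prod = 0

/-- position of the variables -/
def pos {d : ℕ} (σ : Equiv.Perm (Fin d)) : Fin d ⊕ Fin d → Fin (d + 1) :=
  Sum.elim (fun i => (σ.symm i).castSucc) (fun i => (σ.symm i).succ)

lemma mli_slot {d : ℕ} {α : Equiv.Perm (Fin d) → C} (h : MLI C R d α) (u : R)
    (g : MvPolynomial (Fin d ⊕ Fin d) C) : ∀ y : Fin d → R,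
    ∑ σ, α σ • slot C u d (y ∘ σ) (rename (pos σ) g) = 0 := by
  induction g using MvPolynomial.induction_on with
  | C c =>
    intro y
    have h1 : ∀ σ, α σ • slot C u d (y ∘ σ) (rename (pos σ) (MvPolynomial.C c))
        = c • (α σ • (List.ofFn (y ∘ σ)).prod) := by
      intro σ
      rw [rename_C, ← mul_one (MvPolynomial.C c), ← smul_eq_C_mul, map_smul, slot_one,
        smul_comm]
    simp_rw [h1]
    rw [← Finset.smul_sum, h y, smul_zero]
  | add p q hp hq =>
    intro y
    simp only [map_add, smul_add, Finset.sum_add_distrib, hp y, hq y, add_zero]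
  | mul_X p i hp =>
    intro y
    rcases i with i | i
    · rw [← hp (Function.update y i (u * y i))]
      refine Finset.sum_congr rfl fun σ _ => ?_
      rw [map_mul, rename_X, Function.update_comp_equiv]
      simp only [pos, Sum.elim_inl]
      rw [slot_mul_X_left]
      simp
    · rw [← hp (Function.update y i (y i * u))]
      refine Finset.sum_congr rfl fun σ _ => ?_
      rw [map_mul, rename_X, Function.update_comp_equiv]
      simp only [pos, Sum.elim_inr]
      rw [slot_mul_X_right]
      simp

/-- the polynomials `p_m = ∏_{j + 2 ≤ i} (t_j - t_i)` -/
noncomputable def pp (C : Type) [CommRing C] : (m : ℕ) → MvPolynomial (Fin (m + 1)) C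
  | 0 => 1
  | m + 1 => (∏ i : Fin m, (X 0 - X i.succ.succ)) * rename Fin.succ (pp C m)

lemma pp_eq (m : ℕ) : pp C m = ∏ k : Fin m, ∏ i : Fin m,
    if k < i then (X k.castSucc - X i.succ : MvPolynomial (Fin (m + 1)) C) else 1 := by
  induction m with
  | zero => simp [pp]
  | succ m ih =>
    rw [pp, ih, Fin.prod_univ_succ, Fin.prod_univ_succ]
    simp only [map_prod, Fin.prod_univ_succ (n := m), lt_self_iff_false, if_false, one_mul,
      Fin.succ_pos, if_true, Fin.castSucc_zero, Fin.not_lt_zero, Fin.succ_lt_succ_iff]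
    congr 1
    refine Finset.prod_congr rfl fun k _ => Finset.prod_congr rfl fun i _ => ?_
    split_ifs <;> simp [Fin.castSucc_succ]

lemma perm_descent {d : ℕ} (σ : Equiv.Perm (Fin d)) (hσ : σ ≠ 1) :
    ∃ j : ℕ, ∃ h : j + 1 < d, σ ⟨j + 1, h⟩ < σ ⟨j, by omega⟩ := by
  by_contra hcon
  push Not at hcon
  apply hσ
  have hmono : StrictMono σ := by
    cases d with
    | zero => intro a; exact a.elim0
    | succ d =>
      rw [Fin.strictMono_iff_lt_succ]
      intro i
      have := hcon i (by omega)
      refine lt_of_le_of_ne this ?_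
      intro h
      have := σ.injective h
      simp [Fin.ext_iff] at this
  ext i
  have h2 : (σ.toOrderIso hmono.monotone (by
    intro a b hab
    by_contra hc
    push Not at hc
    have := hmono hc
    simp at this
    exact absurd hab (not_le.mpr this))) = OrderIso.refl (Fin d) := Subsingleton.elim _ _
  have h3 : σ i = i := congrArg (fun e => e i) h2
  rw [h3]; rfl

lemma slot_pp {d : ℕ} {α : Equiv.Perm (Fin d) → C} (h : MLI C R d α) (h1 : α 1 = 1) (u : R)
    (hd : 0 < d)
    (y : Fin d → R) (q : MvPolynomial (Fin (d + 1)) C) : slot C u d y (q * pp C d) = 0 := by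
  obtain ⟨d, rfl⟩ : ∃ e, d = e + 1 := ⟨d - 1, by omega⟩
  set g : MvPolynomial (Fin (d+1) ⊕ Fin (d+1)) C := ∏ k, ∏ i,
    if k < i then X (Sum.inl k) - X (Sum.inr i) else 1 with hg
  set q' : MvPolynomial (Fin (d+1) ⊕ Fin (d+1)) C :=
    rename (Fin.cases (Sum.inl 0) (fun i => Sum.inr i)) q with hq'
  have hs : Equiv.symm (1 : Equiv.Perm (Fin (d + 1))) = 1 := rfl
  have key := mli_slot h u (q' * g) y
  rw [Finset.sum_eq_single 1] at key
  · rw [h1, one_smul, map_mul] at key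
    have e1 : rename (pos (1 : Equiv.Perm (Fin (d+1)))) q' = q := by
      rw [hq', rename_rename]
      convert rename_id_apply q
      funext i
      refine Fin.cases ?_ (fun i => ?_) i
      · simp [pos, hs]
      · simp [pos, hs]
    have e2 : rename (pos (1 : Equiv.Perm (Fin (d+1)))) g = pp C (d+1) := by
      rw [hg, pp_eq]
      simp only [map_prod]
      refine Finset.prod_congr rfl fun k _ => Finset.prod_congr rfl fun i _ => ?_
      split_ifs <;> simp [pos, hs]
    rw [e1, e2] at key
    exact key
  · intro σ _ hσ
    obtain ⟨j, hj, hlt⟩ := perm_descent σ hσ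
    have : rename (pos σ) g = 0 := by
      rw [hg]
      simp only [map_prod]
      refine Finset.prod_eq_zero (Finset.mem_univ (σ ⟨j + 1, hj⟩)) ?_
      refine Finset.prod_eq_zero (Finset.mem_univ (σ ⟨j, by omega⟩)) ?_
      rw [if_pos hlt]
      simp [pos]
    rw [map_mul, this, mul_zero, map_zero, smul_zero]
  · simp

end Slots


section Step

open TensorProduct

variable {C R : Type} [CommRing C] [Ring R] [Algebra C R]

/-- the monic polynomial `X ^ (d - m) * ∏ (X - t_{i+1})` -/
noncomputable def DD (C : Type) [CommRing C] (d m : ℕ) :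
    Polynomial (MvPolynomial (Fin (m + 1)) C) :=
  Polynomial.X ^ (d - m) * ∏ i : Fin m, (Polynomial.X - Polynomial.C (X i.succ))

lemma DD_sum (d m : ℕ) (hm : m ≤ d) :
    (X 0 : MvPolynomial (Fin (m + 2)) C) ^ d
      + ∑ k : Fin d, X 0 ^ (k : ℕ) * rename Fin.succ ((DD C d m).coeff k)
    = X 0 ^ (d - m) * ∏ i : Fin m, (X 0 - X i.succ.succ) := by
  nontriviality C
  have hmon2 : (∏ i : Fin m, (Polynomial.X - Polynomial.C
      (X i.succ : MvPolynomial (Fin (m + 1)) C))).Monic :=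
    Polynomial.monic_prod_of_monic _ _ fun i _ => Polynomial.monic_X_sub_C _
  have hmon : (DD C d m).Monic := (Polynomial.monic_X_pow _).mul hmon2
  have hdeg : (DD C d m).natDegree = d := by
    rw [DD, (Polynomial.monic_X_pow _).natDegree_mul hmon2, Polynomial.natDegree_X_pow,
      Polynomial.natDegree_prod_of_monic _ _ fun i _ => Polynomial.monic_X_sub_C _]
    simp
    omega
  have h := Polynomial.eval₂_eq_sum_range (p := DD C d m)
    (rename Fin.succ : MvPolynomial (Fin (m + 1)) C →ₐ[C] MvPolynomial (Fin (m + 2)) C).toRingHom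
    (X 0)
  rw [hdeg, Finset.sum_range_succ] at h
  have hl : (DD C d m).coeff d = 1 := by
    have := hmon.coeff_natDegree
    rwa [hdeg] at this
  rw [hl, map_one, one_mul, Finset.sum_range] at h
  have h2 : Polynomial.eval₂ (rename Fin.succ : MvPolynomial (Fin (m + 1)) C →ₐ[C]
      MvPolynomial (Fin (m + 2)) C).toRingHom (X 0) (DD C d m)
      = X 0 ^ (d - m) * ∏ i : Fin m, (X 0 - X i.succ.succ) := by
    rw [DD, Polynomial.eval₂_mul, Polynomial.eval₂_pow, Polynomial.eval₂_X,
      Polynomial.eval₂_finsetProd]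
    simp
  rw [← h2, h]
  rw [add_comm (∑ i : Fin d, _ * _)]
  refine congrArg (fun z => (X 0 : MvPolynomial (Fin (m + 2)) C) ^ d + z) ?_
  refine Finset.sum_congr rfl fun k _ => ?_
  exact mul_comm _ _

/-- the linear functional `Φ` -/
noncomputable def Phi (u : R) (d m : ℕ) (y : Fin m → R) (s : MvPolynomial (Fin (m + 1)) C) :
    (MvPolynomial (Fin d) C) ⊗[C] R →ₗ[C] R :=
  TensorProduct.lift (LinearMap.mk₂ C
    (fun c w => w * slot C u m y (aeval (fun k : Fin d => (DD C d m).coeff k) c * s))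
    (by intro a b w; rw [map_add, add_mul, map_add, mul_add])
    (by intro c a w; rw [map_smul, smul_mul_assoc, map_smul, mul_smul_comm])
    (by intro a v w; rw [add_mul])
    (by intro c a w; rw [smul_mul_assoc]))

lemma Phi_tmul (u : R) (d m : ℕ) (y : Fin m → R) (s : MvPolynomial (Fin (m + 1)) C)
    (c : MvPolynomial (Fin d) C) (w : R) :
    Phi u d m y s (c ⊗ₜ w)
      = w * slot C u m y (aeval (fun k : Fin d => (DD C d m).coeff k) c * s) := by
  simp [Phi]

/-- the generic monic polynomial at `u` -/
noncomputable def chi (C : Type) {R : Type} [CommRing C] [Ring R] [Algebra C R] (u : R) (d : ℕ) :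
    (MvPolynomial (Fin d) C) ⊗[C] R :=
  1 ⊗ₜ (u ^ d) + ∑ k : Fin d, (X k) ⊗ₜ (u ^ (k : ℕ))

/-- the two-sided ideal generated by `chi` -/
noncomputable def LL (C : Type) {R : Type} [CommRing C] [Ring R] [Algebra C R] (u : R) (d : ℕ) :
    Ideal ((MvPolynomial (Fin d) C) ⊗[C] R) :=
  Ideal.span (Set.range fun v => chi C u d * v)

instance (u : R) (d : ℕ) : (LL C u d).IsTwoSided := by
  constructor
  intro a b ha
  refine Submodule.span_induction (p := fun x _ => x * b ∈ LL C u d) ?_ ?_ ?_ ?_ ha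
  · rintro _ ⟨v, rfl⟩
    apply Ideal.subset_span
    exact ⟨v * b, by simp [mul_assoc]⟩
  · simp
  · intro x y _ _ hx hy
    rw [add_mul]
    exact Ideal.add_mem _ hx hy
  · intro c x _ hx
    rw [smul_eq_mul, mul_assoc]
    exact Ideal.mul_mem_left _ _ hx

/-- the left ideals `J_m` -/
noncomputable def JJ (C : Type) {R : Type} [CommRing C] [Ring R] [Algebra C R] (u : R) (m : ℕ) :
    Ideal R :=
  Ideal.span {x | ∃ (y : Fin m → R) (q : MvPolynomial (Fin (m + 1)) C),
    x = slot C u m y (q * pp C m)}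

lemma Phi_chi (u : R) (d m : ℕ) (hm : m ≤ d) (y : Fin m → R) (q : MvPolynomial (Fin (m + 1)) C)
    (w v : (MvPolynomial (Fin d) C) ⊗[C] R) :
    Phi u d m y (q * pp C m) (w * (chi C u d * v)) ∈ JJ C u (m + 1) := by
  induction w using TensorProduct.induction_on with
  | zero => simp
  | add x z hx hz => rw [add_mul, map_add]; exact Ideal.add_mem _ hx hz
  | tmul c a =>
    induction v using TensorProduct.induction_on with
    | zero => simp
    | add x z hx hz => rw [mul_add, mul_add, map_add]; exact Ideal.add_mem _ hx hz
    | tmul c' b =>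
      set E := aeval (R := C) (fun k : Fin d => (DD C d m).coeff k) with hE
      have key : Phi u d m y (q * pp C m) (c ⊗ₜ a * (chi C u d * c' ⊗ₜ b))
          = a * slot C u (m + 1) (Fin.cons b y)
            ((X 0 ^ (d - m) * rename Fin.succ (E (c * c') * q)) * pp C (m + 1)) := by
        have e1 : c ⊗ₜ[C] a * (chi C u d * c' ⊗ₜ b)
            = (c * c') ⊗ₜ (a * u ^ d * b)
              + ∑ k : Fin d, (X k * (c * c')) ⊗ₜ (a * u ^ (k : ℕ) * b) := by
          rw [chi, add_mul, mul_add, Finset.sum_mul, Finset.mul_sum]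
          simp only [Algebra.TensorProduct.tmul_mul_tmul, one_mul, mul_assoc, mul_left_comm]
        have e2 : (X 0 ^ (d - m) * rename Fin.succ (E (c * c') * q)) * pp C (m + 1)
            = X 0 ^ d * rename Fin.succ (E (c * c') * (q * pp C m))
              + ∑ k : Fin d, X 0 ^ (k : ℕ) *
                rename Fin.succ (E (X k * (c * c')) * (q * pp C m)) := by
          have e3 : ∀ k : Fin d, X 0 ^ (k : ℕ) *
                rename Fin.succ (E (X k * (c * c')) * (q * pp C m))
              = (X 0 ^ (k : ℕ) * rename Fin.succ ((DD C d m).coeff k)) *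
                rename Fin.succ (E (c * c') * (q * pp C m)) := by
            intro k
            have : E (X k) = (DD C d m).coeff k := by simp [hE]
            rw [map_mul E, this]
            simp only [map_mul]
            ring
          simp_rw [e3]
          rw [← Finset.sum_mul, ← add_mul, DD_sum d m hm, pp]
          simp only [map_mul]
          ring
        rw [e1, e2, map_add, map_add, map_sum, map_sum, Phi_tmul, slot_cons, mul_add,
          Finset.mul_sum]
        congr 1
        · simp only [mul_assoc, hE]
        · refine Finset.sum_congr rfl fun k _ => ?_
          rw [Phi_tmul, slot_cons]
          simp only [mul_assoc, hE]
      rw [key]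
      exact Ideal.mul_mem_left _ _ (Ideal.subset_span ⟨_, _, rfl⟩)

lemma Phi_LL (u : R) (d m : ℕ) (hm : m ≤ d) (y : Fin m → R) (q : MvPolynomial (Fin (m + 1)) C)
    (x : (MvPolynomial (Fin d) C) ⊗[C] R) (hx : x ∈ LL C u d) :
    Phi u d m y (q * pp C m) x ∈ JJ C u (m + 1) := by
  have : ∀ w, Phi u d m y (q * pp C m) (w * x) ∈ JJ C u (m + 1) := by
    refine Submodule.span_induction (p := fun x _ =>
      ∀ w, Phi u d m y (q * pp C m) (w * x) ∈ JJ C u (m + 1)) ?_ ?_ ?_ ?_ hx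
    · rintro _ ⟨v, rfl⟩ w
      exact Phi_chi u d m hm y q w v
    · simp
    · intro x y _ _ hx hy w
      rw [mul_add, map_add]
      exact Ideal.add_mem _ (hx w) (hy w)
    · intro c x _ hx w
      rw [smul_eq_mul, ← mul_assoc]
      exact hx _
  simpa using this 1

/-- Adjoining formally the coefficients of a monic polynomial killing `u`
has nilpotent kernel. -/
theorem step {d : ℕ} {α : Equiv.Perm (Fin d) → C} (h : MLI C R d α) (h1 : α 1 = 1) (hd : 0 < d)
    (u : R) : ∃ (C' R' : Type) (_ : CommRing C') (_ : Ring R') (_ : Algebra C' R')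
      (ψ : C →+* C') (φ : R →+* R'), (IsNoetherianRing C → IsNoetherianRing C') ∧
      (∀ c r, φ (c • r) = ψ c • φ r) ∧
      (Submodule.span C' (Set.range φ) = ⊤) ∧
      (φ u ^ d ∈ Submodule.span C' ((fun i : ℕ => φ u ^ i) '' Set.Iio d)) ∧
      (∀ l : List R, l.length = d → (∀ x ∈ l, φ x = 0) → l.prod = 0) := by
  let S := (MvPolynomial (Fin d) C) ⊗[C] R
  let π : S →ₐ[MvPolynomial (Fin d) C] S ⧸ LL C u d := Ideal.Quotient.mkₐ _ _
  let ι : R →ₐ[C] S := Algebra.TensorProduct.includeRight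
  let φ : R →+* S ⧸ LL C u d := (π : S →+* S ⧸ LL C u d).comp (ι : R →+* S)
  have hφ : ∀ r, φ r = π (1 ⊗ₜ r) := fun r => rfl
  have htm : ∀ c r, π (c ⊗ₜ r) = c • φ r := by
    intro c r
    rw [hφ, ← map_smul, TensorProduct.smul_tmul', smul_eq_mul, mul_one]
  refine ⟨MvPolynomial (Fin d) C, S ⧸ LL C u d, inferInstance, inferInstance, inferInstance,
    MvPolynomial.C, φ, ?_, ?_, ?_, ?_, ?_⟩
  · intro; infer_instance
  · intro c r
    rw [hφ, ← htm, ← TensorProduct.smul_tmul]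
    congr 2
    rw [smul_eq_C_mul, mul_one]
  · rw [eq_top_iff]
    rintro x -
    obtain ⟨x, rfl⟩ := Ideal.Quotient.mkₐ_surjective (MvPolynomial (Fin d) C) (LL C u d) x
    change π x ∈ _
    induction x using TensorProduct.induction_on with
    | zero => simp
    | add x z hx hz => rw [map_add]; exact Submodule.add_mem _ hx hz
    | tmul c a =>
      rw [htm]
      exact Submodule.smul_mem _ _ (Submodule.subset_span ⟨a, rfl⟩)
  · have hc : π (chi C u d) = 0 := by
      refine Ideal.Quotient.eq_zero_iff_mem.mpr (Ideal.subset_span ⟨1, by simp⟩)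
    rw [chi, map_add, map_sum, htm, one_smul, map_pow] at hc
    rw [eq_neg_of_add_eq_zero_left hc]
    refine Submodule.neg_mem _ (Submodule.sum_mem _ fun k _ => ?_)
    rw [htm, map_pow]
    exact Submodule.smul_mem _ _ (Submodule.subset_span ⟨k, k.2, rfl⟩)
  · have hker : ∀ m ≤ d, ∀ r, φ r = 0 → ∀ x ∈ JJ C u m, r * x ∈ JJ C u (m + 1) := by
      intro m hm r hr x hx
      revert r
      refine Submodule.span_induction (p := fun x _ =>
        ∀ r, φ r = 0 → r * x ∈ JJ C u (m + 1)) ?_ ?_ ?_ ?_ hx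
      · rintro _ ⟨y, q, rfl⟩ r hr
        have hm : (1 : MvPolynomial (Fin d) C) ⊗ₜ[C] r ∈ LL C u d :=
          Ideal.Quotient.eq_zero_iff_mem.mp hr
        have := Phi_LL u d m (by assumption) y q _ hm
        rwa [Phi_tmul, map_one, one_mul] at this
      · simp
      · intro x y _ _ hx hy r hr
        rw [mul_add]
        exact Ideal.add_mem _ (hx r hr) (hy r hr)
      · intro c x _ hx r hr
        rw [smul_eq_mul, ← mul_assoc]
        exact hx _ (by rw [map_mul, hr, zero_mul])
    have hall : ∀ l : List R, l.length ≤ d → (∀ x ∈ l, φ x = 0) → l.prod ∈ JJ C u l.length := by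
      intro l
      induction l with
      | nil =>
        intro _ _
        refine Ideal.subset_span ⟨fun _ => 0, 1, ?_⟩
        simp [pp, slot_one]
      | cons r l ih =>
        intro hl hx
        rw [List.prod_cons]
        simp only [List.length_cons] at hl ⊢
        exact hker _ (by omega) r (hx r (by simp)) _
          (ih (by omega) fun x hxl => hx x (by simp [hxl]))
    intro l hl hx
    have h2 := hall l hl.le hx
    rw [hl] at h2
    have h3 : JJ C u d ≤ ⊥ := by
      refine Ideal.span_le.mpr ?_
      rintro _ ⟨y, q, rfl⟩
      exact slot_pp h h1 u hd y q
    exact h3 h2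

end Step


section Shirshov

variable {t : ℕ}

/-- numeric value of a word in base `t`. -/
def val : List (Fin t) → ℕ
  | [] => 0
  | x :: w => (x : ℕ) * t ^ w.length + val w

lemma val_append (a b : List (Fin t)) : val (a ++ b) = val a * t ^ b.length + val b := by
  induction a with
  | nil => simp [val]
  | cons x a ih =>
    simp only [List.cons_append, val, ih, List.length_append]
    ring

lemma val_lt (a : List (Fin t)) : val a < t ^ a.length := by
  induction a with
  | nil => simp [val]
  | cons x a ih =>
    simp only [val, List.length_cons]
    have h1 : (x : ℕ) + 1 ≤ t := x.2
    calc (x : ℕ) * t ^ a.length + val a < (x : ℕ) * t ^ a.length + t ^ a.length := by omega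
      _ = ((x : ℕ) + 1) * t ^ a.length := by ring
      _ ≤ t * t ^ a.length := Nat.mul_le_mul_right _ h1
      _ = _ := by ring

lemma val_lt_append (z z' r r' : List (Fin t)) (h : val z' < val z)
    (hl : r'.length = r.length) : val (z' ++ r') < val (z ++ r) := by
  rw [val_append, val_append, hl]
  have h1 := val_lt r'
  rw [hl] at h1
  have h2 : (val z' + 1) * t ^ r.length ≤ val z * t ^ r.length := Nat.mul_le_mul_right _ h
  have h3 : (val z' + 1) * t ^ r.length = val z' * t ^ r.length + t ^ r.length := by ring
  omega

lemma val_inj (a b : List (Fin t)) (hl : a.length = b.length) (h : val a = val b) : a = b := by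
  induction a generalizing b with
  | nil => exact (List.length_eq_zero_iff.mp hl.symm).symm
  | cons x a ih =>
    cases b with
    | nil => simp at hl
    | cons y b =>
      have hl' : a.length = b.length := by simpa using hl
      simp only [val] at h
      have ha := val_lt a
      have hb := val_lt b
      rw [hl'] at h ha
      have hp : 0 < t ^ b.length := by omega
      have hxy : (x : ℕ) = y := by
        have e1 : ((x : ℕ) * t ^ b.length + val a) / t ^ b.length = x := by
          rw [mul_comm, Nat.mul_add_div hp, Nat.div_eq_of_lt ha, add_zero]
        have e2 : ((y : ℕ) * t ^ b.length + val b) / t ^ b.length = y := by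
          rw [mul_comm, Nat.mul_add_div hp, Nat.div_eq_of_lt hb, add_zero]
        rw [← e1, ← e2, h]
      have hv : val a = val b := by rw [hxy] at h; omega
      rw [ih b hl' hv, Fin.ext hxy]

/-- `u` strictly dominates `v`, as witnessed by prefixes of equal length. -/
def Dom (u v : List (Fin t)) : Prop :=
  ∃ z z' r r', u = z ++ r ∧ v = z' ++ r' ∧ z.length = z'.length ∧ val z' < val z

lemma Dom.ne {u v : List (Fin t)} (h : Dom u v) : u ≠ v := by
  rintro rfl
  obtain ⟨z, z', r, r', h1, h2, h3, h4⟩ := h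
  rw [h1] at h2
  have := (List.append_inj h2 h3).1
  subst this
  exact lt_irrefl _ h4

lemma perm_val_lt (L L' : List (List (Fin t))) (hL : L.Pairwise Dom) (hp : L'.Perm L)
    (hne : L' ≠ L) : val L'.flatten < val L.flatten := by
  induction L generalizing L' with
  | nil => exact absurd hp.eq_nil hne
  | cons u T ih =>
    cases L' with
    | nil => exact absurd hp.symm.eq_nil (by simp)
    | cons v T' =>
      have hlen : (v :: T').flatten.length = (u :: T).flatten.length := hp.flatten.length_eq
      rw [List.pairwise_cons] at hL
      by_cases huv : v = u
      · subst huv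
        have hp' : T'.Perm T := hp.cons_inv
        have := ih T' hL.2 hp' (fun h => hne (by rw [h]))
        simp only [List.flatten_cons, val_append]
        rw [hp'.flatten.length_eq]
        omega
      · have hv : v ∈ T := by
          have : v ∈ u :: T := hp.subset (List.mem_cons_self)
          rcases List.mem_cons.mp this with h | h
          · exact absurd h huv
          · exact h
        obtain ⟨z, z', r, r', h1, h2, h3, h4⟩ := hL.1 v hv
        simp only [List.flatten_cons] at hlen ⊢
        rw [h1, h2] at hlen ⊢
        rw [List.append_assoc, List.append_assoc] at hlen ⊢
        apply val_lt_append _ _ _ _ h4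
        simp only [List.length_append] at hlen ⊢
        omega

/-- the dichotomy of Shirshov's height lemma -/
def Good (d k : ℕ) (w : List (Fin t)) : Prop :=
  (∃ a v b, w = a ++ (List.replicate k v).flatten ++ b ∧ 0 < v.length ∧ v.length < d) ∨
  (∃ (a : List (Fin t)) (vs : List (List (Fin t))) (b : List (Fin t)),
    w = a ++ vs.flatten ++ b ∧ vs.length = d ∧ vs.Pairwise Dom)

lemma Good.of_infix {d k : ℕ} {p w : List (Fin t)} (h : Good d k p) (hp : p <:+: w) :
    Good d k w := by
  obtain ⟨s, r, rfl⟩ := hp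
  rcases h with ⟨a, v, b, rfl, h⟩ | ⟨a, v, b, rfl, h⟩
  · exact Or.inl ⟨s ++ a, v, b ++ r, by simp, h⟩
  · exact Or.inr ⟨s ++ a, v, b ++ r, by simp, h⟩

/-- factors of length `M` -/
def Win (M : ℕ) (w : List (Fin t)) : Set (List (Fin t)) := {p | p <:+: w ∧ p.length = M}

lemma Win_finite (M : ℕ) (w : List (Fin t)) : (Win M w).Finite :=
  (List.finite_length_eq (Fin t) M).subset fun _ h => h.2

lemma power_prefix (x : List (Fin t)) (M q : ℕ) (hx : x.take M = (x.drop q).take M)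
    (hl : q ≤ x.length) (j : ℕ) (hj : j * q ≤ M) :
    (List.replicate j (x.take q)).flatten <+: x := by
  induction j with
  | zero => simp
  | succ j ih =>
    have hj' : j * q ≤ M := le_trans (Nat.mul_le_mul_right _ (Nat.le_succ j)) hj
    have h1 := ih hj'
    have h2 : (List.replicate j (x.take q)).flatten <+: x.take M := by
      rw [List.prefix_take_iff]
      refine ⟨h1, ?_⟩
      simp [hl, hj']
    rw [hx] at h2
    have h3 := h2.trans (List.take_prefix _ _)
    rw [List.replicate_succ, List.flatten_cons]
    conv_rhs => rw [← List.take_append_drop q x]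
    exact (List.prefix_append_right_inj _).mpr h3

lemma chunks (w : List (Fin t)) (ℓ : ℕ) (zs : List (List (Fin t)))
    (h : ∀ z ∈ zs, ∀ p, p <:+: w → ℓ ≤ p.length → z <:+: p) :
    ∀ x, x <:+: w → zs.length * ℓ ≤ x.length →
      ∃ a vs, x = a ++ List.flatten vs ∧ List.Forall₂ (fun z v => z <+: v) zs vs := by
  induction zs with
  | nil => intro x _ _; exact ⟨x, [], by simp, List.Forall₂.nil⟩
  | cons z zs ih =>
    intro x hx hlen
    rw [List.length_cons, Nat.succ_mul] at hlen
    obtain ⟨a, vs, h1, h2⟩ := ih (fun z hz => h z (List.mem_cons_of_mem _ hz)) (x.drop ℓ)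
      ((List.drop_suffix _ _).isInfix.trans hx) (by rw [List.length_drop]; omega)
    obtain ⟨s, r, h3⟩ := h z List.mem_cons_self (x.take ℓ)
      ((List.take_prefix _ _).isInfix.trans hx) (by rw [List.length_take]; omega)
    refine ⟨s, (z ++ r ++ a) :: vs, ?_, List.Forall₂.cons ⟨r ++ a, by simp⟩ h2⟩
    conv_lhs => rw [← List.take_append_drop ℓ x, ← h3, h1]
    simp

lemma dom_of_prefix (zs vs : List (List (Fin t)))
    (h : List.Forall₂ (fun z v => z <+: v) zs vs)
    (hz : zs.Pairwise (fun z z' => z.length = z'.length ∧ val z' < val z)) :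
    vs.Pairwise Dom := by
  rw [List.forall₂_iff_get] at h
  rw [List.pairwise_iff_getElem] at hz ⊢
  intro i j hi hj hij
  obtain ⟨r, hr⟩ := h.2 i (by omega) hi
  obtain ⟨r', hr'⟩ := h.2 j (by omega) hj
  have := hz i j (by omega) (by omega) hij
  exact ⟨_, _, r, r', hr.symm, hr'.symm, this.1, this.2⟩

lemma exists_desc (M d : ℕ) (S : Set (List (Fin t))) (hS : S.Finite) (hd : d ≤ S.ncard)
    (hl : ∀ p ∈ S, p.length = M) : ∃ zs : List (List (Fin t)), zs.length = d ∧
      (∀ z ∈ zs, z ∈ S) ∧ zs.Pairwise (fun z z' => z.length = z'.length ∧ val z' < val z) := by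
  classical
  obtain ⟨T, hTS, hT⟩ := Finset.exists_subset_card_eq (s := hS.toFinset) (n := d)
    (by rwa [← Set.ncard_eq_toFinset_card S hS])
  have hTS' : ∀ p ∈ T, p ∈ S := fun p hp => by simpa using hTS hp
  have hc : (T.image val).card = d := by
    rw [Finset.card_image_of_injOn, hT]
    intro a ha b hb hab
    exact val_inj a b (by rw [hl a (hTS' a ha), hl b (hTS' b hb)]) hab
  have hz : ∀ i : Fin d, ∃ z ∈ T, val z = (T.image val).orderEmbOfFin hc i := by
    intro i
    have := Finset.orderEmbOfFin_mem (T.image val) hc i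
    exact Finset.mem_image.mp this
  choose z hzT hzv using hz
  refine ⟨List.ofFn (fun i => z i.rev), by simp, ?_, ?_⟩
  · intro y hy
    obtain ⟨i, rfl⟩ := (List.mem_ofFn' _ _).mp hy
    exact hTS' _ (hzT _)
  · rw [List.pairwise_ofFn]
    intro i j hij
    refine ⟨by rw [hl _ (hTS' _ (hzT _)), hl _ (hTS' _ (hzT _))], ?_⟩
    rw [hzv, hzv]
    simpa using hij

lemma good_few (d k : ℕ) (w : List (Fin t)) (hw : k * d + d ≤ w.length)
    (hc : (Win (k * d) w).ncard < d) : Good d k w := by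
  classical
  have hfin := Win_finite (k * d) w
  let f : Fin d → List (Fin t) := fun i => (w.drop i).take (k * d)
  have hf : ∀ i ∈ (Finset.univ : Finset (Fin d)), f i ∈ hfin.toFinset := by
    intro i _
    rw [Set.Finite.mem_toFinset]
    refine ⟨(List.take_prefix _ _).isInfix.trans (List.drop_suffix _ _).isInfix, ?_⟩
    have := i.2
    simp only [f, List.length_take, List.length_drop]
    omega
  obtain ⟨i, -, j, -, hij, he⟩ := Finset.exists_ne_map_eq_of_card_lt_of_maps_to
    (s := (Finset.univ : Finset (Fin d))) (t := hfin.toFinset) (f := f)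
    (by rw [← Set.ncard_eq_toFinset_card _ hfin]; simpa using hc) hf
  have main : ∀ i j : Fin d, i < j → f i = f j → Good d k w := by
    intro i j hij he
    have hj := j.2
    have hij' : (i : ℕ) < j := hij
    have e : (w.drop i).take (k * d) = ((w.drop i).drop (j - i)).take (k * d) := by
      rw [List.drop_drop]
      have : (i : ℕ) + (j - i) = j := by omega
      rw [this]
      exact he
    have hq : ((w.drop i).take (j - i)).length = j - i := by
      simp only [List.length_take, List.length_drop]; omega
    obtain ⟨r, hr⟩ := power_prefix (w.drop i) (k * d) (j - i) e
      (by rw [List.length_drop]; omega) k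
      (Nat.mul_le_mul_left _ (by omega))
    refine Or.inl ⟨w.take i, (w.drop i).take (j - i), r, ?_, by omega, by omega⟩
    rw [List.append_assoc, hr, List.take_append_drop]
  rcases lt_or_gt_of_ne hij with h | h
  · exact main i j h he
  · exact main j i h he.symm

theorem shirshov (t d k : ℕ) :
    ∃ ℓ, ∀ w : List (Fin t), ℓ ≤ w.length → Good d k w := by
  have key : ∀ c, ∃ ℓ, ∀ w : List (Fin t), ℓ ≤ w.length → (Win (k * d) w).ncard ≤ c →
      Good d k w := by
    intro c
    induction c with
    | zero =>
      refine ⟨k * d + d, fun w hw hc => ?_⟩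
      rcases Nat.eq_zero_or_pos d with rfl | hd
      · exact Or.inr ⟨[], [], w, by simp, rfl, List.Pairwise.nil⟩
      · exact good_few d k w hw (by omega)
    | succ c ih =>
      obtain ⟨ℓ, hℓ⟩ := ih
      refine ⟨(k * d + d) + d * ℓ, fun w hw hc => ?_⟩
      by_cases hcd : (Win (k * d) w).ncard < d
      · exact good_few d k w (by omega) hcd
      by_cases hp : ∃ p, p <:+: w ∧ ℓ ≤ p.length ∧ (Win (k * d) p).ncard ≤ c
      · obtain ⟨p, h1, h2, h3⟩ := hp
        exact (hℓ p h2 h3).of_infix h1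
      push Not at hp
      have hall : ∀ p, p <:+: w → ℓ ≤ p.length → Win (k * d) p = Win (k * d) w := by
        intro p h1 h2
        have := hp p h1 h2
        refine Set.eq_of_subset_of_ncard_le (fun z hz => ⟨hz.1.trans h1, hz.2⟩) (by omega)
          (Win_finite _ _)
      obtain ⟨zs, hz1, hz2, hz3⟩ := exists_desc (k * d) d (Win (k * d) w) (Win_finite _ _)
        (by omega) (fun p hp => hp.2)
      obtain ⟨a, vs, h1, h2⟩ := chunks w ℓ zs (fun z hz p h1 h2 => by
        have := hz2 z hz
        rw [← hall p h1 h2] at this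
        exact this.1) w (List.infix_refl w) (by rw [hz1]; omega)
      refine Or.inr ⟨a, vs, [], by simpa using h1, ?_, dom_of_prefix zs vs h2 hz3⟩
      rw [← h2.length_eq, hz1]
  obtain ⟨ℓ, hℓ⟩ := key ((List.finite_length_eq (Fin t) (k * d)).toFinset.card)
  refine ⟨ℓ, fun w hw => hℓ w hw ?_⟩
  rw [← Set.ncard_eq_toFinset_card _ (List.finite_length_eq (Fin t) (k * d))]
  exact Set.ncard_le_ncard (fun z hz => hz.2) (List.finite_length_eq _ _)

end Shirshov


section Rewriting

variable {C R : Type} [CommRing C] [Ring R] [Algebra C R] {t : ℕ}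

/-- evaluation of a word -/
def ev (a : Fin t → R) (w : List (Fin t)) : R := (w.map a).prod

lemma ev_append (a : Fin t → R) (v w : List (Fin t)) : ev a (v ++ w) = ev a v * ev a w := by
  simp [ev]

lemma ev_flatten (a : Fin t → R) (L : List (List (Fin t))) :
    ev a L.flatten = (L.map (ev a)).prod := by
  induction L with
  | nil => simp [ev]
  | cons v L ih => rw [List.flatten_cons, ev_append, ih, List.map_cons, List.prod_cons]

lemma ev_pow (a : Fin t → R) (v : List (Fin t)) (k : ℕ) :
    ev a (List.replicate k v).flatten = ev a v ^ k := by
  rw [ev_flatten, List.map_replicate, List.prod_replicate]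

lemma rewrite_len {d : ℕ} {α : Equiv.Perm (Fin d) → C} (h : MLI C R d α) (h1 : α 1 = 1)
    (a : Fin t → R) (k n : ℕ) (hgood : ∀ w : List (Fin t), w.length = n → Good d k w)
    (Q : Submodule C R)
    (hQ : ∀ x v y : List (Fin t), (x ++ (List.replicate k v).flatten ++ y).length = n →
      0 < v.length → v.length < d → ev a (x ++ (List.replicate k v).flatten ++ y) ∈ Q) :
    ∀ w : List (Fin t), w.length = n → ev a w ∈ Q := by
  classical
  have key : ∀ N, ∀ w : List (Fin t), val w = N → w.length = n → ev a w ∈ Q := by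
    intro N
    induction N using Nat.strong_induction_on with
    | _ N ih =>
      intro w hN hw
      rcases hgood w hw with ⟨x, v, y, rfl, hv, hv'⟩ | ⟨x, vs, y, rfl, hvs, hdom⟩
      · exact hQ x v y hw hv hv'
      · obtain ⟨f, rfl⟩ : ∃ f : Fin d → List (Fin t), vs = List.ofFn f := by
          subst hvs
          exact ⟨vs.get, (List.ofFn_get vs).symm⟩
        have hid := h (fun i => ev a (f i))
        have hterm : ∀ σ : Equiv.Perm (Fin d),
            ev a x * (List.ofFn ((fun i => ev a (f i)) ∘ σ)).prod * ev a y
            = ev a (x ++ (List.ofFn (f ∘ σ)).flatten ++ y) := by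
          intro σ
          rw [ev_append, ev_append, ev_flatten, List.map_ofFn]
          rfl
        have hinj : Function.Injective f := by
          have hnd : (List.ofFn f).Nodup := hdom.imp (fun h => h.ne)
          exact List.nodup_ofFn.mp hnd
        have hsmall : ∀ σ : Equiv.Perm (Fin d), σ ≠ 1 →
            ev a (x ++ (List.ofFn (f ∘ σ)).flatten ++ y) ∈ Q := by
          intro σ hσ
          have hp : (List.ofFn (f ∘ σ)).Perm (List.ofFn f) := Equiv.Perm.ofFn_comp_perm σ f
          have hne : List.ofFn (f ∘ σ) ≠ List.ofFn f := by
            intro he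
            apply hσ
            ext1 i
            exact hinj (congrFun (List.ofFn_injective he) i)
          have hlt := perm_val_lt _ _ hdom hp hne
          have hlen := hp.flatten.length_eq
          refine ih _ ?_ _ rfl ?_
          · rw [← hN, List.append_assoc, List.append_assoc, val_append x, val_append x]
            have h2 := val_lt_append _ _ y y hlt rfl
            rw [List.length_append, List.length_append, hlen]
            omega
          · rw [← hw]
            simp only [List.length_append, hlen]
        have hsum : ∑ σ : Equiv.Perm (Fin d), α σ •
            ev a (x ++ (List.ofFn (f ∘ σ)).flatten ++ y) = 0 := by
          have : ev a x * (∑ σ : Equiv.Perm (Fin d),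
              α σ • (List.ofFn ((fun i => ev a (f i)) ∘ σ)).prod) * ev a y = 0 := by
            rw [hid]; simp
          rw [← this, Finset.mul_sum, Finset.sum_mul]
          refine Finset.sum_congr rfl fun σ _ => ?_
          rw [← hterm, mul_smul_comm, smul_mul_assoc]
        rw [← Finset.add_sum_erase _ _ (Finset.mem_univ (1 : Equiv.Perm (Fin d))), h1,
          one_smul] at hsum
        have he : f ∘ (1 : Equiv.Perm (Fin d)) = f := by ext1 i; rfl
        rw [he] at hsum
        rw [eq_neg_of_add_eq_zero_left hsum]
        refine Q.neg_mem (Q.sum_mem fun σ hσ => Q.smul_mem _ (hsmall σ (Finset.ne_of_mem_erase hσ)))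
  exact fun w hw => key _ w rfl hw

lemma finite_of_integral {d : ℕ} {α : Equiv.Perm (Fin d) → C} (h : MLI C R d α) (h1 : α 1 = 1)
    (a : Fin t → R) (hspan : Submodule.span C (Set.range (ev a)) = ⊤)
    (hinteg : ∀ v : List (Fin t), 0 < v.length → v.length < d →
      ev a v ^ d ∈ Submodule.span C ((fun i : ℕ => ev a v ^ i) '' Set.Iio d)) :
    Module.Finite C R := by
  obtain ⟨ℓ, hℓ⟩ := shirshov t d d
  have key : ∀ n, ∀ w : List (Fin t), w.length = n →
      ev a w ∈ Submodule.span C (ev a '' {w | w.length < ℓ}) := by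
    intro n
    induction n using Nat.strong_induction_on with
    | _ n ih =>
      by_cases hn : n < ℓ
      · intro w hw
        exact Submodule.subset_span ⟨w, by simpa [hw] using hn, rfl⟩
      · push Not at hn
        refine rewrite_len h h1 a d n (fun w hw => hℓ w (by omega)) _ ?_
        intro x v y hlen hv hv'
        rw [ev_append, ev_append, ev_pow]
        have := hinteg v hv hv'
        let T : R →ₗ[C] R := (LinearMap.mulRight C (ev a y)).comp (LinearMap.mulLeft C (ev a x))
        have hT : ∀ z, T z = ev a x * z * ev a y := fun z => rfl
        rw [← hT]
        have hle : Submodule.span C ((fun i : ℕ => ev a v ^ i) '' Set.Iio d) ≤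
            (Submodule.span C (ev a '' {w | w.length < ℓ})).comap T := by
          rw [Submodule.span_le]
          rintro _ ⟨i, hi, rfl⟩
          have hi' : i < d := hi
          change T (ev a v ^ i) ∈ Submodule.span C (ev a '' {w | w.length < ℓ})
          rw [hT, ← ev_pow, ← ev_append, ← ev_append]
          refine ih _ ?_ _ rfl
          rw [← hlen]
          simp only [List.length_append, List.length_flatten, List.map_replicate,
            List.sum_replicate, smul_eq_mul]
          have := Nat.mul_lt_mul_of_pos_right hi' hv
          omega
        exact hle this
  refine ⟨⟨(((List.finite_length_lt (Fin t) ℓ).image (ev a)).toFinset), ?_⟩⟩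
  rw [Set.Finite.coe_toFinset, eq_top_iff, ← hspan, Submodule.span_le]
  rintro _ ⟨w, rfl⟩
  exact key _ w rfl

/-- a set is nilpotent if long products of its elements vanish -/
def NilpSet {R : Type} [Ring R] (A : Set R) : Prop :=
  ∃ s : ℕ, ∀ l : List R, l.length = s → (∀ x ∈ l, x ∈ A) → l.prod = 0

lemma nilp_of_words {d : ℕ} {α : Equiv.Perm (Fin d) → C} (h : MLI C R d α) (h1 : α 1 = 1)
    (a : Fin t → R)
    (hnil : ∀ v : List (Fin t), 0 < v.length → IsNilpotent (ev a v)) :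
    NilpSet (Set.range a) := by
  have hfin : {v : List (Fin t) | v.length < d}.Finite := List.finite_length_lt (Fin t) d
  obtain ⟨k, hk⟩ : ∃ k : ℕ, ∀ v : List (Fin t), 0 < v.length → v.length < d →
      ev a v ^ k = 0 := by
    have : ∀ v : List (Fin t), ∃ k : ℕ, 0 < v.length → ev a v ^ k = 0 := by
      intro v
      by_cases hv : 0 < v.length
      · obtain ⟨k, hk⟩ := hnil v hv
        exact ⟨k, fun _ => hk⟩
      · exact ⟨0, fun h => absurd h hv⟩
    choose K hK using this
    refine ⟨hfin.toFinset.sup K, fun v hv hv' => ?_⟩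
    exact pow_eq_zero_of_le (Finset.le_sup (f := K) (by simpa using hv')) (hK v hv)
  obtain ⟨ℓ, hℓ⟩ := shirshov t d k
  refine ⟨ℓ, fun l hl hx => ?_⟩
  obtain ⟨w, rfl⟩ : ∃ w : List (Fin t), w.map a = l := by
    have : l ∈ Set.range (List.map a) := by
      rw [Set.range_list_map]
      exact hx
    exact this
  have := rewrite_len h h1 a k ℓ (fun w hw => hℓ w (by omega)) ⊥ ?_ w (by simpa using hl)
  · simpa [ev] using this
  · intro x v y _ hv hv'
    rw [ev_append, ev_append, ev_pow, hk v hv hv']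
    simp

end Rewriting


section Assembly

lemma nilpSet_of_map {R R' : Type} [Ring R] [Ring R'] (φ : R →+* R') (d : ℕ)
    (hker : ∀ l : List R, l.length = d → (∀ x ∈ l, φ x = 0) → l.prod = 0) (A : Set R)
    (hA : NilpSet (φ '' A)) : NilpSet A := by
  obtain ⟨s, hs⟩ := hA
  have key : ∀ m : ℕ, ∀ l : List R, l.length = m * s → (∀ x ∈ l, x ∈ A) →
      ∃ l' : List R, l'.length = m ∧ l'.prod = l.prod ∧ ∀ x ∈ l', φ x = 0 := by
    intro m
    induction m with
    | zero =>
      intro l hl _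
      rw [zero_mul] at hl
      rw [List.length_eq_zero_iff.mp hl]
      exact ⟨[], rfl, rfl, by simp⟩
    | succ m ih =>
      intro l hl hx
      rw [Nat.succ_mul] at hl
      obtain ⟨l', h1, h2, h3⟩ := ih (l.drop s) (by rw [List.length_drop]; omega)
        (fun x hx' => hx x (List.mem_of_mem_drop hx'))
      refine ⟨(l.take s).prod :: l', by simp [h1], ?_, ?_⟩
      · rw [List.prod_cons, h2, List.prod_take_mul_prod_drop]
      · intro x hx'
        rcases List.mem_cons.mp hx' with rfl | hx'
        · rw [map_list_prod]
          refine hs _ (by rw [List.length_map, List.length_take]; omega) ?_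
          intro y hy
          obtain ⟨z, hz, rfl⟩ := List.mem_map.mp hy
          exact ⟨z, hx z (List.mem_of_mem_take hz), rfl⟩
        · exact h3 x hx'
  refine ⟨d * s, fun l hl hx => ?_⟩
  obtain ⟨l', h1, h2, h3⟩ := key d l hl hx
  rw [← h2]
  exact hker l' h1 h3

lemma nilpSet_image {R R' : Type} [Ring R] [Ring R'] (φ : R →+* R') (A : Set R)
    (hA : NilpSet A) : NilpSet (φ '' A) := by
  obtain ⟨s, hs⟩ := hA
  refine ⟨s, fun l hl hx => ?_⟩
  obtain ⟨l', rfl⟩ : l ∈ Set.range (List.map (fun x : A => φ x)) := by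
    rw [Set.range_list_map]
    intro x hx'
    obtain ⟨y, hy, rfl⟩ := hx x hx'
    exact ⟨⟨y, hy⟩, rfl⟩
  have h1 : l'.map (fun x : A => φ x) = (l'.map (fun x : A => (x : R))).map φ := by simp
  rw [h1, ← map_list_prod, hs _ (by simpa using hl) (by simp +contextual), map_zero]

lemma nilpSet_mono {R : Type} [Ring R] {A B : Set R} (h : A ⊆ B) (hB : NilpSet B) :
    NilpSet A := by
  obtain ⟨s, hs⟩ := hB
  exact ⟨s, fun l hl hx => hs l hl (fun x hx' => h (hx x hx'))⟩

lemma nilpSet_span {C R : Type} [CommRing C] [Ring R] [Algebra C R] (S : Set R)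
    (hS : NilpSet S) : NilpSet (Submodule.span C S : Set R) := by
  obtain ⟨s, hs⟩ := hS
  have key : ∀ l : List R, (∀ x ∈ l, x ∈ Submodule.span C S) →
      l.prod ∈ Submodule.span C {z | ∃ l' : List R, l'.length = l.length ∧ (∀ x ∈ l', x ∈ S) ∧
        l'.prod = z} := by
    intro l
    induction l with
    | nil =>
      intro _
      exact Submodule.subset_span ⟨[], rfl, by simp, rfl⟩
    | cons x l ih =>
      intro hx
      have h1 := ih (fun y hy => hx y (List.mem_cons_of_mem _ hy))
      have h2 := Submodule.mul_mem_mul (hx x List.mem_cons_self) h1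
      rw [Submodule.span_mul_span] at h2
      rw [List.prod_cons]
      refine Submodule.span_mono ?_ h2
      rintro _ ⟨y, hy, _, ⟨l', h3, h4, rfl⟩, rfl⟩
      refine ⟨y :: l', by simp [h3], ?_, by simp⟩
      intro z hz
      rcases List.mem_cons.mp hz with rfl | hz
      · exact hy
      · exact h4 z hz
  refine ⟨s, fun l hl hx => ?_⟩
  have h1 := key l hx
  have h2 : Submodule.span C {z | ∃ l' : List R, l'.length = l.length ∧ (∀ x ∈ l', x ∈ S) ∧
        l'.prod = z} ≤ ⊥ := by
    rw [Submodule.span_le]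
    rintro _ ⟨l', h3, h4, rfl⟩
    exact hs l' (by omega) h4
  simpa using h2 h1

lemma MLI.map {C R C' R' : Type} [CommRing C] [Ring R] [Algebra C R] [CommRing C'] [Ring R']
    [Algebra C' R'] (ψ : C →+* C') (φ : R →+* R') (hφ : ∀ c r, φ (c • r) = ψ c • φ r)
    (hspan : Submodule.span C' (Set.range φ) = ⊤) {d : ℕ} {α : Equiv.Perm (Fin d) → C}
    (h : MLI C R d α) : MLI C' R' d (fun σ => ψ (α σ)) := by
  classical
  let T : MultilinearMap C' (fun _ : Fin d => R') R' :=
    ∑ σ : Equiv.Perm (Fin d), ψ (α σ) • (MultilinearMap.mkPiAlgebraFin C' d R').domDomCongr σ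
  have hT : ∀ x : Fin d → R', T x = ∑ σ, ψ (α σ) • (List.ofFn (x ∘ σ)).prod := by
    intro x
    simp only [T, sum_apply, smul_apply,
      MultilinearMap.domDomCongr_apply, MultilinearMap.mkPiAlgebraFin_apply]
    rfl
  have key : ∀ S : Finset (Fin d), ∀ x : Fin d → R', (∀ i, i ∉ S → x i ∈ Set.range φ) →
      T x = 0 := by
    intro S
    induction S using Finset.induction_on with
    | empty =>
      intro x hx
      choose y hy using fun i => hx i (by simp)
      have hxy : x = φ ∘ y := funext fun i => (hy i).symm
      rw [hT, hxy]
      have := congrArg φ (h y)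
      rw [map_sum, map_zero] at this
      rw [← this]
      refine Finset.sum_congr rfl fun σ _ => ?_
      rw [hφ, map_list_prod, List.map_ofFn]
      rfl
    | insert j S hj ih =>
      intro x hx
      have hlin : T.toLinearMap x j = 0 := by
        refine LinearMap.ext_on hspan ?_
        rintro _ ⟨r, rfl⟩
        change T (Function.update x j (φ r)) = 0
        apply ih
        intro i hi
        by_cases hij : i = j
        · subst hij; simp
        · rw [Function.update_of_ne hij]
          exact hx i (by simp [hij, hi])
      have := LinearMap.congr_fun hlin (x j)
      change T (Function.update x j (x j)) = 0 at this
      rwa [Function.update_eq_self] at this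
  intro x
  rw [← hT]
  exact key Finset.univ x (by simp)

theorem main_induction (d t : ℕ) (hd : 0 < d) (rest : List (List (Fin t))) :
    ∀ (C R : Type) [CommRing C] [Ring R] [Algebra C R] [IsNoetherianRing C]
      (α : Equiv.Perm (Fin d) → C), MLI C R d α → α 1 = 1 → ∀ (a : Fin t → R),
      Submodule.span C (Set.range (ev a)) = ⊤ →
      (∀ v : List (Fin t), 0 < v.length → v.length < d → v ∈ rest ∨
        ev a v ^ d ∈ Submodule.span C ((fun i : ℕ => ev a v ^ i) '' Set.Iio d)) →
      ∀ N : Set R, (∀ S : Set R, S.Finite → S ⊆ N → NilpSet S) → NilpSet N := by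
  induction rest with
  | nil =>
    intro C R _ _ _ _ α h h1 a hspan hinteg N hN
    have hfin : Module.Finite C R := finite_of_integral h h1 a hspan
      (fun v hv hv' => (hinteg v hv hv').resolve_left (by simp))
    have hfg : (Submodule.span C N).FG := IsNoetherian.noetherian _
    obtain ⟨S, hS, hS'⟩ := (Submodule.fg_span_iff_fg_span_finset_subset N).mp hfg
    refine nilpSet_mono Submodule.subset_span (B := (Submodule.span C N : Set R)) ?_
    rw [hS']
    exact nilpSet_span _ (hN S S.finite_toSet hS)
  | cons v0 rest ih =>
    intro C R _ _ _ _ α h h1 a hspan hinteg N hN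
    obtain ⟨C', R', _, _, _, ψ, φ, hnoeth, hφ, hsp, hu, hker⟩ := step h h1 hd (ev a v0)
    have := hnoeth inferInstance
    have hev : ∀ w, ev (φ ∘ a) w = φ (ev a w) := by
      intro w
      rw [ev, ev, map_list_prod, List.map_map]
    have hmap : ∀ (A : Set R) (r : R), r ∈ Submodule.span C A →
        φ r ∈ Submodule.span C' (φ '' A) := by
      intro A r hr
      induction hr using Submodule.span_induction with
      | mem x hx => exact Submodule.subset_span ⟨x, hx, rfl⟩
      | zero => simp
      | add x y _ _ hx hy => rw [map_add]; exact Submodule.add_mem _ hx hy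
      | smul c x _ hx => rw [hφ]; exact Submodule.smul_mem _ _ hx
    apply nilpSet_of_map φ d hker
    refine ih C' R' (fun σ => ψ (α σ)) (h.map ψ φ hφ hsp) (by rw [h1, map_one]) (φ ∘ a) ?_ ?_
      (φ '' N) ?_
    · rw [eq_top_iff, ← hsp, Submodule.span_le]
      rintro _ ⟨r, rfl⟩
      have := hmap (Set.range (ev a)) r (by rw [hspan]; trivial)
      rw [← Set.range_comp] at this
      have he : ev (φ ∘ a) = φ ∘ ev a := funext hev
      rw [he]
      exact this
    · intro v hv hv'
      rw [hev]
      rcases hinteg v hv hv' with hr | hr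
      · rcases List.mem_cons.mp hr with rfl | hr
        · exact Or.inr hu
        · exact Or.inl hr
      · right
        have := hmap _ _ hr
        rw [Set.image_image] at this
        simpa only [map_pow] using this
    · intro S hS hSN
      obtain ⟨S', hS', hfin, rfl⟩ := (Set.exists_subset_image_finite_and (p := fun U => U = S)).mp
        ⟨S, hSN, hS, rfl⟩
      exact nilpSet_image φ S' (hN S' hfin hS')

lemma nil_sup {R : Type} [Ring R] (I J : TwoSidedIdeal R) (hI : ∀ y ∈ I, IsNilpotent y)
    (hJ : ∀ y ∈ J, IsNilpotent y) : ∀ y ∈ I ⊔ J, IsNilpotent y := by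
  intro x hx
  obtain ⟨y, hy, z, hz, rfl⟩ := TwoSidedIdeal.mem_sup.mp hx
  have key : ∀ n : ℕ, (y + z) ^ n - z ^ n ∈ I := by
    intro n
    induction n with
    | zero => simp
    | succ n ih =>
      have : (y + z) ^ (n + 1) - z ^ (n + 1) = (y + z) * ((y + z) ^ n - z ^ n) + y * z ^ n := by
        rw [pow_succ', pow_succ']
        noncomm_ring
      rw [this]
      exact I.add_mem (I.mul_mem_left _ _ ih) (I.mul_mem_right _ _ hy)
  obtain ⟨n, hn⟩ := hJ z hz
  have h1 := key n
  rw [hn, sub_zero] at h1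
  obtain ⟨m, hm⟩ := hI _ h1
  exact ⟨n * m, by rw [pow_mul, hm]⟩

lemma nil_sSup {R : Type} [Ring R] :
    ∀ y ∈ sSup {I : TwoSidedIdeal R | ∀ y ∈ I, IsNilpotent y}, IsNilpotent y := by
  let K : TwoSidedIdeal R := .mk' {x | ∃ I : TwoSidedIdeal R, (∀ y ∈ I, IsNilpotent y) ∧ x ∈ I}
    ⟨⊥, by intro y hy; rw [TwoSidedIdeal.mem_bot] at hy; rw [hy]; exact IsNilpotent.zero,
      TwoSidedIdeal.zero_mem _⟩
    (by
      rintro x y ⟨I, hI, hx⟩ ⟨J, hJ, hy⟩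
      exact ⟨I ⊔ J, nil_sup I J hI hJ, TwoSidedIdeal.add_mem _ (TwoSidedIdeal.mem_sup_left hx)
        (TwoSidedIdeal.mem_sup_right hy)⟩)
    (by rintro x ⟨I, hI, hx⟩; exact ⟨I, hI, TwoSidedIdeal.neg_mem _ hx⟩)
    (by rintro x y ⟨I, hI, hx⟩; exact ⟨I, hI, TwoSidedIdeal.mul_mem_left _ _ _ hx⟩)
    (by rintro x y ⟨I, hI, hx⟩; exact ⟨I, hI, TwoSidedIdeal.mul_mem_right _ _ _ hx⟩)
  have hK : sSup {I : TwoSidedIdeal R | ∀ y ∈ I, IsNilpotent y} ≤ K := by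
    apply sSup_le
    intro I hI x hx
    rw [TwoSidedIdeal.mem_mk']
    exact ⟨I, hI, hx⟩
  intro y hy
  have h1 := hK hy
  rw [TwoSidedIdeal.mem_mk'] at h1
  obtain ⟨I, hI, hx⟩ := h1
  exact hI y hx

lemma exists_words {F R : Type} [Field F] [Ring R] [Algebra F R] (hfg : Algebra.FiniteType F R) :
    ∃ (t : ℕ) (a : Fin t → R), Submodule.span F (Set.range (ev a)) = ⊤ := by
  obtain ⟨S, hS⟩ := hfg.out
  refine ⟨S.card, fun i => (S.equivFin.symm i : R), ?_⟩
  rw [eq_top_iff, ← Algebra.top_toSubmodule, ← hS, Algebra.adjoin_eq_span, Submodule.span_le]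
  intro x hx
  apply Submodule.subset_span
  obtain ⟨l, hl, rfl⟩ := Submonoid.exists_list_of_mem_closure hx
  have : l ∈ Set.range (List.map (fun i => (S.equivFin.symm i : R))) := by
    rw [Set.range_list_map]
    intro y hy
    exact ⟨S.equivFin ⟨y, hl y hy⟩, by simp⟩
  obtain ⟨w, rfl⟩ := this
  exact ⟨w, rfl⟩

theorem rbk_of_mli {F R : Type} [Field F] [Ring R] [Algebra F R] (hfg : Algebra.FiniteType F R)
    (d : ℕ) (hd : 0 < d) (α : Equiv.Perm (Fin d) → F) (h : MLI F R d α) (h1 : α 1 = 1)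
    (N : TwoSidedIdeal R) (hN : ∀ y ∈ N, IsNilpotent y) : NilpSet (N : Set R) := by
  obtain ⟨t, a, ha⟩ := exists_words hfg
  refine main_induction d t hd (List.finite_length_lt (Fin t) d).toFinset.toList F R α h h1 a ha
    ?_ N ?_
  · intro v _ hv
    left
    simpa using hv
  · intro S hS hSN
    let b : Fin hS.toFinset.card → R := fun i => (hS.toFinset.equivFin.symm i : R)
    have hb : ∀ i, b i ∈ N := fun i =>
      hSN ((Set.Finite.mem_toFinset hS).mp (hS.toFinset.equivFin.symm i).2)
    have hr : S ⊆ Set.range b := fun x hx =>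
      ⟨hS.toFinset.equivFin ⟨x, (Set.Finite.mem_toFinset hS).mpr hx⟩, by simp [b]⟩
    refine nilpSet_mono hr (nilp_of_words h h1 b ?_)
    intro v hv
    cases v with
    | nil => simp at hv
    | cons i v =>
      apply hN
      rw [ev, List.map_cons, List.prod_cons]
      exact N.mul_mem_right _ _ (hb i)

end Assembly


section Multilinearize

lemma signed_sum {e : ℕ} (T : Finset (Fin e)) :
    ∑ S : Finset (Fin e), (if T ⊆ S then (-1 : ℤ) ^ S.card else 0)
      = if T = Finset.univ then (-1) ^ e else 0 := by
  classical
  have h := Finset.prod_add (fun _ : Fin e => (-1 : ℤ)) (fun j => if j ∈ T then 0 else 1)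
    Finset.univ
  rw [Finset.powerset_univ] at h
  have h2 : ∀ S : Finset (Fin e), (if T ⊆ S then (-1 : ℤ) ^ S.card else 0)
      = (∏ _j ∈ S, (-1 : ℤ)) * ∏ j ∈ Finset.univ \ S, (if j ∈ T then (0 : ℤ) else 1) := by
    intro S
    rw [Finset.prod_const]
    by_cases hS : T ⊆ S
    · rw [if_pos hS, Finset.prod_eq_one, mul_one]
      intro j hj
      rw [Finset.mem_sdiff] at hj
      rw [if_neg (fun h => hj.2 (hS h))]
    · rw [if_neg hS]
      obtain ⟨j, hj, hj'⟩ := Finset.not_subset.mp hS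
      rw [Finset.prod_eq_zero (i := j) (by simp [hj']) (by rw [if_pos hj]), mul_zero]
  rw [Finset.sum_congr rfl (fun S _ => h2 S), ← h]
  by_cases hT : T = Finset.univ
  · subst hT
    simp
  · rw [if_neg hT]
    obtain ⟨j, hj⟩ : ∃ j, j ∉ T := by
      by_contra hc
      push Not at hc
      exact hT (Finset.eq_univ_iff_forall.mpr hc)
    exact Finset.prod_eq_zero (Finset.mem_univ j) (by simp [hj])

lemma expand_word {F R : Type} [Field F] [Ring R] [Algebra F R] {e : ℕ} (i : Fin e → ℕ)
    (z : Fin e → R) (S : Finset (Fin e)) (w : List ℕ) :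
    (w.map (fun x => ∑ j : Fin e, if j ∈ S ∧ i j = x then z j else 0)).prod
      = ∑ h : Fin w.length → Fin e,
        if (∀ p, h p ∈ S) ∧ i ∘ h = w.get then (List.ofFn (z ∘ h)).prod else 0 := by
  classical
  conv_lhs => rw [← List.ofFn_get w, List.map_ofFn]
  have := MultilinearMap.map_sum (MultilinearMap.mkPiAlgebraFin F w.length R)
    (fun (p : Fin w.length) (j : Fin e) => if j ∈ S ∧ i j = w.get p then z j else 0)
  simp only [MultilinearMap.mkPiAlgebraFin_apply] at this
  refine this.trans (Finset.sum_congr rfl fun h _ => ?_)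
  by_cases hh : (∀ p, h p ∈ S) ∧ i ∘ h = w.get
  · rw [if_pos hh]
    congr 2
    funext p
    rw [if_pos ⟨hh.1 p, congrFun hh.2 p⟩]
    rfl
  · rw [if_neg hh]
    have : ∃ p, ¬ (h p ∈ S ∧ i (h p) = w.get p) := by
      by_contra hc
      push Not at hc
      exact hh ⟨fun p => (hc p).1, funext fun p => (hc p).2⟩
    obtain ⟨p, hp⟩ := this
    apply List.prod_eq_zero
    rw [List.mem_ofFn]
    exact ⟨p, if_neg hp⟩

lemma surj_sum {R : Type} [Ring R] {e n : ℕ} (i : Fin e → ℕ) (z : Fin e → R) (g : Fin n → ℕ)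
    (hn : n ≤ e) : ∑ h : Fin n → Fin e,
        (if Function.Surjective h ∧ i ∘ h = g then (List.ofFn (z ∘ h)).prod else 0)
      = ∑ σ : Equiv.Perm (Fin e), if List.ofFn (i ∘ σ) = List.ofFn g then
        (List.ofFn (z ∘ σ)).prod else 0 := by
  classical
  by_cases hne : n = e
  · subst hne
    symm
    refine Fintype.sum_of_injective (fun σ : Equiv.Perm (Fin n) => (σ : Fin n → Fin n))
      DFunLike.coe_injective _ _ ?_ ?_
    · intro h hh
      rw [if_neg]
      rintro ⟨hs, -⟩
      exact hh ⟨Equiv.ofBijective h (Finite.surjective_iff_bijective.mp hs), rfl⟩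
    · intro σ
      have : Function.Surjective σ := σ.surjective
      simp only [this, true_and, List.ofFn_inj]
  · rw [Finset.sum_eq_zero, Finset.sum_eq_zero]
    · intro σ _
      rw [if_neg]
      intro h
      have := congrArg List.length h
      simp at this
      omega
    · intro h _
      rw [if_neg]
      rintro ⟨hs, -⟩
      have := Fintype.card_le_of_surjective h hs
      simp at this
      omega

lemma multilinearize {F R : Type} [Field F] [Ring R] [Algebra F R] (s : Finset (List ℕ))
    (c : List ℕ → F) (hc : ∀ w, w ∈ s ↔ c w ≠ 0) (hs : s.Nonempty)
    (hid : ∀ a : ℕ → R, ∑ w ∈ s, c w • (w.map a).prod = 0) :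
    ∃ (d : ℕ) (α : Equiv.Perm (Fin d) → F), MLI F R d α ∧ α 1 = 1 := by
  classical
  obtain ⟨w0, hw0, hmax⟩ := s.exists_max_image List.length hs
  have hc0 : c w0 ≠ 0 := (hc w0).mp hw0
  let i : Fin w0.length → ℕ := w0.get
  refine ⟨w0.length, fun σ => (c w0)⁻¹ * c (List.ofFn (i ∘ σ)), ?_, ?_⟩
  swap
  · have : i ∘ (1 : Equiv.Perm (Fin w0.length)) = w0.get := by ext1 j; rfl
    simp only [this, List.ofFn_get]
    exact inv_mul_cancel₀ hc0
  intro z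
  have h1 : ∀ S : Finset (Fin w0.length), ∑ w ∈ s, c w • ∑ h : Fin w.length → Fin w0.length,
        (if (∀ p, h p ∈ S) ∧ i ∘ h = w.get then (List.ofFn (z ∘ h)).prod else 0) = 0 := by
    intro S
    refine Eq.trans ?_
      (hid (fun x => ∑ j : Fin w0.length, if j ∈ S ∧ i j = x then z j else 0))
    refine Finset.sum_congr rfl fun w _ => ?_
    rw [expand_word (F := F)]
  have h2 : ∑ S : Finset (Fin w0.length), (-1 : ℤ) ^ S.card • ∑ w ∈ s, c w •
      ∑ h : Fin w.length → Fin w0.length,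
        (if (∀ p, h p ∈ S) ∧ i ∘ h = w.get then (List.ofFn (z ∘ h)).prod else 0) = 0 := by
    refine Finset.sum_eq_zero fun S _ => ?_
    rw [h1, smul_zero]
  have h3 : ∑ w ∈ s, c w • ∑ h : Fin w.length → Fin w0.length,
      ((-1 : ℤ) ^ w0.length) • (if Function.Surjective h ∧ i ∘ h = w.get then
        (List.ofFn (z ∘ h)).prod else 0) = 0 := by
    refine Eq.trans ?_ h2
    simp only [Finset.smul_sum]
    rw [Finset.sum_comm]
    refine Finset.sum_congr rfl fun w _ => ?_
    rw [Finset.sum_comm]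
    refine Finset.sum_congr rfl fun h _ => ?_
    have h4 := signed_sum (Finset.univ.image h)
    have h5 : ∀ S : Finset (Fin w0.length), Finset.univ.image h ⊆ S ↔ ∀ p, h p ∈ S := by
      intro S
      rw [Finset.image_subset_iff]
      simp
    have h6 : Finset.univ.image h = Finset.univ ↔ Function.Surjective h := by
      rw [Finset.eq_univ_iff_forall]
      simp [Function.Surjective]
    simp only [h5, h6] at h4
    by_cases hg : i ∘ h = w.get
    · simp only [hg, and_true]
      have h7 : ∀ S : Finset (Fin w0.length),
          (-1 : ℤ) ^ S.card • c w • (if ∀ p, h p ∈ S then (List.ofFn (z ∘ h)).prod else 0)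
          = (if ∀ p, h p ∈ S then (-1 : ℤ) ^ S.card else 0) • c w • (List.ofFn (z ∘ h)).prod := by
        intro S
        split_ifs <;> simp
      rw [Finset.sum_congr rfl (fun S _ => h7 S), ← Finset.sum_smul, h4, smul_comm]
      split_ifs <;> simp
    · simp [hg]
  have h8 : ((-1 : ℤ) ^ w0.length) • ∑ w ∈ s, c w • ∑ h : Fin w.length → Fin w0.length,
      (if Function.Surjective h ∧ i ∘ h = w.get then (List.ofFn (z ∘ h)).prod else 0) = 0 := by
    refine Eq.trans ?_ h3
    rw [Finset.smul_sum]
    refine Finset.sum_congr rfl fun w _ => ?_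
    rw [smul_comm, Finset.smul_sum]
  have h9 : ∑ w ∈ s, c w • ∑ h : Fin w.length → Fin w0.length,
      (if Function.Surjective h ∧ i ∘ h = w.get then (List.ofFn (z ∘ h)).prod else 0) = 0 := by
    rcases neg_one_pow_eq_or ℤ w0.length with h | h
    · rwa [h, one_smul] at h8
    · rwa [h, neg_smul, one_smul, neg_eq_zero] at h8
  have h10 : ∑ σ : Equiv.Perm (Fin w0.length),
      c (List.ofFn (i ∘ σ)) • (List.ofFn (z ∘ σ)).prod = 0 := by
    refine Eq.trans ?_ h9
    have h11 : ∀ w ∈ s, c w • ∑ h : Fin w.length → Fin w0.length,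
        (if Function.Surjective h ∧ i ∘ h = w.get then (List.ofFn (z ∘ h)).prod else 0)
        = ∑ σ : Equiv.Perm (Fin w0.length), if List.ofFn (i ∘ σ) = w then
          c w • (List.ofFn (z ∘ σ)).prod else 0 := by
      intro w hw
      rw [surj_sum i z w.get (hmax w hw), List.ofFn_get, Finset.smul_sum]
      refine Finset.sum_congr rfl fun σ _ => ?_
      split_ifs <;> simp
    rw [Finset.sum_congr rfl h11, Finset.sum_comm]
    refine Finset.sum_congr rfl fun σ _ => ?_
    rw [Finset.sum_ite_eq]
    split_ifs with hm
    · rfl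
    · rw [hc, not_not] at hm
      rw [hm, zero_smul]
  have h12 := congrArg (fun r => (c w0)⁻¹ • r) h10
  simp only [Finset.smul_sum, smul_smul, smul_zero] at h12
  exact h12

lemma exists_mli {F R : Type} [Field F] [Ring R] [Algebra F R]
    (hPI : ∃ f : FreeAlgebra F ℕ, f ≠ 0 ∧ ∀ a : ℕ → R, (FreeAlgebra.lift F a) f = 0) :
    ∃ (d : ℕ) (α : Equiv.Perm (Fin d) → F), MLI F R d α ∧ α 1 = 1 := by
  obtain ⟨f, hf, hid⟩ := hPI
  let g := (FreeAlgebra.equivMonoidAlgebraFreeMonoid (R := F) (X := ℕ)) f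
  have hg : g ≠ 0 := by
    simpa [g] using hf
  have hlift : ∀ a : ℕ → R, FreeAlgebra.lift F a f
      = MonoidAlgebra.lift F R (FreeMonoid ℕ) (FreeMonoid.lift a) g := by
    intro a
    have : FreeAlgebra.lift F a = (MonoidAlgebra.lift F R (FreeMonoid ℕ) (FreeMonoid.lift a)).comp
        (FreeAlgebra.equivMonoidAlgebraFreeMonoid (R := F) (X := ℕ)).toAlgHom := by
      apply FreeAlgebra.hom_ext
      funext x
      simp [FreeAlgebra.equivMonoidAlgebraFreeMonoid]
    rw [this]
    rfl
  refine multilinearize (R := R) g.coeff.support (fun w => g.coeff w) (fun w => by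
    exact Finsupp.mem_support_iff) ?_ ?_
  · refine Finsupp.support_nonempty_iff.mpr ?_
    intro h
    apply hg
    exact MonoidAlgebra.coeff_injective h
  · intro a
    have := hid a
    rw [hlift, MonoidAlgebra.lift_apply] at this
    refine Eq.trans (Finset.sum_congr rfl fun w _ => ?_) this
    exact congrArg (fun r => g.coeff w • r) (FreeMonoid.lift_apply a w).symm

end Multilinearize

end RBK

/-- **Razmyslov–Braun–Kemer theorem.** Let `F` be a field of arbitrary characteristic and
let `R` be a finitely generated `F`-algebra satisfying a nonzero polynomial identity. Then
the nil radical of `R` — the sum `N` (i.e. supremum) of all nil two-sided ideals of `R` —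
is nilpotent: there is `s ≥ 1` such that every product of `s` elements of `N` vanishes
(`N ^ s = 0`). -/
theorem razmyslov_braun_kemer (F : Type) [Field F]
    (R : Type) [Ring R] [Algebra F R] (hfg : Algebra.FiniteType F R)
    (hPI : ∃ f : FreeAlgebra F ℕ, f ≠ 0 ∧ ∀ a : ℕ → R, (FreeAlgebra.lift F a) f = 0) :
    ∃ s : ℕ, 1 ≤ s ∧ ∀ f : Fin s → R,
      (∀ i, f i ∈ sSup {I : TwoSidedIdeal R | ∀ y ∈ I, IsNilpotent y}) →
      (List.ofFn f).prod = 0 := by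
  classical
  obtain ⟨d, α, h, h1⟩ := RBK.exists_mli hPI
  rcases Nat.eq_zero_or_pos d with rfl | hd
  · have h0 := h (fun i => i.elim0)
    have h2 : (1 : R) = 0 := by
      rw [Fintype.sum_unique] at h0
      have h3 : (default : Equiv.Perm (Fin 0)) = 1 := Subsingleton.elim _ _
      rw [h3, h1, one_smul] at h0
      simpa using h0
    refine ⟨1, le_refl _, fun f _ => ?_⟩
    rw [← mul_one (List.ofFn f).prod, h2, mul_zero]
  · obtain ⟨s, hs⟩ := RBK.rbk_of_mli hfg d hd α h h1 _ RBK.nil_sSup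
    refine ⟨s + 1, by omega, fun f hf => ?_⟩
    rw [List.ofFn_succ, List.prod_cons, hs _ (by simp), mul_zero]
    intro x hx
    obtain ⟨i, rfl⟩ := (List.mem_ofFn' _ _).mp hx
    exact hf _
end

section
/- Let R be an algebra over a field F satisfying a proper multilinear polynomial identity of degree d, i.e. an identity of the form Σ_{σ ∈ S_d} a_σ x_{σ(1)} x_{σ(2)} ⋯ x_{σ(d)} with coefficients a_σ ∈ F and a_{id} = 1. If T ⊆ R is a nil subring (a subring, not necessarily unital, all of whose elements are nilpotent), then T^{⌊d/2⌋} ⊆ N(R), where N(R) denotes the sum of all nilpotent two-sided ideals of R. (Levitzki–Amitsur theorem.) -/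
theorem lt_append_aux {α : Type*} [LinearOrder α] : ∀ (x y s t : List α), x.length = y.length → x < y →
    x ++ s < y ++ t
  | [], [], _, _, _, h => by simp at h
  | [], _ :: _, _, _, h, _ => by simp at h
  | _ :: _, [], _, _, h, _ => by simp at h
  | a :: x, b :: y, s, t, hl, h => by
    rw [List.cons_lt_cons_iff] at h
    rw [List.cons_append, List.cons_append, List.cons_lt_cons_iff]
    rcases h with h | ⟨h, h'⟩
    · exact Or.inl h
    · exact Or.inr ⟨h, lt_append_aux x y s t (by simpa using hl) h'⟩

theorem lt_prepend_aux {α : Type*} [LinearOrder α] (x s t : List α) (h : s < t) :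
    x ++ s < x ++ t := by
  induction x with
  | nil => simpa
  | cons a x ih =>
    rw [List.cons_append, List.cons_append, List.cons_lt_cons_iff]
    exact Or.inr ⟨rfl, ih⟩

theorem flatten_lt_aux {α : Type*} [LinearOrder α] (n : ℕ) : ∀ (bs cs : List (List α)),
    (∀ b ∈ bs, n ≤ b.length) →
    bs.Pairwise (fun b c => c.take n < b.take n) → cs.Perm bs → cs ≠ bs → ∀ Y : List α,
    cs.flatten ++ Y < bs.flatten ++ Y
  | [], cs, _, _, hp, hne, _ => by
    exact absurd hp.eq_nil hne
  | b :: t, [], _, _, hp, _, _ => by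
    simp at hp
  | b :: t, c :: t', hn, hpw, hp, hne, Y => by
    rw [List.pairwise_cons] at hpw
    by_cases hcb : c = b
    · subst hcb
      have hp' := (List.perm_cons c).1 hp
      have := flatten_lt_aux n t t' (fun x hx => hn x (List.mem_cons_of_mem _ hx)) hpw.2 hp'
        (fun h => hne (by rw [h])) Y
      simp only [List.flatten_cons, List.append_assoc]
      exact lt_prepend_aux _ _ _ this
    · have hc : c ∈ b :: t := hp.subset (List.mem_cons_self)
      have hct : c ∈ t := by
        rcases List.mem_cons.1 hc with h | h
        · exact absurd h hcb
        · exact h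
      have hlt := hpw.1 c hct
      have h1 : n ≤ b.length := hn b List.mem_cons_self
      have h2 : n ≤ c.length := hn c hc
      have := lt_append_aux (c.take n) (b.take n) (c.drop n ++ (t'.flatten ++ Y))
        (b.drop n ++ (t.flatten ++ Y)) (by simp; omega) hlt
      rw [← List.append_assoc (c.take n), ← List.append_assoc (b.take n), List.take_append_drop,
        List.take_append_drop] at this
      simpa only [List.flatten_cons, List.append_assoc] using this

theorem split_aux {α : Type*} (w : List α) (p : ℕ → ℕ) (hp : Monotone p) (k : ℕ) :
    w.drop (p 0) = (List.ofFn fun i : Fin k => (w.drop (p i)).take (p (i + 1) - p i)).flatten ++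
      w.drop (p k) := by
  induction k with
  | zero => simp
  | succ k ih =>
    rw [ih, List.ofFn_succ']
    simp only [List.concat_eq_append, List.flatten_append, List.flatten_cons, List.flatten_nil,
      List.append_nil, List.append_assoc, Fin.val_castSucc, Fin.val_last]
    congr 1
    have h := hp (Nat.le_succ k)
    conv_lhs => rw [← List.take_append_drop (p (k+1) - p k) (w.drop (p k))]
    rw [List.drop_drop, Nat.add_sub_cancel' h]

theorem power_aux {α R : Type*} [Ring R] (f : α → R) (z : List α) (c n : ℕ)
    (h : z.take n = (z.drop c).take n) (m : ℕ) (hm : c * m ≤ n) :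
    ((z.take (c * m)).map f).prod = ((z.take c).map f).prod ^ m := by
  induction m with
  | zero => simp
  | succ m ih =>
    have h1 : c * m ≤ n := le_trans (Nat.mul_le_mul_left _ (Nat.le_succ m)) hm
    have h2 : z.take (c * (m + 1)) = z.take c ++ z.take (c * m) := by
      rw [Nat.mul_succ, Nat.add_comm, List.take_add]
      congr 1
      have := congrArg (List.take (c * m)) h
      rw [List.take_take, List.take_take, min_eq_left h1] at this
      exact this.symm
    rw [h2, List.map_append, List.prod_append, ih h1, pow_succ']

theorem shirshov_aux {F : Type*} [Field F] {R : Type*} [Ring R] [Algebra F R]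
    (d : ℕ) (a : Equiv.Perm (Fin d) → F) (ha : a 1 = 1)
    (hid : ∀ x : Fin d → R,
      ∑ σ : Equiv.Perm (Fin d), a σ • (List.ofFn fun i : Fin d => x (σ i)).prod = 0)
    {α : Type*} [LinearOrder α] [Finite α] (f : α → R)
    (hnil : ∀ l : List α, l ≠ [] → IsNilpotent (l.map f).prod) :
    ∃ K, ∀ w : List α, w.length = K → (w.map f).prod = 0 := by
  classical
  have hm : ∃ m : ℕ, ∀ l : List α, l.length ≤ d → l ≠ [] → (l.map f).prod ^ m = 0 := by
    have : ∀ l : List α, ∃ k : ℕ, l ≠ [] → (l.map f).prod ^ k = 0 := by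
      intro l
      by_cases hl : l = []
      · exact ⟨0, fun h => absurd hl h⟩
      · obtain ⟨k, hk⟩ := hnil l hl
        exact ⟨k, fun _ => hk⟩
    choose k hk using this
    refine ⟨(List.finite_length_le α d).toFinset.sup k, fun l hl hne => ?_⟩
    exact pow_eq_zero_of_le (Finset.le_sup (f := k) (by simpa using hl)) (hk l hne)
  obtain ⟨m, hm⟩ := hm
  set n := d * m with hn
  set L := n + d with hL
  set W := (List.finite_length_eq α L).toFinset with hW
  set N := W.card * d + 1 with hN
  refine ⟨L * N, ?_⟩
  by_contra hcon
  push Not at hcon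
  have hfin : {w : List α | w.length = L * N ∧ (w.map f).prod ≠ 0}.Finite :=
    (List.finite_length_eq α (L * N)).subset fun w hw => hw.1
  obtain ⟨w, ⟨hwl, hw0⟩, hmin⟩ := hfin.exists_minimal (by
    obtain ⟨w, h1, h2⟩ := hcon
    exact ⟨w, h1, h2⟩)
  apply hw0
  have hsmall : ∀ w' : List α, w'.length = L * N → w' < w → (w'.map f).prod = 0 := by
    intro w' h1 h2
    by_contra h3
    exact absurd (hmin ⟨h1, h3⟩ h2.le) (not_le.2 h2)
  have hblk : ∀ i : Fin N, ((w.drop (L * i)).take L).length = L := by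
    intro i
    have : L * (i + 1) ≤ L * N := Nat.mul_le_mul_left _ i.2
    rw [Nat.mul_succ] at this
    simp; omega
  obtain ⟨v, hv, hcard⟩ := Finset.exists_lt_card_fiber_of_mul_lt_card_of_maps_to
    (s := (Finset.univ : Finset (Fin N))) (t := W) (n := d)
    (f := fun i : Fin N => (w.drop (L * i)).take L) (by
      intro i _
      simp only [hW, Set.Finite.mem_toFinset, Set.mem_ofPred_eq]
      exact hblk i) (by simp [hN])
  have hvl : v.length = L := by simpa [hW] using hv
  let e := Finset.orderEmbOfCardLe _ hcard.le
  have he : ∀ j, (w.drop (L * (e j))).take L = v := by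
    intro j
    have := Finset.orderEmbOfCardLe_mem _ hcard.le j
    simpa using this
  by_cases hinj : Function.Injective (fun i : Fin d => (v.drop i).take n)
  · -- decomposable case
    set g : Fin d → List α := fun i : Fin d => (v.drop i).take n with hg
    let π := Tuple.sort (fun i => OrderDual.toDual (g i))
    have hπ : StrictMono ((fun i => OrderDual.toDual (g i)) ∘ π) :=
      (Tuple.monotone_sort _).strictMono_of_injective
        ((OrderDual.toDual.injective.comp hinj).comp π.injective)
    let p : ℕ → ℕ := fun j => if h : j < d then L * (e ⟨j, h⟩) + π ⟨j, h⟩ else L * N + (j - d)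
    have hpd : ∀ j : Fin d, p j = L * (e j) + π j := fun j => by simp [p]
    have hpn : ∀ j : Fin d, p j + n ≤ p (j + 1) := by
      intro j
      have h1 : ((π j : Fin d) : ℕ) < d := (π j).2
      have h2 : L * (e j) + L ≤ p (j + 1) := by
        by_cases h : (j : ℕ) + 1 < d
        · have : p (j + 1) = L * (e ⟨j + 1, h⟩) + π ⟨j + 1, h⟩ := by simp [p, h]
          rw [this]
          have h3 : (e j) < e ⟨j + 1, h⟩ := e.strictMono (by simp [Fin.lt_def])
          have h4 := Nat.mul_le_mul_left L (Nat.succ_le_of_lt (Fin.lt_def.1 h3))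
          rw [Nat.mul_succ] at h4
          omega
        · have : p (j + 1) = L * N + (j + 1 - d) := by simp [p, h]
          rw [this]
          have h4 := Nat.mul_le_mul_left L (Nat.succ_le_of_lt (e j).2)
          rw [Nat.mul_succ] at h4
          omega
      rw [hpd]
      omega
    have hpmono : Monotone p := by
      apply monotone_nat_of_le_succ
      intro j
      by_cases h : j < d
      · have := hpn ⟨j, h⟩
        simp only at this
        omega
      · have h' : ¬ (j + 1 < d) := by omega
        simp only [p, h, h', dite_false]
        omega
    have hple : ∀ j ≤ d, p j ≤ L * N := by
      intro j hj
      have : p d = L * N := by simp [p]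
      exact this ▸ hpmono hj
    let b : Fin d → List α := fun i => (w.drop (p i)).take (p (i + 1) - p i)
    have hsplit := split_aux w p hpmono d
    have hbl : ∀ i, n ≤ (b i).length := by
      intro i
      have h1 := hpn i
      have h2 := hple (i + 1) i.2
      simp only [b, List.length_take, List.length_drop, hwl]
      omega
    have hbt : ∀ i, (b i).take n = g (π i) := by
      intro i
      have h1 := hpn i
      simp only [b, hg]
      rw [List.take_take, min_eq_left (by omega), ← he i, List.drop_take, List.take_take,
        min_eq_left (by have := (π i).2; omega), List.drop_drop, hpd]
    have hdec : ∀ i j, i < j → (b j).take n < (b i).take n := by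
      intro i j hij
      rw [hbt, hbt]
      exact hπ hij
    have hbinj : Function.Injective b := by
      intro i j hij
      by_contra hne
      rcases lt_or_gt_of_ne hne with h | h
      · have := hdec _ _ h
        rw [hij] at this
        exact lt_irrefl _ this
      · have := hdec _ _ h
        rw [hij] at this
        exact lt_irrefl _ this
    have hlt : ∀ σ : Equiv.Perm (Fin d), σ ≠ 1 →
        w.take (p 0) ++ ((List.ofFn (b ∘ σ)).flatten ++ w.drop (p d)) < w := by
      intro σ hσ
      have h := flatten_lt_aux n (List.ofFn b) (List.ofFn (b ∘ σ)) (by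
          intro x hx
          obtain ⟨i, rfl⟩ := (List.mem_ofFn' _ _).1 hx
          exact hbl i) (by
          rw [List.pairwise_ofFn]
          exact fun i j hij => hdec i j hij) (Equiv.Perm.ofFn_comp_perm σ b) (by
          intro h
          apply hσ
          ext i
          have := congrFun (List.ofFn_injective h) i
          have := hbinj this
          simp [this]) (w.drop (p d))
      have h2 := lt_prepend_aux (w.take (p 0)) _ _ h
      have h3 : w.take (p 0) ++ ((List.ofFn b).flatten ++ w.drop (p d)) = w := by
        rw [← hsplit, List.take_append_drop]
      rwa [h3] at h2
    have hzero : ∀ σ : Equiv.Perm (Fin d), σ ≠ 1 →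
        ((w.take (p 0)).map f).prod * (List.ofFn fun i => ((b (σ i)).map f).prod).prod *
          ((w.drop (p d)).map f).prod = 0 := by
      intro σ hσ
      have := hsmall _ ?_ (hlt σ hσ)
      · rw [List.map_append, List.prod_append, List.map_append, List.prod_append,
          ← mul_assoc, List.map_flatten, List.prod_flatten, List.map_ofFn, List.map_ofFn] at this
        exact this
      · have hh : w.length = (w.take (p 0) ++ ((List.ofFn b).flatten ++ w.drop (p d))).length := by
          rw [← hsplit, List.take_append_drop]
        rw [← hwl, hh, List.length_append, List.length_append, List.length_append,
          List.length_append, (Equiv.Perm.ofFn_comp_perm σ b).flatten.length_eq]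
    have hmain := congrArg (fun y => ((w.take (p 0)).map f).prod * y * ((w.drop (p d)).map f).prod)
      (hid fun i => ((b i).map f).prod)
    simp only [Finset.mul_sum, Finset.sum_mul, mul_smul_comm, smul_mul_assoc, mul_zero,
      zero_mul] at hmain
    rw [Finset.sum_eq_single 1 (fun σ _ hσ => by rw [hzero σ hσ, smul_zero]) (by simp), ha,
      one_smul] at hmain
    have hw : w = w.take (p 0) ++ ((List.ofFn b).flatten ++ w.drop (p d)) := by
      rw [← hsplit, List.take_append_drop]
    rw [hw, List.map_append, List.prod_append, List.map_append, List.prod_append,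
          ← mul_assoc, List.map_flatten, List.prod_flatten, List.map_ofFn, List.map_ofFn]
    exact hmain
  · -- power case
    have hex : ∃ i j : Fin d, i < j ∧ (v.drop i).take n = (v.drop j).take n := by
      simp only [Function.Injective, not_forall] at hinj
      obtain ⟨i, j, hij, hne⟩ := hinj
      rcases lt_or_gt_of_ne hne with h | h
      · exact ⟨i, j, h, hij⟩
      · exact ⟨j, i, h, hij.symm⟩
    obtain ⟨i, j, hij, hv2⟩ := hex
    obtain ⟨c, hc⟩ := Nat.exists_eq_add_of_lt (Fin.lt_def.1 hij)
    have hj := j.2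
    have hd : 0 < d := by omega
    have hpow := power_aux f (v.drop i) (c + 1) n (by rw [hv2, List.drop_drop, hc, add_assoc]) m
      (Nat.mul_le_mul_right _ (by omega))
    rw [hm _ (by simp; omega) (by
      intro h
      have := congrArg List.length h
      simp at this
      omega)] at hpow
    have hv0 : (v.map f).prod = 0 := by
      rw [← List.take_append_drop i v, ← List.take_append_drop ((c + 1) * m) (v.drop i),
        List.map_append, List.map_append, List.prod_append, List.prod_append, hpow]
      simp
    have h0 := he ⟨0, hd⟩
    rw [← List.take_append_drop (L * (e ⟨0, hd⟩)) w, ← List.take_append_drop L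
      (w.drop (L * (e ⟨0, hd⟩))), h0, List.map_append, List.map_append, List.prod_append,
      List.prod_append, hv0]
    simp

/-- The set of all `r * w * r'` with `w` the value of a word of length `q`. -/
def wordSet {α R : Type*} [Ring R] (f : α → R) (q : ℕ) : Set R :=
  {y | ∃ (r r' : R) (l : List α), l.length = q ∧ y = r * (l.map f).prod * r'}

theorem span_mul_left {F : Type*} [Field F] {R : Type*} [Ring R] [Algebra F R]
    {α : Type*} (f : α → R) (q : ℕ) (s x : R) (hx : x ∈ Submodule.span F (wordSet f q)) :
    s * x ∈ Submodule.span F (wordSet f q) := by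
  induction hx using Submodule.span_induction with
  | mem x h =>
    obtain ⟨r, r', l, hl, rfl⟩ := h
    exact Submodule.subset_span ⟨s * r, r', l, hl, by simp only [mul_assoc]⟩
  | zero => simp
  | add x y _ _ h1 h2 => rw [mul_add]; exact Submodule.add_mem _ h1 h2
  | smul c x _ h => rw [mul_smul_comm]; exact Submodule.smul_mem _ _ h

theorem span_mul_right {F : Type*} [Field F] {R : Type*} [Ring R] [Algebra F R]
    {α : Type*} (f : α → R) (q : ℕ) (s x : R) (hx : x ∈ Submodule.span F (wordSet f q)) :
    x * s ∈ Submodule.span F (wordSet f q) := by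
  induction hx using Submodule.span_induction with
  | mem x h =>
    obtain ⟨r, r', l, hl, rfl⟩ := h
    exact Submodule.subset_span ⟨r, r' * s, l, hl, by simp only [mul_assoc]⟩
  | zero => simp
  | add x y _ _ h1 h2 => rw [add_mul]; exact Submodule.add_mem _ h1 h2
  | smul c x _ h => rw [smul_mul_assoc]; exact Submodule.smul_mem _ _ h

theorem long_word_mem {F : Type*} [Field F] {R : Type*} [Ring R] [Algebra F R]
    {α : Type*} (f : α → R) (q : ℕ) (l : List α) (hl : q ≤ l.length) :
    (l.map f).prod ∈ Submodule.span F (wordSet f q) := by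
  refine Submodule.subset_span ⟨1, ((l.drop q).map f).prod, l.take q, by simp [hl], ?_⟩
  rw [one_mul, ← List.prod_append, ← List.map_append, List.take_append_drop]

theorem telescope_aux {α R : Type*} [Ring R] (f : α → R) (r r' : ℕ → R) (l : ℕ → List α) (n : ℕ) :
    (List.ofFn fun i : Fin (n + 1) => r i * ((l i).map f).prod * r' i).prod =
      r 0 * (List.ofFn fun i : Fin n => (((l i).drop (i / 2)).map f).prod * (r' i * r (i + 1)) *
        (((l (i + 1)).take ((i + 1) / 2)).map f).prod).prod *
        (((l n).drop (n / 2)).map f).prod * r' n := by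
  induction n with
  | zero => simp
  | succ n ih =>
    rw [List.ofFn_succ', List.concat_eq_append, List.prod_append]
    simp only [Fin.val_castSucc, Fin.val_last]
    rw [ih]
    conv_rhs => rw [List.ofFn_succ', List.concat_eq_append, List.prod_append]
    simp only [Fin.val_castSucc, Fin.val_last, List.prod_cons, List.prod_nil, mul_one]
    have : ((l (n + 1)).map f).prod = (((l (n + 1)).take ((n + 1) / 2)).map f).prod *
        (((l (n + 1)).drop ((n + 1) / 2)).map f).prod := by
      rw [← List.prod_append, ← List.map_append, List.take_append_drop]
    rw [this]
    simp only [mul_assoc]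

theorem ofFn_prod_split {R : Type*} [Ring R] {d : ℕ} (y : Fin d → R) (p : ℕ) (hp : p + 1 < d) :
    ∃ A B : R, (List.ofFn y).prod = A * (y ⟨p, by omega⟩ * y ⟨p + 1, hp⟩) * B := by
  refine ⟨((List.ofFn y).take p).prod, ((List.ofFn y).drop (p + 2)).prod, ?_⟩
  conv_lhs => rw [← List.take_append_drop p (List.ofFn y)]
  rw [List.drop_eq_getElem_cons (by simp; omega), List.drop_eq_getElem_cons (by simp; omega)]
  simp [mul_assoc]

theorem exists_descent {d : ℕ} (σ : Equiv.Perm (Fin d)) (hσ : σ ≠ 1) :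
    ∃ (p : ℕ) (hp : p + 1 < d), σ ⟨p + 1, hp⟩ < σ ⟨p, by omega⟩ := by
  by_contra hcon
  push Not at hcon
  apply hσ
  have hmono : StrictMono σ := by
    cases d with
    | zero => intro i; exact i.elim0
    | succ n =>
      rw [Fin.strictMono_iff_lt_succ]
      intro i
      refine lt_of_le_of_ne (hcon i (by omega)) ?_
      intro h
      have := σ.injective h
      simp [Fin.ext_iff] at this
  have h := Subsingleton.elim (hmono.orderIsoOfSurjective σ σ.surjective) (OrderIso.refl (Fin d))
  ext i
  have := congrArg (fun e : Fin d ≃o Fin d => ((e i : Fin d) : ℕ)) h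
  simpa using this

theorem step_aux {F : Type*} [Field F] {R : Type*} [Ring R] [Algebra F R]
    (d : ℕ) (a : Equiv.Perm (Fin d) → F) (ha : a 1 = 1)
    (hid : ∀ x : Fin d → R,
      ∑ σ : Equiv.Perm (Fin d), a σ • (List.ofFn fun i : Fin d => x (σ i)).prod = 0)
    {α : Type*} (f : α → R) (q : ℕ) (hq : d / 2 ≤ q) :
    (Submodule.span F (wordSet f q)) ^ (d + 1) ≤ Submodule.span F (wordSet f (q + 1)) := by
  rw [Submodule.span_pow, Submodule.span_le]
  intro y hy
  obtain ⟨g, rfl⟩ := Set.mem_pow.1 hy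
  have hg : ∀ i : ℕ, ∃ (r r' : R) (l : List α), ∀ h : i < d + 1,
      l.length = q ∧ (g ⟨i, h⟩ : R) = r * (l.map f).prod * r' := by
    intro i
    by_cases h : i < d + 1
    · obtain ⟨r, r', l, h1, h2⟩ := (g ⟨i, h⟩).2
      exact ⟨r, r', l, fun _ => ⟨h1, h2⟩⟩
    · exact ⟨0, 0, [], fun h' => absurd h' h⟩
  choose r r' l hl using hg
  have heq : (List.ofFn fun i => (g i : R)) =
      List.ofFn fun i : Fin (d + 1) => r i * ((l i).map f).prod * r' i := by
    congr 1
    ext i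
    exact (hl i i.2).2
  rw [heq, telescope_aux]
  apply span_mul_right
  apply span_mul_right
  apply span_mul_left
  set x : Fin d → R := fun i => (((l i).drop (i / 2)).map f).prod * (r' i * r (i + 1)) *
        (((l (i + 1)).take ((i + 1) / 2)).map f).prod with hx
  have hmem : ∀ σ : Equiv.Perm (Fin d), σ ≠ 1 →
      (List.ofFn fun i => x (σ i)).prod ∈ Submodule.span F (wordSet f (q + 1)) := by
    intro σ hσ
    obtain ⟨p, hp, hlt⟩ := exists_descent σ hσ
    obtain ⟨A, B, hAB⟩ := ofFn_prod_split (fun i => x (σ i)) p hp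
    rw [hAB]
    apply span_mul_right
    apply span_mul_left
    simp only [hx]
    generalize σ ⟨p + 1, hp⟩ = j at hlt
    generalize σ ⟨p, by omega⟩ = i at hlt
    have hi := i.2
    have hj := j.2
    have hlt' := Fin.lt_def.1 hlt
    have h1 := (hl (i + 1) (by omega)).1
    have h2 := (hl j (by omega)).1
    have hw := long_word_mem (F := F) f (q + 1)
      ((l (i + 1)).take ((i + 1) / 2) ++ (l j).drop (j / 2)) (by
        simp only [List.length_append, List.length_take, List.length_drop, h1, h2]
        omega)
    rw [List.map_append, List.prod_append] at hw
    have := span_mul_right f (q + 1) ((r' j * r (j + 1)) *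
        (((l (j + 1)).take ((j + 1) / 2)).map f).prod) _ (span_mul_left f (q + 1)
        ((((l i).drop (i / 2)).map f).prod * (r' i * r (i + 1))) _ hw)
    simpa only [mul_assoc] using this
  have hmain := hid x
  rw [← Finset.add_sum_erase _ _ (Finset.mem_univ 1), ha, one_smul] at hmain
  have h1 := eq_neg_of_add_eq_zero_left hmain
  have h2 : (List.ofFn fun i => x ((1 : Equiv.Perm (Fin d)) i)).prod ∈
      Submodule.span F (wordSet f (q + 1)) := by
    rw [h1]
    refine Submodule.neg_mem _ (Submodule.sum_mem _ fun σ hσ => Submodule.smul_mem _ _ ?_)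
    exact hmem σ (Finset.ne_of_mem_erase hσ)
  exact h2

theorem nilp_aux {F : Type*} [Field F] {R : Type*} [Ring R] [Algebra F R]
    (d : ℕ) (a : Equiv.Perm (Fin d) → F) (ha : a 1 = 1)
    (hid : ∀ x : Fin d → R,
      ∑ σ : Equiv.Perm (Fin d), a σ • (List.ofFn fun i : Fin d => x (σ i)).prod = 0)
    {α : Type*} (f : α → R) (k : ℕ) :
    ∃ s, 1 ≤ s ∧
    (Submodule.span F (wordSet f (d / 2))) ^ s ≤ Submodule.span F (wordSet f (d / 2 + k)) := by
  induction k with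
  | zero => exact ⟨1, le_rfl, by simp⟩
  | succ k ih =>
    obtain ⟨s, hs, h⟩ := ih
    refine ⟨s * (d + 1), Nat.mul_pos hs (Nat.succ_pos d), ?_⟩
    rw [pow_mul]
    exact (pow_le_pow_left' h (d + 1)).trans (step_aux d a ha hid f _ (by omega))

theorem ofFn_prod_mem_pow {F : Type*} [Field F] {R : Type*} [Ring R] [Algebra F R]
    (M : Submodule F R) (s : ℕ) (g : Fin s → R) (hg : ∀ i, g i ∈ M) :
    (List.ofFn g).prod ∈ M ^ s := by
  induction s with
  | zero => simp [Submodule.one_le.1 le_rfl]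
  | succ s ih =>
    rw [List.ofFn_succ, List.prod_cons, pow_succ']
    exact Submodule.mul_mem_mul (hg 0) (ih _ fun i => hg _)

/-- **Levitzki–Amitsur theorem.** Let `R` be an `F`-algebra satisfying a proper multilinear
polynomial identity of degree `d`, i.e. `∑ σ ∈ S_d, a σ • x_{σ(1)} ⋯ x_{σ(d)} = 0` for all
substitutions, where the coefficient of the identity permutation is `1`. If `T ⊆ R` is a
nil subring (not necessarily unital), then every product of `⌊d/2⌋` elements of `T` lies in
`N(R)`, the sum (supremum) of all nilpotent two-sided ideals of `R`; since `N(R)` is closed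
under addition this says `T ^ ⌊d/2⌋ ⊆ N(R)`. -/
theorem levitzki_amitsur (F : Type*) [Field F] (R : Type*) [Ring R] [Algebra F R]
    (d : ℕ) (a : Equiv.Perm (Fin d) → F) (ha : a 1 = 1)
    (hid : ∀ x : Fin d → R,
      ∑ σ : Equiv.Perm (Fin d), a σ • (List.ofFn fun i : Fin d => x (σ i)).prod = 0)
    (T : NonUnitalSubring R) (hT : ∀ t ∈ T, IsNilpotent t) :
    ∀ f : Fin (d / 2) → R, (∀ i, f i ∈ T) →
      (List.ofFn f).prod ∈
        sSup {I : TwoSidedIdeal R |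
          ∃ s : ℕ, 1 ≤ s ∧ ∀ g : Fin s → R, (∀ i, g i ∈ I) → (List.ofFn g).prod = 0} := by
  intro f hf
  have hnil : ∀ l : List (Fin (d / 2)), l ≠ [] → IsNilpotent (l.map f).prod := by
    intro l hl
    apply hT
    induction l with
    | nil => exact absurd rfl hl
    | cons b t ih =>
      by_cases ht : t = []
      · subst ht
        simpa using hf b
      · rw [List.map_cons, List.prod_cons]
        exact T.mul_mem (hf b) (ih ht)
  obtain ⟨K, hK⟩ := shirshov_aux d a ha hid f hnil
  obtain ⟨s, hs, hle⟩ := nilp_aux d a ha hid f K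
  have hbot : Submodule.span F (wordSet f (d / 2 + K)) = ⊥ := by
    rw [Submodule.span_eq_bot]
    rintro y ⟨r, r', l, hl, rfl⟩
    have : (l.map f).prod = 0 := by
      rw [← List.take_append_drop K l, List.map_append, List.prod_append,
        hK (l.take K) (by simp; omega), zero_mul]
    rw [this, mul_zero, zero_mul]
  rw [hbot] at hle
  let I : TwoSidedIdeal R := TwoSidedIdeal.mk' (Submodule.span F (wordSet f (d / 2)) : Set R)
    (Submodule.zero_mem _) (fun h1 h2 => Submodule.add_mem _ h1 h2)
    (fun h => Submodule.neg_mem _ h) (fun h => span_mul_left f _ _ _ h)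
    (fun h => span_mul_right f _ _ _ h)
  have hI : ∀ y, y ∈ I ↔ y ∈ Submodule.span F (wordSet f (d / 2)) := by
    intro y
    exact TwoSidedIdeal.mem_mk' _ _ _ _ _ _ _
  have hmem : I ∈ {I : TwoSidedIdeal R |
      ∃ s : ℕ, 1 ≤ s ∧ ∀ g : Fin s → R, (∀ i, g i ∈ I) → (List.ofFn g).prod = 0} := by
    refine ⟨s, hs, fun g hg => ?_⟩
    have := hle (ofFn_prod_mem_pow (Submodule.span F (wordSet f (d / 2))) s g
      fun i => (hI _).1 (hg i))
    simpa using this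
  apply le_sSup hmem
  rw [hI]
  have := long_word_mem (F := F) f (d / 2) (List.finRange (d / 2)) (by simp)
  rwa [← List.ofFn_eq_map] at this
end
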